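/- Let c be a positive integer and suppose that c = L_n − 2^x·3^y = L_{n₁} − 2^{x₁}·3^{y₁} = L_{n₂} − 2^{x₂}·3^{y₂} for nonnegative integers with n > n₁ > n₂ and n > 60000. Then n < 3.2·10^33, x < 2.4·10^33, and y < 1.5·10^33. -/

import Mathlib

/-- The Lucas sequence: L 0 = 2, L 1 = 1, L (n+2) = L (n+1) + L n. -/
def lucas : ℕ → ℤ
  | 0 => 2
  | 1 => 1
  | n + 2 => lucas (n + 1) + lucas n

namespace MvPolynomial

theorem two_mul_finrank_restrictTotalDegree (F : Type*) [Field F] (d : ℕ) :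
    2 * Module.finrank F (restrictTotalDegree (Fin 2) F d) = (d + 1) * (d + 2) := by
  have e : (Σ k : Fin (d + 1), Fin ((k : ℕ) + 1)) ≃
      {m : Fin 2 →₀ ℕ | (m.sum fun _ e => e) ≤ d} := by
    refine Equiv.ofBijective (fun p => ⟨Finsupp.equivFunOnFinite.symm
      ![(p.2 : ℕ), (p.1 : ℕ) - p.2], ?_⟩) ⟨?_, ?_⟩
    · have h1 := p.1.2
      have h2 := p.2.2
      simp only [Set.mem_ofPred_eq]
      rw [Finsupp.sum_fintype _ _ (by simp)]
      simp [Fin.sum_univ_two]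
      omega
    · rintro ⟨⟨k, hk⟩, ⟨i, hi⟩⟩ ⟨⟨k', hk'⟩, ⟨i', hi'⟩⟩ h
      simp only [Subtype.mk.injEq, EmbeddingLike.apply_eq_iff_eq] at h
      have h0 := congrFun h 0
      have h1 := congrFun h 1
      simp at h0 h1 hi hi'
      obtain rfl : i = i' := h0
      obtain rfl : k = k' := by omega
      rfl
    · rintro ⟨m, hm⟩
      simp only [Set.mem_ofPred_eq] at hm
      rw [Finsupp.sum_fintype _ _ (by simp)] at hm
      simp [Fin.sum_univ_two] at hm
      refine ⟨⟨⟨m 0 + m 1, by omega⟩, ⟨m 0, by simp⟩⟩, ?_⟩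
      ext i
      fin_cases i <;> simp
  have hc : Module.finrank F (restrictTotalDegree (Fin 2) F d) =
      ∑ k : Fin (d + 1), ((k : ℕ) + 1) := by
    refine (Module.finrank_eq_nat_card_basis (basisRestrictSupport F _)).trans ?_
    rw [← Nat.card_congr e]
    simp
  rw [hc, Fin.sum_univ_eq_sum_range (fun k => k + 1) (d + 1)]
  have := Finset.sum_range_id_mul_two (d + 2)
  rw [Finset.sum_range_succ'] at this
  simp at this
  linarith

theorem exists_totalDegree_le_eval_eq {σ F : Type*} [Field F] (S : Finset (σ → F)) {a : σ → F}
    (ha : a ∉ S) :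
    ∃ p : MvPolynomial σ F, p.totalDegree ≤ S.card ∧ (∀ s ∈ S, eval s p = 0) ∧ eval a p = 1 := by
  classical
  have h : ∀ s : S, ∃ i, s.1 i ≠ a i := fun s => by
    by_contra! h
    exact ha ((_root_.funext h : s.1 = a) ▸ s.2)
  choose i hi using h
  refine ⟨∏ s : S, (X (i s) - C (s.1 (i s))) * C (a (i s) - s.1 (i s))⁻¹, ?_, ?_, ?_⟩
  · refine (totalDegree_finsetProd _ _).trans ?_
    calc _ ≤ ∑ s : S, 1 := Finset.sum_le_sum fun s _ => by
          refine (totalDegree_mul _ _).trans ?_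
          rw [totalDegree_C, add_zero]
          refine (totalDegree_sub _ _).trans ?_
          simp
      _ = _ := by simp
  · intro s hs
    rw [map_prod]
    exact Finset.prod_eq_zero (Finset.mem_univ ⟨s, hs⟩) (by simp)
  · rw [map_prod]
    refine Finset.prod_eq_one fun s _ => ?_
    simp only [map_mul, map_sub, eval_X, eval_C]
    exact mul_inv_cancel₀ (sub_ne_zero.2 (hi s).symm)

theorem exists_totalDegree_le_eval_eq_fun {σ F : Type*} [Field F] (S : Finset (σ → F))
    (v : S → F) : ∃ p : MvPolynomial σ F, p.totalDegree ≤ S.card ∧ ∀ s : S, eval s.1 p = v s := by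
  classical
  have h : ∀ s : S, ∃ p : MvPolynomial σ F, p.totalDegree ≤ S.card ∧
      (∀ t ∈ S.erase s.1, eval t p = 0) ∧ eval s.1 p = 1 := fun s => by
    obtain ⟨p, hp, h⟩ := exists_totalDegree_le_eval_eq (S.erase s.1) (Finset.notMem_erase s.1 S)
    exact ⟨p, hp.trans (Finset.card_le_card (Finset.erase_subset _ _)), h⟩
  choose p hp h0 h1 using h
  refine ⟨∑ s : S, C (v s) * p s, totalDegree_finsetSum_le fun s _ => ?_, fun s => ?_⟩
  · exact (totalDegree_mul _ _).trans (by simpa using hp s)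
  · rw [map_sum, Finset.sum_eq_single s]
    · simp [h1]
    · intro t _ hts
      rw [map_mul, h0 t s.1, mul_zero]
      exact Finset.mem_erase.2 ⟨fun h => hts (Subtype.ext h.symm), s.2⟩
    · simp

set_option maxHeartbeats 1000000 in
/-- **Bézout's bound** for the affine plane. -/
theorem card_le_totalDegree_mul_of_isRelPrime {F : Type*} [Field F] {f g : MvPolynomial (Fin 2) F}
    (hg : g ≠ 0) (hfg : IsRelPrime f g) (S : Finset (Fin 2 → F))
    (hSf : ∀ s ∈ S, eval s f = 0) (hSg : ∀ s ∈ S, eval s g = 0) :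
    S.card ≤ f.totalDegree * g.totalDegree := by
  set a := f.totalDegree
  set b := g.totalDegree
  set e := S.card
  have hmul : ∀ (q : MvPolynomial (Fin 2) F) (m k : ℕ), q.totalDegree + m ≤ k →
      ∀ p ∈ restrictTotalDegree (Fin 2) F m,
        LinearMap.mulLeft F q p ∈ restrictTotalDegree (Fin 2) F k := by
    intro q m k h p hp
    rw [mem_restrictTotalDegree] at hp ⊢
    exact (totalDegree_mul _ _).trans (le_trans (by gcongr) h)
  let ev : restrictTotalDegree (Fin 2) F (e + a + b) →ₗ[F] (S → F) :=
    (LinearMap.pi fun s : S => (aeval s.1 : MvPolynomial (Fin 2) F →ₐ[F] F).toLinearMap) ∘ₗ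
      Submodule.subtype _
  have hev : Function.Surjective ev := fun v => by
    obtain ⟨p, hp, h⟩ := exists_totalDegree_le_eval_eq_fun S v
    exact ⟨⟨p, (mem_restrictTotalDegree _ _ _).2 (by omega)⟩, _root_.funext fun s => h s⟩
  let Φ : restrictTotalDegree (Fin 2) F (e + b) × restrictTotalDegree (Fin 2) F (e + a) →ₗ[F]
      restrictTotalDegree (Fin 2) F (e + a + b) :=
    LinearMap.coprod ((LinearMap.mulLeft F f).restrict (hmul f _ _ (by omega)))
      ((LinearMap.mulLeft F g).restrict (hmul g _ _ (by omega)))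
  let Ψ : restrictTotalDegree (Fin 2) F e →ₗ[F]
      restrictTotalDegree (Fin 2) F (e + b) × restrictTotalDegree (Fin 2) F (e + a) :=
    LinearMap.prod ((LinearMap.mulLeft F g).restrict (hmul g _ _ (by omega)))
      (-(LinearMap.mulLeft F f).restrict (hmul f _ _ (by omega)))
  have h1 : LinearMap.range Φ ≤ LinearMap.ker ev := by
    rintro _ ⟨⟨p, q⟩, rfl⟩
    rw [LinearMap.mem_ker]
    refine _root_.funext fun s => ?_
    simp [ev, Φ, LinearMap.restrict_apply, aeval_eq_eval, hSf s.1 s.2, hSg s.1 s.2]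
  have h2 : LinearMap.ker Φ ≤ LinearMap.range Ψ := by
    rintro ⟨⟨p, hp⟩, ⟨q, hq⟩⟩ h
    have h' : f * p + g * q = 0 := by
      have := congrArg Subtype.val (LinearMap.mem_ker.1 h)
      simpa [Φ, LinearMap.restrict_apply] using this
    have hd : g ∣ p := by
      refine hfg.symm.dvd_of_dvd_mul_left (y := f) (z := p) ?_
      exact ⟨-q, by linear_combination h'⟩
    obtain ⟨r, rfl⟩ := hd
    have hq' : q = -(f * r) := by
      have : g * (f * r + q) = 0 := by linear_combination h'
      rcases mul_eq_zero.1 this with h | h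
      · exact absurd h hg
      · linear_combination h
    have hr : r ∈ restrictTotalDegree (Fin 2) F e := by
      rw [mem_restrictTotalDegree] at hp ⊢
      by_cases hr0 : r = 0
      · simp [hr0]
      rw [totalDegree_mul_of_isDomain hg hr0] at hp
      omega
    refine ⟨⟨r, hr⟩, ?_⟩
    ext1
    · rfl
    · exact Subtype.ext hq'.symm
  have r1 := LinearMap.finrank_range_add_finrank_ker ev
  rw [LinearMap.range_eq_top.2 hev, finrank_top, Module.finrank_fintype_fun_eq_card] at r1
  have r2 := LinearMap.finrank_range_add_finrank_ker Φ
  rw [Module.finrank_prod] at r2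
  have r3 := Submodule.finrank_mono h1
  have r4 := (Submodule.finrank_mono h2).trans (LinearMap.finrank_range_le Ψ)
  have d1 := two_mul_finrank_restrictTotalDegree F (e + a + b)
  have d2 := two_mul_finrank_restrictTotalDegree F (e + b)
  have d3 := two_mul_finrank_restrictTotalDegree F (e + a)
  have d4 := two_mul_finrank_restrictTotalDegree F e
  rw [Fintype.card_coe] at r1
  have key : ∀ D1 D2 D3 D4 r k k' : ℕ, e + k = D1 → r + k' = D2 + D3 → r ≤ k → k' ≤ D4 →
      2 * D1 = (e + a + b + 1) * (e + a + b + 2) → 2 * D2 = (e + b + 1) * (e + b + 2) →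
      2 * D3 = (e + a + 1) * (e + a + 2) → 2 * D4 = (e + 1) * (e + 2) → e ≤ a * b := by
    intros
    nlinarith
  exact key _ _ _ _ _ _ _ r1 r2 r3 r4 d1 d2 d3 d4
section Shift

variable {σ R : Type*} [CommRing R]

/-- Translation of the variables by a vector. -/
noncomputable def shift (γ : σ → R) : MvPolynomial σ R →ₐ[R] MvPolynomial σ R :=
  aeval fun i => X i + C (γ i)

theorem eval_shift (γ x : σ → R) (p : MvPolynomial σ R) :
    eval x (shift γ p) = eval (x + γ) p := by
  have : (eval x).comp (shift γ : MvPolynomial σ R →ₐ[R] MvPolynomial σ R).toRingHom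
      = eval (x + γ) := by
    ext <;> simp [shift]
  exact congrArg (fun f => f p) this

theorem shift_shift (γ δ : σ → R) (p : MvPolynomial σ R) :
    shift γ (shift δ p) = shift (γ + δ) p := by
  have : (shift γ).comp (shift δ) = (shift (γ + δ) : MvPolynomial σ R →ₐ[R] _) := by
    ext; simp [shift, add_assoc]
  exact congrArg (fun f => f p) this

theorem shift_zero (p : MvPolynomial σ R) : shift (0 : σ → R) p = p := by
  have : (shift 0) = AlgHom.id R (MvPolynomial σ R) := by
    ext; simp [shift]
  exact congrArg (fun f => f p) this

/-- Translation of the variables by a vector, as an automorphism. -/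
noncomputable def shiftEquiv (γ : σ → R) : MvPolynomial σ R ≃ₐ[R] MvPolynomial σ R :=
  AlgEquiv.ofAlgHom (shift γ) (shift (-γ))
    (by ext i : 1; simp [shift]) (by ext i : 1; simp [shift])

theorem totalDegree_shift_le [Nontrivial R] (γ : σ → R) (p : MvPolynomial σ R) :
    (shift γ p).totalDegree ≤ p.totalDegree := by
  classical
  rw [shift, aeval_def, eval₂_eq]
  refine totalDegree_finsetSum_le fun m hm => ?_
  refine (totalDegree_mul _ _).trans ?_
  rw [algebraMap_eq, totalDegree_C, zero_add]
  refine (totalDegree_finsetProd _ _).trans ?_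
  refine le_trans (Finset.sum_le_sum (g := fun i => m i) fun i _ => ?_) (le_totalDegree hm)
  refine (totalDegree_pow _ _).trans (mul_le_of_le_one_right' ?_)
  refine (totalDegree_add _ _).trans ?_
  simp

theorem shift_dvd_iff (γ : σ → R) (p q : MvPolynomial σ R) :
    p ∣ shift γ q ↔ shift (-γ) p ∣ q := by
  constructor
  · intro h
    have := map_dvd (shift (-γ)) h
    rwa [shift_shift, neg_add_cancel, shift_zero] at this
  · intro h
    have := map_dvd (shift γ) h
    rwa [shift_shift, add_neg_cancel, shift_zero] at this

theorem irreducible_shift [Nontrivial R] (γ : σ → R) {p : MvPolynomial σ R} (hp : Irreducible p) :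
    Irreducible (shift γ p) :=
  (MulEquiv.irreducible_iff (shiftEquiv γ : MvPolynomial σ R ≃ₐ[R] MvPolynomial σ R)).2 hp

end Shift

/-- A polynomial that is invariant up to a scalar under a translation is constant in the direction
of the translation. -/
theorem eval_add_smul_of_shift_eq {σ : Type*} {F : MvPolynomial σ ℝ} {δ : σ → ℝ} {c : ℝ}
    (h : shift δ F = C c * F) (x : σ → ℝ) (t : ℝ) : eval (x + t • δ) F = eval x F := by
  set q : Polynomial ℝ := aeval (fun i => Polynomial.C (x i) + Polynomial.X * Polynomial.C (δ i)) F
    with hq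
  have hev : ∀ s : ℝ, q.eval s = eval (x + s • δ) F := by
    intro s
    have : (Polynomial.evalRingHom s).comp
        (aeval (fun i => Polynomial.C (x i) + Polynomial.X * Polynomial.C (δ i)) :
          MvPolynomial σ ℝ →ₐ[ℝ] Polynomial ℝ).toRingHom = eval (x + s • δ) := by
      ext i
      · simp
      · simp [mul_comm s (δ i)]
    exact congrArg (fun f => f F) this
  have hstep : ∀ s : ℝ, q.eval (s + 1) = c * q.eval s := by
    intro s
    have := congrArg (eval (x + s • δ)) h
    rw [eval_shift, map_mul, eval_C] at this
    rw [hev, hev, ← this, add_smul, one_smul, add_assoc]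
  suffices hc : q.natDegree = 0 by
    rw [Polynomial.natDegree_eq_zero] at hc
    obtain ⟨b, hb⟩ := hc
    have h0 := hev 0
    rw [zero_smul, add_zero] at h0
    rw [← h0, ← hev, ← hb]
    simp
  by_cases hq0 : q = 0
  · rw [hq0]; simp
  have hcomp : q.comp (Polynomial.X + Polynomial.C 1) = Polynomial.C c * q :=
    Polynomial.funext fun s => by simpa using hstep s
  have hc1 : c = 1 := by
    have := congrArg Polynomial.leadingCoeff hcomp
    rw [Polynomial.leadingCoeff_comp (by rw [Polynomial.natDegree_X_add_C]; simp),
      Polynomial.leadingCoeff_X_add_C, one_pow, mul_one, Polynomial.leadingCoeff_mul,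
      Polynomial.leadingCoeff_C] at this
    have h0 : q.leadingCoeff ≠ 0 := Polynomial.leadingCoeff_ne_zero.2 hq0
    exact mul_right_cancel₀ h0 (by rw [one_mul]; exact this.symm)
  have hk : ∀ k : ℕ, q.eval (k : ℝ) = q.eval 0 := by
    intro k
    induction k with
    | zero => simp
    | succ k ih => rw [Nat.cast_succ, hstep, hc1, one_mul, ih]
  have : q = Polynomial.C (q.eval 0) := by
    refine Polynomial.eq_of_infinite_eval_eq _ _ ?_
    refine Set.Infinite.mono ?_ (Set.infinite_range_of_injective (Nat.cast_injective (R := ℝ)))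
    rintro _ ⟨k, rfl⟩
    simp [hk]
  rw [this, Polynomial.natDegree_C]

theorem exists_linear_of_shift_associated {F : MvPolynomial (Fin 2) ℝ} (hF : Irreducible F) :
    ∃ a b : ℝ, (a ≠ 0 ∨ b ≠ 0) ∧
      ∀ δ : Fin 2 → ℝ, Associated (shift δ F) F → a * δ 0 + b * δ 1 = 0 := by
  by_cases h : ∃ δ : Fin 2 → ℝ, Associated (shift δ F) F ∧ δ ≠ 0
  swap
  · push Not at h
    exact ⟨1, 0, by simp, fun δ hδ => by simp [h δ hδ]⟩
  obtain ⟨δ, hδ, hδ0⟩ := h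
  have hconst : ∀ δ : Fin 2 → ℝ, Associated (shift δ F) F → ∀ x (t : ℝ),
      eval (x + t • δ) F = eval x F := by
    intro δ hδ x t
    obtain ⟨u, hu⟩ := hδ.symm
    obtain ⟨c, _, hc⟩ := MvPolynomial.isUnit_iff_eq_C_of_isReduced.1 u.isUnit
    refine eval_add_smul_of_shift_eq (c := c) ?_ x t
    rw [← hu, hc, mul_comm]
  refine ⟨-δ 1, δ 0, ?_, fun ε hε => ?_⟩
  · by_contra! h
    refine hδ0 (_root_.funext fun i => ?_)
    fin_cases i
    · exact h.2
    · simpa using h.1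
  by_contra hdet
  have hall : ∀ x : Fin 2 → ℝ, eval x F = eval 0 F := by
    intro x
    set D := -δ 1 * ε 0 + δ 0 * ε 1
    have hx : x = (0 + ((x 0 * ε 1 - x 1 * ε 0) / D) • δ) +
        ((x 1 * δ 0 - x 0 * δ 1) / D) • ε := by
      refine _root_.funext fun i => ?_
      fin_cases i
      · simp
        field_simp
        simp only [D]
        ring
      · simp
        field_simp
        simp only [D]
        ring
    rw [hx, hconst ε hε, hconst δ hδ]
  have hFC : F = C (eval 0 F) := MvPolynomial.funext fun x => by rw [hall x, eval_C]
  rw [hFC] at hF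
  by_cases h0 : eval 0 F = 0
  · rw [h0, C_0] at hF
    exact not_irreducible_zero hF
  · exact hF.not_isUnit ((IsUnit.mk0 _ h0).map C)

theorem totalDegree_prod_of_isDomain {σ R ι : Type*} [CommRing R] [IsDomain R] (s : Finset ι)
    (f : ι → MvPolynomial σ R) (h : ∀ i ∈ s, f i ≠ 0) :
    (∏ i ∈ s, f i).totalDegree = ∑ i ∈ s, (f i).totalDegree := by
  classical
  induction s using Finset.induction_on with
  | empty => simp
  | insert a s ha ih =>
    rw [Finset.prod_insert ha, Finset.sum_insert ha, totalDegree_mul_of_isDomain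
      (h a (Finset.mem_insert_self _ _)) (Finset.prod_ne_zero_iff.2 fun i hi =>
        h i (Finset.mem_insert_of_mem hi)), ih fun i hi => h i (Finset.mem_insert_of_mem hi)]

theorem one_le_totalDegree_of_irreducible {σ K : Type*} [Field K] {F : MvPolynomial σ K}
    (hF : Irreducible F) : 1 ≤ F.totalDegree := by
  by_contra! h
  rw [Nat.lt_one_iff, totalDegree_eq_zero_iff_eq_C] at h
  by_cases h0 : coeff 0 F = 0
  · rw [h, h0, C_0] at hF
    exact not_irreducible_zero hF
  · rw [h] at hF
    exact hF.not_isUnit ((IsUnit.mk0 _ h0).map C)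

/-- If all translates of `D` by a finite set `Γ` share an irreducible factor, then some linear form
takes few values on `Γ`. -/
theorem exists_linear_card_le_of_dvd_shift {D F : MvPolynomial (Fin 2) ℝ} (hD : D ≠ 0)
    (hF : Irreducible F) (Γ : Finset (Fin 2 → ℝ)) (h : ∀ γ ∈ Γ, F ∣ shift γ D) :
    ∃ a b : ℝ, (a ≠ 0 ∨ b ≠ 0) ∧
      (Γ.image fun γ => a * γ 0 + b * γ 1).card ≤ D.totalDegree := by
  classical
  obtain ⟨a, b, hab, hlin⟩ := exists_linear_of_shift_associated hF
  refine ⟨a, b, hab, ?_⟩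
  set I := Γ.image fun γ => a * γ 0 + b * γ 1 with hI
  have hrep : ∀ v : I, ∃ γ ∈ Γ, a * γ 0 + b * γ 1 = v := fun v => Finset.mem_image.1 v.2
  choose γ hγ hv using hrep
  have hprod : ∏ v : I, shift (-γ v) F ∣ D := by
    refine Finset.prod_dvd_of_isRelPrime (fun v _ w _ hvw => ?_)
      fun v _ => (shift_dvd_iff _ _ _).1 (h _ (hγ v))
    refine ((irreducible_shift _ hF).isRelPrime_iff_not_dvd).2 fun hd => hvw ?_
    have has := (irreducible_shift (-γ v) hF).associated_of_dvd (irreducible_shift (-γ w) hF) hd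
    have has' := has.map (shift (γ w))
    rw [shift_shift, shift_shift, add_neg_cancel, shift_zero] at has'
    have := hlin _ has'
    simp only [Pi.add_apply, Pi.neg_apply] at this
    refine Subtype.ext ?_
    rw [← hv, ← hv]
    linarith
  calc I.card = ∑ v : I, 1 := by simp
    _ ≤ ∑ v : I, (shift (-γ v) F).totalDegree := Finset.sum_le_sum fun v _ =>
        one_le_totalDegree_of_irreducible (irreducible_shift _ hF)
    _ = (∏ v : I, shift (-γ v) F).totalDegree :=
        (totalDegree_prod_of_isDomain _ _ fun v _ => (irreducible_shift _ hF).ne_zero).symm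
    _ ≤ D.totalDegree := totalDegree_le_of_dvd_of_isDomain hprod hD

theorem exists_irreducible_dvd_of_infinite {K : Type*} [Field K] {σ ι : Type*} [Infinite K]
    {D : MvPolynomial σ K} (hD : D ≠ 0) (Γ : Finset ι) (e : ι → ℕ) (he : Function.Injective e)
    (G : ι → MvPolynomial σ K)
    (h : ∀ t : K, ¬ IsRelPrime D (∑ i ∈ Γ, C (t ^ e i) * G i)) :
    ∃ F, Irreducible F ∧ ∀ i ∈ Γ, F ∣ G i := by
  classical
  have h1 : ∀ t : K, ∃ F : {F // F ∈ (UniqueFactorizationMonoid.factors D).toFinset},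
      F.1 ∣ ∑ i ∈ Γ, C (t ^ e i) * G i := by
    intro t
    have := h t
    rw [UniqueFactorizationMonoid.isRelPrime_iff_no_prime_factors hD] at this
    push Not at this
    obtain ⟨d, hd, hdg, hdp⟩ := this
    obtain ⟨q, hq, hdq⟩ := UniqueFactorizationMonoid.exists_mem_factors_of_dvd hD hdp.irreducible hd
    exact ⟨⟨q, Multiset.mem_toFinset.2 hq⟩, hdq.symm.dvd.trans hdg⟩
  choose f hf using h1
  obtain ⟨⟨F, hFm⟩, hFi⟩ := Finite.exists_infinite_fiber f
  have hFirr : Irreducible F :=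
    UniqueFactorizationMonoid.irreducible_of_factor F (Multiset.mem_toFinset.1 hFm)
  refine ⟨F, hFirr, ?_⟩
  have hprime : (Ideal.span {F}).IsPrime :=
    (Ideal.span_singleton_prime hFirr.ne_zero).2 hFirr.prime
  let A := MvPolynomial σ K ⧸ Ideal.span {F}
  let mk : MvPolynomial σ K →+* A := Ideal.Quotient.mk _
  let P : Polynomial A := ∑ i ∈ Γ, Polynomial.C (mk (G i)) * Polynomial.X ^ e i
  have hP : P = 0 := by
    refine Polynomial.eq_zero_of_infinite_isRoot _ ?_
    have hinj : Function.Injective fun t : f ⁻¹' {⟨F, hFm⟩} => mk (C t.1) := by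
      intro t s hts
      exact Subtype.ext ((mk.comp C).injective hts)
    refine (Set.infinite_range_of_injective hinj).mono ?_
    rintro _ ⟨⟨t, ht⟩, rfl⟩
    have hdvd := hf t
    rw [show f t = ⟨F, hFm⟩ from ht] at hdvd
    have h0 : mk (∑ i ∈ Γ, C (t ^ e i) * G i) = 0 :=
      Ideal.Quotient.eq_zero_iff_mem.2 (Ideal.mem_span_singleton.2 hdvd)
    change P.eval (mk (C t)) = 0
    rw [← h0, Polynomial.eval_finsetSum, map_sum]
    refine Finset.sum_congr rfl fun i _ => ?_
    simp [mul_comm]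
  intro i hi
  have hc := congrArg (fun p => Polynomial.coeff p (e i)) hP
  simp only [P, Polynomial.finsetSum_coeff, Polynomial.coeff_C_mul, Polynomial.coeff_X_pow,
    Polynomial.coeff_zero] at hc
  rw [Finset.sum_eq_single i] at hc
  · simp only [if_true, mul_one] at hc
    exact Ideal.mem_span_singleton.1 (Ideal.Quotient.eq_zero_iff_mem.1 hc)
  · intro j _ hji
    rw [if_neg fun h => hji (he h).symm, mul_zero]
  · exact fun h => absurd hi h

/-- A zero estimate: a nonzero polynomial of degree at most `M` vanishing on `P + Γ` with
`#P > M ^ 2` forces some nonzero linear form to take at most `M` values on `Γ`. -/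
theorem exists_linear_card_le_of_eval_add_eq_zero {D : MvPolynomial (Fin 2) ℝ} {M : ℕ} (hD : D ≠ 0)
    (hdeg : D.totalDegree ≤ M) (P Γ : Finset (Fin 2 → ℝ)) (hΓ : 0 ∈ Γ) (hP : M ^ 2 < P.card)
    (h : ∀ p ∈ P, ∀ γ ∈ Γ, eval (p + γ) D = 0) :
    ∃ a b : ℝ, (a ≠ 0 ∨ b ≠ 0) ∧ (Γ.image fun γ => a * γ 0 + b * γ 1).card ≤ M := by
  classical
  let e : Γ → ℕ := fun γ => Γ.equivFin γ
  have he : Function.Injective e := Fin.val_injective.comp Γ.equivFin.injective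
  obtain ⟨F, hF, hdvd⟩ := exists_irreducible_dvd_of_infinite hD Finset.univ e he
    (fun γ => shift γ.1 D) (by
      intro t hrel
      set g := ∑ i : Γ, C (t ^ e i) * shift i.1 D
      have hg : ∀ p ∈ P, eval p g = 0 := fun p hp => by
        simp only [g, map_sum, map_mul]
        exact Finset.sum_eq_zero fun γ _ => by rw [eval_shift, h p hp _ γ.2, mul_zero]
      have hDP : ∀ p ∈ P, eval p D = 0 := fun p hp => by simpa using h p hp 0 hΓ
      by_cases hg0 : g = 0
      · rw [hg0, isRelPrime_zero_right] at hrel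
        obtain ⟨p, hp⟩ := Finset.card_pos.1 (by omega : 0 < P.card)
        have := (hrel.map (eval p)).ne_zero
        exact this (hDP p hp)
      have hgd : g.totalDegree ≤ M := totalDegree_finsetSum_le fun γ _ => by
        refine (totalDegree_mul _ _).trans ?_
        rw [totalDegree_C, zero_add]
        exact (totalDegree_shift_le _ _).trans hdeg
      have := card_le_totalDegree_mul_of_isRelPrime hg0 hrel P hDP hg
      nlinarith [Nat.mul_le_mul hdeg hgd])
  obtain ⟨a, b, hab, hc⟩ := exists_linear_card_le_of_dvd_shift hD hF Γ
    fun γ hγ => hdvd ⟨γ, hγ⟩ (Finset.mem_univ _)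
  exact ⟨a, b, hab, hc.trans hdeg⟩

theorem _root_.Polynomial.natDegree_prod_le_and_coeff {ι R : Type*} [CommRing R] (s : Finset ι)
    (f : ι → Polynomial R) (d : ι → ℕ) (h : ∀ i ∈ s, (f i).natDegree ≤ d i) :
    (∏ i ∈ s, f i).natDegree ≤ ∑ i ∈ s, d i ∧
      (∏ i ∈ s, f i).coeff (∑ i ∈ s, d i) = ∏ i ∈ s, (f i).coeff (d i) := by
  classical
  induction s using Finset.induction_on with
  | empty => simp
  | insert a s ha ih =>
    obtain ⟨h1, h2⟩ := ih fun i hi => h i (Finset.mem_insert_of_mem hi)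
    have h3 := h a (Finset.mem_insert_self _ _)
    rw [Finset.prod_insert ha, Finset.sum_insert ha, Finset.prod_insert ha]
    refine ⟨Polynomial.natDegree_mul_le.trans (add_le_add h3 h1), ?_⟩
    rw [Polynomial.coeff_mul_add_eq_of_natDegree_le h3 h1, h2]

theorem _root_.Polynomial.coeff_det_of_natDegree_le {ι R : Type*} [CommRing R] [Fintype ι]
    [DecidableEq ι] (M : Matrix ι ι (Polynomial R)) (d : ι → ℕ)
    (h : ∀ i l, (M i l).natDegree ≤ d l) :
    M.det.coeff (∑ l, d l) = (Matrix.of fun i l => (M i l).coeff (d l)).det := by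
  rw [Matrix.det_apply', Matrix.det_apply', Polynomial.finsetSum_coeff]
  refine Finset.sum_congr rfl fun τ _ => ?_
  rw [← Polynomial.C_eq_intCast, Polynomial.coeff_C_mul,
    (Polynomial.natDegree_prod_le_and_coeff Finset.univ (fun l => M (τ l) l) d
      fun l _ => h _ l).2]
  rfl

/-- The restriction of a polynomial to the line `γ + X a`. -/
noncomputable def toLine {σ R : Type*} [CommRing R] (a γ : σ → R) :
    MvPolynomial σ R →ₐ[R] Polynomial R :=
  aeval fun s => Polynomial.C (a s) * Polynomial.X + Polynomial.C (γ s)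

theorem toLine_natDegree_coeff {σ R : Type*} [CommRing R] (a γ : σ → R) (p : MvPolynomial σ R) :
    (toLine a γ p).natDegree ≤ p.totalDegree ∧ (toLine a γ p).coeff p.totalDegree =
      eval a (homogeneousComponent p.totalDegree p) := by
  classical
  have hf : ∀ m : σ →₀ ℕ, (∏ s ∈ m.support,
      (Polynomial.C (a s) * Polynomial.X + Polynomial.C (γ s)) ^ m s).natDegree ≤ m.degree ∧
      (∏ s ∈ m.support, (Polynomial.C (a s) * Polynomial.X + Polynomial.C (γ s)) ^ m s).coeff
        m.degree = ∏ s ∈ m.support, a s ^ m s := by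
    intro m
    have hd : ∀ s, (Polynomial.C (a s) * Polynomial.X + Polynomial.C (γ s)).natDegree ≤ 1 :=
      fun s => Polynomial.natDegree_linear_le
    obtain ⟨h1, h2⟩ := Polynomial.natDegree_prod_le_and_coeff m.support
      (fun s => (Polynomial.C (a s) * Polynomial.X + Polynomial.C (γ s)) ^ m s) m
      (fun s _ => (Polynomial.natDegree_pow_le_of_le _ (hd s)).trans (by simp))
    refine ⟨h1, h2.trans (Finset.prod_congr rfl fun s _ => ?_)⟩
    have := Polynomial.coeff_pow_of_natDegree_le (m := m s) (hd s)
    rw [mul_one] at this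
    rw [this]
    simp
  rw [toLine, aeval_def, eval₂_eq]
  constructor
  · refine Polynomial.natDegree_sum_le_of_forall_le _ _ fun m hm => ?_
    refine (Polynomial.natDegree_C_mul_le _ _).trans ((hf m).1.trans ?_)
    exact le_totalDegree hm
  · rw [Polynomial.finsetSum_coeff, homogeneousComponent_apply, map_sum, Finset.sum_filter]
    refine Finset.sum_congr rfl fun m hm => ?_
    rw [Polynomial.algebraMap_eq, Polynomial.coeff_C_mul]
    split_ifs with h
    · rw [← h, (hf m).2, eval_monomial, Finsupp.prod]
    · rw [Polynomial.coeff_eq_zero_of_natDegree_lt, mul_zero]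
      exact lt_of_le_of_lt (hf m).1 (lt_of_le_of_ne (le_totalDegree hm) h)

theorem homogeneousComponent_totalDegree_ne_zero {σ R : Type*} [CommRing R]
    {p : MvPolynomial σ R} (hp : p ≠ 0) : homogeneousComponent p.totalDegree p ≠ 0 := by
  obtain ⟨m, hm, hmd⟩ := Finset.exists_mem_eq_sup p.support
    (Finset.nonempty_iff_ne_empty.2 (mt support_eq_empty.1 hp)) (fun s => s.sum fun _ e => e)
  intro h
  have := congrArg (coeff m) h
  rw [coeff_homogeneousComponent, if_pos, coeff_zero] at this
  · exact mem_support_iff.1 hm this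
  · exact hmd.symm

/-- The elimination determinant of the exponential polynomial `∑ p l * Y ^ e l`. -/
noncomputable def elimDet {σ K : Type*} [Field K] {m : ℕ} (p : Fin m → MvPolynomial σ K)
    (γ : Fin m → σ → K) (z : Fin m → K) : MvPolynomial σ K :=
  (Matrix.of fun i l : Fin m => shift (γ i) (p l) * C (z l ^ (i : ℕ))).det

variable {σ K : Type*} [Field K] {m : ℕ} (p : Fin m → MvPolynomial σ K)
    (γ : Fin m → σ → K) (z : Fin m → K)

theorem totalDegree_elimDet_le : (elimDet p γ z).totalDegree ≤ ∑ l, (p l).totalDegree := by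
  rw [elimDet, Matrix.det_apply']
  refine totalDegree_finsetSum_le fun τ _ => (totalDegree_mul _ _).trans ?_
  rw [show ((τ.sign : ℤ) : MvPolynomial σ K) = C ((τ.sign : ℤ) : K) by simp, totalDegree_C,
    zero_add]
  refine (totalDegree_finsetProd _ _).trans (Finset.sum_le_sum fun l _ => ?_)
  refine (totalDegree_mul _ _).trans ?_
  rw [totalDegree_C, add_zero]
  exact totalDegree_shift_le _ _

theorem elimDet_ne_zero [Infinite K] (hp : ∀ l, p l ≠ 0) (hz : Function.Injective z) :
    elimDet p γ z ≠ 0 := by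
  have htop : ∏ l, homogeneousComponent (p l).totalDegree (p l) ≠ 0 :=
    Finset.prod_ne_zero_iff.2 fun l _ => homogeneousComponent_totalDegree_ne_zero (hp l)
  obtain ⟨a, ha⟩ : ∃ a, eval a (∏ l, homogeneousComponent (p l).totalDegree (p l)) ≠ 0 := by
    by_contra! h
    exact htop (MvPolynomial.funext fun x => by rw [h x, map_zero])
  have hline : ∀ γ : σ → K, ∀ q, toLine a 0 (shift γ q) = toLine a γ q := by
    intro γ q
    have : (toLine a 0).comp (shift γ) = toLine a γ := by
      ext; simp [toLine, shift]
    exact congrArg (fun f => f q) this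
  intro h0
  have h1 := congrArg (toLine a 0) h0
  rw [elimDet, AlgHom.map_det, map_zero] at h1
  have h2 := Polynomial.coeff_det_of_natDegree_le ((toLine a 0).mapMatrix
    (Matrix.of fun i l : Fin m => shift (γ i) (p l) * C (z l ^ (i : ℕ))))
    (fun l => (p l).totalDegree) (by
      intro i l
      simp only [AlgHom.mapMatrix_apply, Matrix.map_apply, Matrix.of_apply, map_mul, hline]
      rw [show toLine a 0 (C (z l ^ (i : ℕ))) = Polynomial.C (z l ^ (i : ℕ)) by
        simp [toLine]]
      exact (Polynomial.natDegree_mul_C_le _ _).trans (toLine_natDegree_coeff a _ _).1)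
  rw [h1, Polynomial.coeff_zero] at h2
  have h3 : (Matrix.of fun i l : Fin m => ((toLine a 0).mapMatrix (Matrix.of fun i l : Fin m =>
      shift (γ i) (p l) * C (z l ^ (i : ℕ))) i l).coeff (p l).totalDegree) =
      Matrix.of fun i l => eval a (homogeneousComponent (p l).totalDegree (p l)) *
        (Matrix.vandermonde z).transpose i l := by
    ext i l
    simp only [AlgHom.mapMatrix_apply, Matrix.map_apply, Matrix.of_apply, map_mul, hline]
    rw [show toLine a 0 (C (z l ^ (i : ℕ))) = Polynomial.C (z l ^ (i : ℕ)) by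
        simp [toLine], Polynomial.coeff_mul_C, (toLine_natDegree_coeff a _ _).2]
    rfl
  rw [h3, Matrix.det_mul_row, Matrix.det_transpose] at h2
  rw [map_prod] at ha
  exact (mul_ne_zero ha (Matrix.det_vandermonde_ne_zero_iff.2 hz)) h2.symm

theorem eval_elimDet_eq_zero {η : σ → K} {y : Fin m → K} (hy : y ≠ 0)
    (h : ∀ i : Fin m, ∑ l, eval (η + γ i) (p l) * z l ^ (i : ℕ) * y l = 0) :
    eval η (elimDet p γ z) = 0 := by
  rw [elimDet, RingHom.map_det]
  refine Matrix.exists_mulVec_eq_zero_iff.1 ⟨y, hy, ?_⟩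
  refine _root_.funext fun i => ?_
  rw [Pi.zero_apply, ← h i]
  simp [Matrix.mulVec, dotProduct, eval_shift]

/-- A nonzero polynomial in one variable has at most as many zeros as its degree. -/
theorem card_le_totalDegree_of_unit {D : MvPolynomial Unit K} (hD : D ≠ 0) [Infinite K]
    (S : Finset K) (h : ∀ s ∈ S, eval (fun _ => s) D = 0) : S.card ≤ D.totalDegree := by
  set q := toLine (fun _ : Unit => (1 : K)) 0 D
  have hq : ∀ s, q.eval s = eval (fun _ => s) D := by
    intro s
    have : (Polynomial.evalRingHom s).comp
        (toLine (fun _ : Unit => (1 : K)) 0).toRingHom = eval (fun _ : Unit => s) := by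
      ext <;> simp [toLine]
    exact congrArg (fun f => f D) this
  have hq0 : q ≠ 0 := by
    intro h0
    refine hD (MvPolynomial.funext fun x => ?_)
    rw [map_zero, show x = fun _ => x () from rfl, ← hq, h0, Polynomial.eval_zero]
  refine le_trans ?_ (toLine_natDegree_coeff (fun _ : Unit => (1 : K)) 0 D).1
  refine (Polynomial.card_le_degree_of_subset_roots (p := q) ?_)
  intro s hs
  rw [Polynomial.mem_roots hq0, Polynomial.IsRoot, hq]
  exact h s hs

end MvPolynomial

/-- **Pigeonhole principle** for integer linear forms with real coefficients. -/
theorem exists_int_vector_forms_small {S Q : Type*} [Fintype S] [Fintype Q] (y : Q → S → ℝ)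
    (X G : ℕ) {Y ε : ℝ} (hε : 0 < ε) (hy : ∀ q s, |y q s| ≤ Y)
    (hG : Fintype.card S * X * Y ≤ G * ε)
    (hcard : (2 * G + 1) ^ Fintype.card Q < (X + 1) ^ Fintype.card S) :
    ∃ c : S → ℤ, c ≠ 0 ∧ (∀ s, |c s| ≤ X) ∧ ∀ q, |∑ s, c s * y q s| ≤ ε := by
  classical
  have hbd : ∀ (c : S → Fin (X + 1)) q, |∑ s, (c s : ℝ) * y q s| ≤ G * ε := by
    intro c q
    refine (Finset.abs_sum_le_sum_abs _ _).trans (le_trans ?_ hG)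
    calc ∑ s, |(c s : ℝ) * y q s| ≤ ∑ s : S, X * Y := Finset.sum_le_sum fun s _ => by
          rw [abs_mul, Nat.abs_cast]
          exact mul_le_mul (by exact_mod_cast Nat.lt_succ_iff.1 (c s).2) (hy q s) (abs_nonneg _)
            (Nat.cast_nonneg _)
      _ = _ := by simp [mul_assoc]
  have hfl : ∀ (c : S → Fin (X + 1)) q,
      ⌊(∑ s, (c s : ℝ) * y q s) / ε⌋ ∈ Finset.Icc (-(G : ℤ)) G := by
    intro c q
    have := abs_le.1 (hbd c q)
    rw [Finset.mem_Icc, Int.le_floor]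
    constructor
    · push_cast
      rw [le_div_iff₀ hε]
      linarith
    · have : (∑ s, (c s : ℝ) * y q s) / ε ≤ G := by
        rw [div_le_iff₀ hε]
        exact this.2
      exact_mod_cast (Int.floor_le _).trans this
  let f : (S → Fin (X + 1)) → (Q → Finset.Icc (-(G : ℤ)) G) := fun c q => ⟨_, hfl c q⟩
  obtain ⟨c, c', hne, hcc⟩ := Fintype.exists_ne_map_eq_of_card_lt f (by
    simp only [Fintype.card_pi, Finset.prod_const, Finset.card_univ, Fintype.card_fin,
      Fintype.card_coe, Int.card_Icc]
    convert hcard using 2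
    omega)
  refine ⟨fun s => (c s : ℤ) - c' s, fun h => hne (funext fun s => ?_), fun s => ?_, fun q => ?_⟩
  · have := congrFun h s
    simp only [Pi.zero_apply, sub_eq_zero] at this
    exact Fin.ext (by exact_mod_cast this)
  · have h1 := (c s).2
    have h2 := (c' s).2
    simp only [abs_le]
    constructor <;> omega
  · have h1 : ⌊(∑ s, (c s : ℝ) * y q s) / ε⌋ = ⌊(∑ s, (c' s : ℝ) * y q s) / ε⌋ :=
      congrArg Subtype.val (congrFun hcc q)
    have h2 := (Int.abs_sub_lt_one_of_floor_eq_floor h1).le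
    rw [← sub_div, abs_div, abs_of_pos hε, div_le_one hε, ← Finset.sum_sub_distrib] at h2
    refine le_of_eq_of_le (congrArg abs (Finset.sum_congr rfl fun s _ => ?_)) h2
    push_cast
    ring

theorem Real.abs_exp_sub_sum_le {A s : ℝ} {T : ℕ} (hs : |s| ≤ A) (hT : A / (T + 1) ≤ 1 / 2) :
    |exp s - ∑ t ∈ Finset.range T, s ^ t / t.factorial| ≤ 2 * (A ^ T / T.factorial) := by
  have h := Complex.exp_bound' (x := (s : ℂ)) (n := T) (by
    rw [Complex.norm_real, Real.norm_eq_abs, Nat.cast_succ]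
    exact le_trans (by gcongr) hT)
  have h2 : (Complex.exp s - ∑ m ∈ Finset.range T, (s : ℂ) ^ m / m.factorial) =
      ((exp s - ∑ t ∈ Finset.range T, s ^ t / t.factorial : ℝ) : ℂ) := by
    push_cast; rfl
  rw [h2, Complex.norm_real, Complex.norm_real, Real.norm_eq_abs, Real.norm_eq_abs] at h
  refine h.trans ?_
  rw [mul_comm]
  gcongr

/-- Existence of a small exponential polynomial on the unit square. -/
theorem exists_exp_poly_small {Ω : Type*} [Fintype Ω] (J K T N X G : ℕ) (φ : ℝ) (s : Fin N → ℝ)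
    (b : Ω → ℕ → ℕ → ℝ) {A M₀ ε : ℝ} (hε : 0 < ε) (hφ : |φ| ≤ 2) (hs : ∀ l, |s l| ≤ A)
    (hT : A / (T + 1) ≤ 1 / 2)
    (hb : ∀ ω, ∑ j ∈ Finset.range J, ∑ a ∈ Finset.range K, |b ω j a| ≤ M₀)
    (hG : 4 * Fintype.card Ω * N * X * M₀ * Real.exp A ≤ G * ε)
    (hcard : (2 * G + 1) ^ (J * (K + T)) < (X + 1) ^ (2 * (Fintype.card Ω * N))) :
    ∃ c : Ω → Fin N → Fin 2 → ℤ, c ≠ 0 ∧ (∀ ω l i, |c ω l i| ≤ X) ∧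
      ∀ u v : ℝ, |u| ≤ 1 → |v| ≤ 1 →
        |∑ ω, ∑ l, (c ω l 0 + c ω l 1 * φ) *
          (∑ j ∈ Finset.range J, ∑ a ∈ Finset.range K, b ω j a * v ^ j * u ^ a) *
            Real.exp (s l * u)| ≤
          J * (K + T) * ε + 6 * Fintype.card Ω * N * X * M₀ * (A ^ T / T.factorial) := by
  classical
  -- the Taylor coefficient of `v ^ j * u ^ q`
  let τ : Ω → Fin N → ℕ → ℕ → ℝ := fun ω l j q => ∑ a ∈ Finset.range K,
    if a ≤ q ∧ q - a < T then b ω j a * (s l ^ (q - a) / (q - a).factorial) else 0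
  let e : Fin 2 → ℝ := ![1, φ]
  have he : ∀ i, |e i| ≤ 2 := by
    intro i
    fin_cases i
    · simp [e]
    · simpa [e] using hφ
  have hM₀ : ∀ _ : Ω, 0 ≤ M₀ := fun ω =>
    (Finset.sum_nonneg fun _ _ => Finset.sum_nonneg fun _ _ => abs_nonneg _).trans (hb ω)
  have hτ : ∀ ω l, ∀ j ∈ Finset.range J, ∀ q, |τ ω l j q| ≤ M₀ * Real.exp A := by
    intro ω l j hj q
    calc |τ ω l j q| ≤ ∑ a ∈ Finset.range K, |b ω j a| * Real.exp A := by
          refine (Finset.abs_sum_le_sum_abs _ _).trans (Finset.sum_le_sum fun a _ => ?_)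
          split_ifs
          · rw [abs_mul]
            refine mul_le_mul_of_nonneg_left ?_ (abs_nonneg _)
            rw [abs_div, abs_pow, Nat.abs_cast]
            refine (Real.pow_div_factorial_le_exp _ (abs_nonneg _) _).trans
              (Real.exp_le_exp.2 (hs l))
          · rw [abs_zero]; positivity
      _ ≤ M₀ * Real.exp A := by
          rw [← Finset.sum_mul]
          refine mul_le_mul_of_nonneg_right (le_trans ?_ (hb ω)) (Real.exp_pos _).le
          exact Finset.single_le_sum (f := fun j => ∑ a ∈ Finset.range K, |b ω j a|)
            (fun _ _ => Finset.sum_nonneg fun _ _ => abs_nonneg _) hj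
  obtain ⟨c, hc0, hcX, hc⟩ := exists_int_vector_forms_small (S := Ω × Fin N × Fin 2)
    (Q := Fin J × Fin (K + T)) (fun q p => τ p.1 p.2.1 q.1 q.2 * e p.2.2) X G
    (Y := M₀ * Real.exp A * 2) hε (fun q p => by
      rw [abs_mul]
      exact mul_le_mul (hτ _ _ _ (Finset.mem_range.2 q.1.2) _) (he _) (abs_nonneg _)
        (mul_nonneg (hM₀ p.1) (Real.exp_pos _).le))
    (by
      simp only [Fintype.card_prod, Fintype.card_fin]
      push_cast
      linarith)
    (by
      simp only [Fintype.card_prod, Fintype.card_fin]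
      convert hcard using 2
      ring)
  refine ⟨fun ω l i => c (ω, l, i), fun h => hc0 (funext fun p => ?_),
    fun ω l i => hcX _, fun u v hu hv => ?_⟩
  · exact congrFun (congrFun (congrFun h p.1) p.2.1) p.2.2
  -- splitting off the truncated exponential
  set r : Fin N → ℝ := fun l =>
    Real.exp (s l * u) - ∑ t ∈ Finset.range T, (s l * u) ^ t / t.factorial
  have hr : ∀ l, |r l| ≤ 2 * (A ^ T / T.factorial) := fun l =>
    Real.abs_exp_sub_sum_le (by
      rw [abs_mul]
      exact (mul_le_of_le_one_right (abs_nonneg _) hu).trans (hs l)) hT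
  set p : Ω → ℝ := fun ω => ∑ j ∈ Finset.range J, ∑ a ∈ Finset.range K, b ω j a * v ^ j * u ^ a
  have hp : ∀ ω, |p ω| ≤ M₀ := by
    intro ω
    refine ((Finset.abs_sum_le_sum_abs _ _).trans (Finset.sum_le_sum fun j _ =>
      (Finset.abs_sum_le_sum_abs _ _).trans (Finset.sum_le_sum fun a _ => ?_))).trans (hb ω)
    rw [abs_mul, abs_mul, abs_pow, abs_pow, mul_assoc]
    exact mul_le_of_le_one_right (abs_nonneg _)
      (mul_le_one₀ (pow_le_one₀ (abs_nonneg _) hv) (by positivity)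
        (pow_le_one₀ (abs_nonneg _) hu))
  have hprod : ∀ ω l, p ω * ∑ t ∈ Finset.range T, (s l * u) ^ t / t.factorial =
      ∑ j ∈ Finset.range J, ∑ q ∈ Finset.range (K + T), τ ω l j q * (v ^ j * u ^ q) := by
    intro ω l
    simp only [p, τ, Finset.sum_mul]
    refine Finset.sum_congr rfl fun j _ => ?_
    rw [Finset.sum_comm]
    refine Finset.sum_congr rfl fun a ha => ?_
    rw [Finset.mul_sum]
    simp only [ite_mul, zero_mul]
    rw [← Finset.sum_filter]
    refine Finset.sum_bij (fun t _ => a + t) ?_ ?_ ?_ ?_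
    · intro t ht
      simp only [Finset.mem_range, Finset.mem_filter] at ha ht ⊢
      omega
    · intro t _ t' _ h
      omega
    · intro q hq
      simp only [Finset.mem_range, Finset.mem_filter] at hq
      exact ⟨q - a, Finset.mem_range.2 hq.2.2, by omega⟩
    · intro t _
      rw [Nat.add_sub_cancel_left]
      ring
  have hcoef : ∀ ω l, |(c (ω, l, 0) + c (ω, l, 1) * φ : ℝ)| ≤ 3 * X := by
    intro ω l
    have h0 : |(c (ω, l, 0) : ℝ)| ≤ X := by exact_mod_cast hcX (ω, l, 0)
    have h1 : |(c (ω, l, 1) : ℝ)| ≤ X := by exact_mod_cast hcX (ω, l, 1)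
    calc _ ≤ |(c (ω, l, 0) : ℝ)| + |(c (ω, l, 1) * φ : ℝ)| := abs_add_le _ _
      _ ≤ X + X * 2 := by
        rw [abs_mul]
        gcongr
      _ = _ := by ring
  have hsplit : ∑ ω, ∑ l, (c (ω, l, 0) + c (ω, l, 1) * φ) * p ω * Real.exp (s l * u) =
      ∑ j ∈ Finset.range J, ∑ q ∈ Finset.range (K + T), (∑ x : Ω × Fin N × Fin 2,
        c x * (τ x.1 x.2.1 j q * e x.2.2)) * (v ^ j * u ^ q) +
      ∑ ω, ∑ l, (c (ω, l, 0) + c (ω, l, 1) * φ) * p ω * r l := by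
    have h1 : ∀ ω l, (c (ω, l, 0) + c (ω, l, 1) * φ) * p ω * Real.exp (s l * u) =
        ∑ j ∈ Finset.range J, ∑ q ∈ Finset.range (K + T),
          (∑ i, c (ω, l, i) * (τ ω l j q * e i)) * (v ^ j * u ^ q) +
        (c (ω, l, 0) + c (ω, l, 1) * φ) * p ω * r l := by
      intro ω l
      have h2 : Real.exp (s l * u) = ∑ t ∈ Finset.range T, (s l * u) ^ t / t.factorial + r l := by
        simp only [r]; ring
      rw [h2, mul_add, mul_assoc _ (p ω), hprod, Finset.mul_sum]
      congr 1
      refine Finset.sum_congr rfl fun j _ => ?_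
      rw [Finset.mul_sum]
      refine Finset.sum_congr rfl fun q _ => ?_
      simp only [Fin.sum_univ_two, e, Matrix.cons_val_zero, Matrix.cons_val_one]
      ring
    simp only [h1, Finset.sum_add_distrib]
    congr 1
    simp only [Fintype.sum_prod_type, Finset.sum_mul]
    calc _ = ∑ ω, ∑ j ∈ Finset.range J, ∑ l, ∑ q ∈ Finset.range (K + T), ∑ i,
          c (ω, l, i) * (τ ω l j q * e i) * (v ^ j * u ^ q) :=
        Finset.sum_congr rfl fun ω _ => Finset.sum_comm
      _ = ∑ j ∈ Finset.range J, ∑ ω, ∑ l, ∑ q ∈ Finset.range (K + T), ∑ i,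
          c (ω, l, i) * (τ ω l j q * e i) * (v ^ j * u ^ q) := Finset.sum_comm
      _ = ∑ j ∈ Finset.range J, ∑ ω, ∑ q ∈ Finset.range (K + T), ∑ l, ∑ i,
          c (ω, l, i) * (τ ω l j q * e i) * (v ^ j * u ^ q) :=
        Finset.sum_congr rfl fun j _ => Finset.sum_congr rfl fun ω _ => Finset.sum_comm
      _ = _ := Finset.sum_congr rfl fun j _ => Finset.sum_comm
  rw [hsplit]
  refine (abs_add_le _ _).trans (add_le_add ?_ ?_)
  · calc _ ≤ ∑ j ∈ Finset.range J, ∑ q ∈ Finset.range (K + T), ε := by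
          refine (Finset.abs_sum_le_sum_abs _ _).trans (Finset.sum_le_sum fun j hj =>
            (Finset.abs_sum_le_sum_abs _ _).trans (Finset.sum_le_sum fun q hq => ?_))
          rw [abs_mul]
          refine (mul_le_of_le_one_right (abs_nonneg _) ?_).trans
            (hc (⟨j, Finset.mem_range.1 hj⟩, ⟨q, Finset.mem_range.1 hq⟩))
          rw [abs_mul, abs_pow, abs_pow]
          exact mul_le_one₀ (pow_le_one₀ (abs_nonneg _) hv) (by positivity)
            (pow_le_one₀ (abs_nonneg _) hu)
      _ = _ := by simp; ring
  · calc _ ≤ ∑ ω : Ω, ∑ l : Fin N, 3 * X * M₀ * (2 * (A ^ T / T.factorial)) := by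
          refine (Finset.abs_sum_le_sum_abs _ _).trans (Finset.sum_le_sum fun ω _ =>
            (Finset.abs_sum_le_sum_abs _ _).trans (Finset.sum_le_sum fun l _ => ?_))
          rw [abs_mul, abs_mul]
          have := hM₀ ω
          exact mul_le_mul (mul_le_mul (hcoef ω l) (hp ω) (abs_nonneg _) (by positivity)) (hr l)
            (abs_nonneg _) (by positivity)
      _ = _ := by simp; ring

open Real in
/-- The ring `ℤ[φ]` embedded in `ℝ × ℝ` by its two real places. -/
def goldenPairs : Subring (ℝ × ℝ) where
  carrier := {p | ∃ a b : ℤ, p = (a + b * goldenRatio, a + b * goldenConj)}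
  zero_mem' := ⟨0, 0, by simp; rfl⟩
  one_mem' := ⟨1, 0, by simp; rfl⟩
  add_mem' := by
    rintro _ _ ⟨a, b, rfl⟩ ⟨c, d, rfl⟩
    refine ⟨a + c, b + d, ?_⟩
    ext <;> push_cast <;> simp <;> ring
  neg_mem' := by
    rintro _ ⟨a, b, rfl⟩
    refine ⟨-a, -b, ?_⟩
    ext <;> push_cast <;> simp <;> ring
  mul_mem' := by
    rintro _ _ ⟨a, b, rfl⟩ ⟨c, d, rfl⟩
    refine ⟨a * c + b * d, a * d + b * c + b * d, ?_⟩
    ext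
    · simp only [Prod.fst_mul]
      push_cast
      linear_combination ((b : ℝ) * d) * goldenRatio_sq
    · simp only [Prod.snd_mul]
      push_cast
      linear_combination ((b : ℝ) * d) * goldenConj_sq

namespace goldenPairs

open Real

theorem int_add_mul_goldenRatio_eq_zero {a b : ℤ} (h : (a : ℝ) + b * goldenRatio = 0) :
    a = 0 ∧ b = 0 := by
  have hb : b = 0 := by
    by_contra hb
    refine (goldenRatio_irrational.intCast_mul hb).ne_int (-a) ?_
    push_cast
    linarith
  subst hb
  simpa using h

/-- Liouville's inequality in `ℤ[φ]`. -/
theorem fst_eq_zero_of_abs_mul_lt_one {p : ℝ × ℝ} (hp : p ∈ goldenPairs)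
    (h : |p.1 * p.2| < 1) : p.1 = 0 := by
  obtain ⟨a, b, rfl⟩ := hp
  have hnorm : ((a : ℝ) + b * goldenRatio) * (a + b * goldenConj) =
      ((a ^ 2 + a * b - b ^ 2 : ℤ) : ℝ) := by
    push_cast
    linear_combination ((a : ℝ) * b) * goldenRatio_add_goldenConj +
      (b : ℝ) ^ 2 * goldenRatio_mul_goldenConj
  simp only at h ⊢
  rw [hnorm, ← Int.cast_abs, ← Int.cast_one, Int.cast_lt, Int.abs_lt_one_iff] at h
  rw [h, Int.cast_zero] at hnorm
  rcases mul_eq_zero.1 hnorm with h0 | h0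
  · exact h0
  · have : ((a + b : ℤ) : ℝ) + (-b : ℤ) * goldenRatio = 0 := by
      push_cast
      linear_combination h0 - (b : ℝ) * goldenRatio_add_goldenConj
    obtain ⟨h1, h2⟩ := int_add_mul_goldenRatio_eq_zero this
    have hb : b = 0 := by omega
    have ha : a = 0 := by omega
    simp [ha, hb]

theorem intCast_mem (m : ℤ) : ((m : ℝ), (m : ℝ)) ∈ goldenPairs := ⟨m, 0, by simp⟩

theorem zpow_mem (k : ℤ) : (goldenRatio ^ k, goldenConj ^ k) ∈ goldenPairs := by
  have h1 : (goldenRatio, goldenConj) ∈ goldenPairs := ⟨0, 1, by simp⟩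
  have h2 : (goldenRatio⁻¹, goldenConj⁻¹) ∈ goldenPairs := ⟨-1, 1, by
    rw [inv_goldenRatio, inv_goldenConj]
    ext
    · push_cast; linear_combination goldenRatio_add_goldenConj
    · push_cast; linear_combination goldenRatio_add_goldenConj⟩
  cases k with
  | ofNat k => simpa using pow_mem h1 k
  | negSucc k =>
    rw [zpow_negSucc, zpow_negSucc, ← inv_pow, ← inv_pow]
    exact pow_mem h2 (k + 1)

end goldenPairs

open Real in
/-- The number `φ ^ r₀ * 2 ^ r₁ * 3 ^ r₂`. -/
noncomputable def goldenMonomial (r : Fin 3 → ℤ) : ℝ :=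
  goldenRatio ^ r 0 * 2 ^ r 1 * 3 ^ r 2

open Real in
/-- The conjugate of `goldenMonomial`. -/
noncomputable def goldenMonomialConj (r : Fin 3 → ℤ) : ℝ :=
  goldenConj ^ r 0 * 2 ^ r 1 * 3 ^ r 2

namespace goldenMonomial

open Real

theorem pos (r : Fin 3 → ℤ) : 0 < goldenMonomial r := by
  have := goldenRatio_pos
  unfold goldenMonomial
  positivity

theorem add (r t : Fin 3 → ℤ) : goldenMonomial (r + t) = goldenMonomial r * goldenMonomial t := by
  unfold goldenMonomial
  simp only [Pi.add_apply]
  rw [zpow_add₀ goldenRatio_ne_zero, zpow_add₀ two_ne_zero, zpow_add₀ three_ne_zero]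
  ring

theorem log_eq (r : Fin 3 → ℤ) :
    log (goldenMonomial r) = r 0 * log goldenRatio + r 1 * log 2 + r 2 * log 3 := by
  have := goldenRatio_pos
  unfold goldenMonomial
  rw [log_mul (by positivity) (by positivity), log_mul (by positivity) (by positivity), log_zpow,
    log_zpow, log_zpow]

theorem smul_zpow (r : Fin 3 → ℤ) (e : ℤ) :
    goldenMonomial r ^ e = goldenMonomial (e • r) := by
  unfold goldenMonomial
  simp only [Pi.smul_apply, smul_eq_mul]
  rw [mul_zpow, mul_zpow, ← zpow_mul, ← zpow_mul, ← zpow_mul, mul_comm e, mul_comm e, mul_comm e]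

theorem pow_six_mul_zpow {k l : ℤ} {N : ℕ} (hk : |k| ≤ N) (hl : |l| ≤ N) :
    ∃ m : ℕ, (m : ℝ) = 6 ^ N * (2 ^ k * 3 ^ l) ∧ m ≤ 36 ^ N := by
  rw [abs_le] at hk hl
  obtain ⟨a, ha⟩ := Int.eq_ofNat_of_zero_le (by linarith : 0 ≤ k + N)
  obtain ⟨b, hb⟩ := Int.eq_ofNat_of_zero_le (by linarith : 0 ≤ l + N)
  refine ⟨2 ^ a * 3 ^ b, ?_, ?_⟩
  · have h1 : k = a - N := by omega
    have h2 : l = b - N := by omega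
    push_cast
    rw [h1, h2, zpow_sub₀ two_ne_zero, zpow_sub₀ three_ne_zero,
      show (6 : ℝ) = 2 * 3 by norm_num, mul_pow]
    simp only [zpow_natCast]
    field_simp
  · calc 2 ^ a * 3 ^ b ≤ 2 ^ (2 * N) * 3 ^ (2 * N) :=
          Nat.mul_le_mul (Nat.pow_le_pow_right (by norm_num) (by omega))
            (Nat.pow_le_pow_right (by norm_num) (by omega))
      _ = 36 ^ N := by rw [← mul_pow, pow_mul]; norm_num

theorem pair_mem (r : Fin 3 → ℤ) {N : ℕ} (hr : ∀ i, |r i| ≤ N) :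
    (6 ^ N * goldenMonomial r, 6 ^ N * goldenMonomialConj r) ∈ goldenPairs ∧
      |6 ^ N * goldenMonomialConj r| ≤ 36 ^ N * goldenRatio ^ N := by
  obtain ⟨m, hm, hm'⟩ := pow_six_mul_zpow (hr 1) (hr 2)
  have h1 : 6 ^ N * goldenMonomial r = goldenRatio ^ r 0 * m := by
    rw [hm, goldenMonomial]; ring
  have h2 : 6 ^ N * goldenMonomialConj r = goldenConj ^ r 0 * m := by
    rw [hm, goldenMonomialConj]; ring
  rw [h1, h2]
  refine ⟨?_, ?_⟩
  · simpa using goldenPairs.mul_mem (goldenPairs.zpow_mem (r 0)) (goldenPairs.intCast_mem m)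
  · rw [abs_mul, Nat.abs_cast, mul_comm, abs_zpow]
    have h3 : |goldenConj| = goldenRatio⁻¹ := by
      rw [abs_of_neg goldenConj_neg, inv_goldenRatio]
    rw [h3, inv_zpow', ← zpow_natCast goldenRatio N]
    refine mul_le_mul (by exact_mod_cast hm') (zpow_le_zpow_right₀ one_lt_goldenRatio.le ?_)
      (zpow_nonneg goldenRatio_pos.le _) (by positivity)
    exact (abs_le.1 (abs_neg (r 0) ▸ hr 0)).2

end goldenMonomial

open Real in
/-- Liouville's inequality for sums of terms in `ℤ[φ] * φ ^ ℤ * 2 ^ ℤ * 3 ^ ℤ`. -/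
theorem goldenMonomial.sum_eq_zero {ι : Type*} [Fintype ι] (c : ι → Fin 2 → ℤ) (m : ι → ℤ)
    (r : ι → Fin 3 → ℤ) {N : ℕ} {X M : ℝ} (hc : ∀ i k, |(c i k : ℝ)| ≤ X)
    (hm : ∀ i, |(m i : ℝ)| ≤ M) (hr : ∀ i k, |r i k| ≤ N)
    (h : |∑ i, (c i 0 + c i 1 * goldenRatio) * m i * goldenMonomial (r i)| *
      (6 ^ N * (Fintype.card ι * (3 * X * M * (36 ^ N * goldenRatio ^ N)))) < 1) :
    ∑ i, (c i 0 + c i 1 * goldenRatio) * m i * goldenMonomial (r i) = 0 := by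
  set p : ℝ × ℝ := ∑ i, ((c i 0 + c i 1 * goldenRatio, c i 0 + c i 1 * goldenConj) : ℝ × ℝ) *
    (((m i : ℝ), (m i : ℝ)) *
      (6 ^ N * goldenMonomial (r i), 6 ^ N * goldenMonomialConj (r i))) with hp
  have hpm : p ∈ goldenPairs := by
    refine sum_mem fun i _ => mul_mem ⟨_, _, rfl⟩ (mul_mem (goldenPairs.intCast_mem _) ?_)
    exact (goldenMonomial.pair_mem (r i) (hr i)).1
  have h1 : p.1 = 6 ^ N * ∑ i, (c i 0 + c i 1 * goldenRatio) * m i * goldenMonomial (r i) := by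
    rw [hp, Prod.fst_sum, Finset.mul_sum]
    refine Finset.sum_congr rfl fun i _ => ?_
    simp only [Prod.fst_mul]
    ring
  have h2 : |p.2| ≤ Fintype.card ι * (3 * X * M * (36 ^ N * goldenRatio ^ N)) := by
    rw [hp, Prod.snd_sum]
    refine (Finset.abs_sum_le_sum_abs _ _).trans ?_
    rw [← nsmul_eq_mul, ← Finset.card_univ]
    refine Finset.sum_le_card_nsmul _ _ _ fun i _ => ?_
    simp only [Prod.snd_mul]
    have h3 := (goldenMonomial.pair_mem (r i) (hr i)).2
    have hX : 0 ≤ X := (abs_nonneg _).trans (hc i 0)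
    have h4 : |(c i 0 : ℝ) + c i 1 * goldenConj| ≤ 3 * X := by
      refine (abs_add_le _ _).trans ?_
      rw [abs_mul]
      have : |goldenConj| ≤ 2 := by
        rw [abs_le]
        constructor <;> linarith [neg_one_lt_goldenConj, goldenConj_neg]
      nlinarith [hc i 0, hc i 1, abs_nonneg (c i 1 : ℝ), abs_nonneg goldenConj]
    rw [abs_mul, abs_mul, ← mul_assoc]
    have hM : 0 ≤ M := (abs_nonneg _).trans (hm i)
    exact mul_le_mul (mul_le_mul h4 (hm i) (abs_nonneg _) (by positivity)) h3 (abs_nonneg _)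
      (by positivity)
  have h0 : p.1 = 0 := by
    refine goldenPairs.fst_eq_zero_of_abs_mul_lt_one hpm (lt_of_le_of_lt ?_ h)
    rw [abs_mul, h1, abs_mul, abs_of_pos (by positivity : (0 : ℝ) < 6 ^ N)]
    calc 6 ^ N * |∑ i, (c i 0 + c i 1 * goldenRatio) * m i * goldenMonomial (r i)| * |p.2|
        = |∑ i, (c i 0 + c i 1 * goldenRatio) * m i * goldenMonomial (r i)| *
          (6 ^ N * |p.2|) := by ring
      _ ≤ _ := by gcongr
  rw [h1] at h0
  exact (mul_eq_zero.1 h0).resolve_left (by positivity)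

theorem mul_pow_four_le_two_pow {R : ℕ} (hR : 100 ≤ R) : 10 ^ 9 * R ^ 4 ≤ 2 ^ R := by
  induction R, hR using Nat.le_induction with
  | base => norm_num
  | succ R hR ih =>
    have : (R + 1) ^ 4 ≤ 2 * R ^ 4 := by
      have h2 : 100 * R ^ 3 ≤ R ^ 4 := by rw [pow_succ R 3, mul_comm]; gcongr
      have h3 : 1 ≤ R ^ 3 := Nat.one_le_pow _ _ (by omega)
      have h4 : R ^ 2 ≤ R ^ 3 := Nat.pow_le_pow_right (by omega) (by norm_num)
      have h5 : R ≤ R ^ 3 := Nat.le_self_pow (by norm_num) R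
      linarith [show (R + 1) ^ 4 = R ^ 4 + 4 * R ^ 3 + 6 * R ^ 2 + 4 * R + 1 by ring]
    rw [pow_succ 2 R]
    linarith

open Real in
theorem exp_mul_nat_le (n : ℕ) : exp (23 / 10 * n) ≤ (2 ^ n) ^ 4 := by
  have h : exp (23 / 10) ≤ 16 := by
    have h1 := exp_one_lt_d9
    refine le_of_pow_le_pow_left₀ (n := 10) (by norm_num) (by norm_num) ?_
    rw [← exp_nat_mul, show ((10 : ℕ) : ℝ) * (23 / 10) = (23 : ℕ) * 1 by norm_num, exp_nat_mul]
    refine (pow_le_pow_left₀ (exp_pos _).le h1.le 23).trans ?_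
    norm_num
  rw [mul_comm, exp_nat_mul, ← pow_mul, mul_comm n 4, pow_mul]
  exact pow_le_pow_left₀ (exp_pos _).le (h.trans (by norm_num)) n

open Real in
theorem pow_div_factorial_le_two_pow (n : ℕ) :
    (23 / 10 * n : ℝ) ^ (40 * n) / (40 * n).factorial ≤ ((2 ^ n) ^ 100)⁻¹ := by
  have h1 := Real.pow_div_factorial_le_exp (40 * n : ℝ) (by positivity) (40 * n)
  have h2 : (23 / 10 * n : ℝ) ^ (40 * n) = (23 / 400) ^ (40 * n) * (40 * n) ^ (40 * n) := by
    rw [← mul_pow]; congr 1; ring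
  rw [h2, mul_div_assoc]
  have h3 : exp 1 * (23 / 400) ≤ (176 / 1000) := by linarith [exp_one_lt_d9]
  calc (23 / 400 : ℝ) ^ (40 * n) * ((40 * n : ℝ) ^ (40 * n) / (40 * n).factorial)
      ≤ (23 / 400) ^ (40 * n) * exp (40 * n) := by gcongr
    _ = (exp 1 * (23 / 400)) ^ (40 * n) := by
      rw [mul_pow, ← exp_nat_mul]; push_cast; rw [mul_one, mul_comm]
    _ ≤ (176 / 1000) ^ (40 * n) := by gcongr
    _ = ((176 / 1000) ^ 40) ^ n := by rw [pow_mul]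
    _ ≤ ((2 ^ 100)⁻¹) ^ n := by
      gcongr
      norm_num
    _ = _ := by rw [inv_pow, ← pow_mul, ← pow_mul, mul_comm]

open Real in
/-- Near the point `ρ u`, the powers of `ξ` are close to exponentials. -/
theorem abs_zpow_sub_exp_le {ξ y δ A : ℝ} {l : ℤ} {n : ℕ} (hξ : 0 < ξ) (hl : |l| ≤ n)
    (h : |log ξ - y| ≤ δ) (hA : |l * y| ≤ A) (hδ : n * δ ≤ 1) :
    |ξ ^ l - exp (l * y)| ≤ exp A * (2 * (n * δ)) := by
  have h1 : ξ ^ l = exp (l * y) * exp (l * (log ξ - y)) := by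
    rw [← exp_add, ← mul_add, add_sub_cancel, mul_comm, ← rpow_def_of_pos hξ, rpow_intCast]
  have h2 : |l * (log ξ - y)| ≤ n * δ := by
    rw [abs_mul]
    exact mul_le_mul (by exact_mod_cast hl) h (abs_nonneg _) (by positivity)
  rw [h1, ← mul_sub_one, abs_mul, abs_exp]
  have h3 := abs_exp_sub_one_le (h2.trans hδ)
  refine mul_le_mul (exp_le_exp.2 ((le_abs_self _).trans hA)) (by linarith) (abs_nonneg _)
    (exp_pos _).le

open Real in
/-- If `Λ` is very small, there is a nonzero linear combination of the functions
`mon ω * ξ ^ l` that vanishes at all the given points. -/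
theorem exists_golden_poly {Ω : Type*} [Fintype Ω] [Nonempty Ω] {L R J : ℕ} (hL : 100 ≤ L)
    (hLR : L ≤ R) (hJ : J * (80 * R) ≤ 2 * Fintype.card Ω) (hΩ : Fintype.card Ω ≤ (80 * R) ^ 2)
    (hJR : J ≤ 80 * R) {δ ρ : ℝ} (hδ : δ * 2 ^ (88 * (L * R)) ≤ 1)
    (hρ : |ρ| ≤ 23 / 10 * R) {P : Set (Fin 3 → ℤ)} (hP : ∀ r ∈ P, ∀ i, |r i| ≤ R)
    (mon : Ω → (Fin 3 → ℤ) → ℤ) (b : Ω → ℕ → ℕ → ℝ) (u v : (Fin 3 → ℤ) → ℝ)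
    (hu : ∀ r ∈ P, |u r| ≤ 1) (hv : ∀ r ∈ P, |v r| ≤ 1)
    (hmon : ∀ r ∈ P, ∀ ω, (mon ω r : ℝ) =
      ∑ j ∈ Finset.range J, ∑ a ∈ Finset.range (80 * R), b ω j a * v r ^ j * u r ^ a)
    (hb : ∀ ω, ∑ j ∈ Finset.range J, ∑ a ∈ Finset.range (80 * R), |b ω j a| ≤
      2 ^ (12 * (L * R)))
    (hlog : ∀ r ∈ P, |log (goldenMonomial r) - ρ * u r| ≤ δ) :
    ∃ c : Ω → Fin (2 * L + 1) → ℝ, c ≠ 0 ∧ ∀ r ∈ P,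
      ∑ ω, ∑ l, c ω l * mon ω r * goldenMonomial r ^ ((l : ℤ) - L) = 0 := by
  classical
  rcases P.eq_empty_or_nonempty with rfl | ⟨r₀, hr₀⟩
  · exact ⟨fun _ _ => 1, fun h => one_ne_zero (congrFun (congrFun h (Classical.arbitrary Ω)) 0),
      by simp⟩
  have hδ0 : 0 ≤ δ := (abs_nonneg _).trans (hlog r₀ hr₀)
  set n := L * R with hn
  set Q : ℝ := 2 ^ n with hQ
  have hQpos : 0 < Q := by positivity
  have hpow : ∀ k, (2 : ℝ) ^ (k * n) = Q ^ k := fun k => by rw [hQ, ← pow_mul, mul_comm]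
  have hRn : R ≤ n := Nat.le_mul_of_pos_left _ (by omega)
  have hLn : L ≤ n := Nat.le_mul_of_pos_right _ (by omega)
  have hQR : (10 : ℝ) ^ 9 * R ^ 4 ≤ Q := by
    have h1 : ((10 ^ 9 * R ^ 4 : ℕ) : ℝ) ≤ ((2 ^ R : ℕ) : ℝ) :=
      Nat.cast_le.2 (mul_pow_four_le_two_pow (hL.trans hLR))
    rw [Nat.cast_mul, Nat.cast_pow, Nat.cast_pow, Nat.cast_pow] at h1
    norm_num only [Nat.cast_ofNat] at h1 ⊢
    exact h1.trans (pow_le_pow_right₀ (by norm_num) hRn)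
  have hR1 : (1 : ℝ) ≤ R := by exact_mod_cast (by omega : 1 ≤ R)
  have hR3 : (R : ℝ) ^ 3 ≤ R ^ 4 := pow_le_pow_right₀ hR1 (by norm_num)
  have hLR' : (L : ℝ) ≤ R := by exact_mod_cast hLR
  have hΩ' : (Fintype.card Ω : ℝ) ≤ 6400 * R ^ 2 := by
    have : (Fintype.card Ω : ℝ) ≤ ((80 * R : ℕ) : ℝ) ^ 2 := by exact_mod_cast hΩ
    push_cast at this
    linarith
  have hN : ((2 * L + 1 : ℕ) : ℝ) ≤ 3 * R := by push_cast; linarith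
  have hW : (Fintype.card Ω : ℝ) * (2 * L + 1 : ℕ) ≤ 19200 * R ^ 3 := by
    calc (Fintype.card Ω : ℝ) * (2 * L + 1 : ℕ) ≤ 6400 * R ^ 2 * (3 * R) := by gcongr
      _ = _ := by ring
  have hQ1 : 1 ≤ Q := one_le_pow₀ (by norm_num)
  have hA : exp (23 / 10 * n) ≤ Q ^ 4 := exp_mul_nat_le n
  have hs : ∀ l : Fin (2 * L + 1), |((((l : ℕ) : ℤ) - L : ℤ) : ℝ) * ρ| ≤ 23 / 10 * n := by
    intro l
    have h1 : |(((l : ℕ) : ℤ) - L : ℤ)| ≤ L := by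
      rw [abs_le]; constructor <;> have := l.2 <;> omega
    have h2 : |((((l : ℕ) : ℤ) - L : ℤ) : ℝ)| ≤ L := by exact_mod_cast h1
    rw [abs_mul, hn]
    calc _ ≤ (L : ℝ) * (23 / 10 * R) := mul_le_mul h2 hρ (abs_nonneg _) (by positivity)
      _ = _ := by push_cast; ring
  obtain ⟨c, hc0, hcX, hc⟩ := exists_exp_poly_small (Ω := Ω) J (80 * R) (40 * n) (2 * L + 1)
    (2 ^ (24 * n)) (2 ^ (89 * n)) goldenRatio
    (fun l => ((((l : ℕ) : ℤ) - L : ℤ) : ℝ) * ρ) b (A := 23 / 10 * n) (M₀ := 2 ^ (12 * n))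
    (ε := (Q ^ 48)⁻¹) (by positivity)
    (by rw [abs_of_pos goldenRatio_pos]; exact goldenRatio_lt_two.le) hs
    (by rw [div_le_iff₀ (by positivity)]; push_cast; linarith) hb
    (by
      push_cast
      rw [hpow, hpow, hpow]
      rw [← div_eq_mul_inv, le_div_iff₀ (by positivity)]
      have h1 : 4 * ((Fintype.card Ω : ℝ) * (2 * L + 1 : ℕ)) ≤ Q := by nlinarith
      push_cast at h1
      calc 4 * (Fintype.card Ω : ℝ) * (2 * L + 1) * Q ^ 24 * Q ^ 12 * exp (23 / 10 * n) * Q ^ 48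
          = 4 * ((Fintype.card Ω : ℝ) * (2 * L + 1)) * (Q ^ 24 * Q ^ 12 * exp (23 / 10 * n) *
            Q ^ 48) := by ring
        _ ≤ Q * (Q ^ 24 * Q ^ 12 * Q ^ 4 * Q ^ 48) := by gcongr
        _ = Q ^ 89 := by ring)
    (by
      have h1 : 2 * 2 ^ (89 * n) + 1 ≤ 2 ^ (90 * n) := by
        have h2 : 3 ≤ 2 ^ n := by
          calc 3 ≤ 2 ^ 2 := by norm_num
            _ ≤ 2 ^ n := Nat.pow_le_pow_right (by norm_num) (by omega)
        have h3 : 1 ≤ 2 ^ (89 * n) := Nat.one_le_two_pow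
        rw [show 90 * n = 89 * n + n by ring, pow_add]
        nlinarith
      have hΩ0 : 0 < Fintype.card Ω := Fintype.card_pos
      calc (2 * 2 ^ (89 * n) + 1) ^ (J * (80 * R + 40 * n))
          ≤ (2 ^ (90 * n)) ^ (J * (80 * R + 40 * n)) := Nat.pow_le_pow_left h1 _
        _ = 2 ^ (90 * n * (J * (80 * R + 40 * n))) := by rw [← pow_mul]
        _ ≤ 2 ^ (24 * n * (2 * (Fintype.card Ω * (2 * L + 1)))) := by
          refine Nat.pow_le_pow_right (by norm_num) ?_
          have h4 : 90 * (80 + 40 * L) ≤ 1920 * (2 * L + 1) := by omega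
          calc 90 * n * (J * (80 * R + 40 * n)) = n * (J * R) * (90 * (80 + 40 * L)) := by
                rw [hn]; ring
            _ ≤ n * (J * R) * (1920 * (2 * L + 1)) := by gcongr
            _ = 24 * n * (J * (80 * R) * (2 * L + 1)) := by ring
            _ ≤ 24 * n * (2 * Fintype.card Ω * (2 * L + 1)) := by gcongr
            _ = _ := by ring
        _ = (2 ^ (24 * n)) ^ (2 * (Fintype.card Ω * (2 * L + 1))) := by rw [← pow_mul]
        _ < _ := Nat.pow_lt_pow_left (Nat.lt_succ_self _) (by positivity))
  refine ⟨fun ω l => c ω l 0 + c ω l 1 * goldenRatio, ?_, fun r hr => ?_⟩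
  · intro h0
    refine hc0 (funext fun ω => funext fun l => funext fun i => ?_)
    obtain ⟨h1, h2⟩ := goldenPairs.int_add_mul_goldenRatio_eq_zero (congrFun (congrFun h0 ω) l)
    fin_cases i
    exacts [h1, h2]
  have hcX' : ∀ ω l i, |(c ω l i : ℝ)| ≤ Q ^ 24 := fun ω l i => by
    rw [← hpow]; exact_mod_cast hcX ω l i
  have hmX : ∀ ω, |(mon ω r : ℝ)| ≤ Q ^ 12 := by
    intro ω
    rw [hmon r hr ω, ← hpow]
    refine ((Finset.abs_sum_le_sum_abs _ _).trans (Finset.sum_le_sum fun j _ =>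
      (Finset.abs_sum_le_sum_abs _ _).trans (Finset.sum_le_sum fun a _ => ?_))).trans (hb ω)
    rw [abs_mul, abs_mul, abs_pow, abs_pow]
    exact mul_le_of_le_one_right (by positivity) (pow_le_one₀ (abs_nonneg _) (hu r hr)) |>.trans
      (mul_le_of_le_one_right (by positivity) (pow_le_one₀ (abs_nonneg _) (hv r hr)))
  have hC : ∀ ω l, |(c ω l 0 : ℝ) + c ω l 1 * goldenRatio| ≤ 3 * Q ^ 24 := by
    intro ω l
    refine (abs_add_le _ _).trans ?_
    rw [abs_mul, abs_of_pos goldenRatio_pos]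
    nlinarith [hcX' ω l 0, hcX' ω l 1, abs_nonneg (c ω l 1 : ℝ), goldenRatio_lt_two,
      goldenRatio_pos]
  have hLδ : L * δ * Q ^ 88 ≤ L := by
    rw [← hpow, mul_assoc]
    exact mul_le_of_le_one_right (by positivity) hδ
  have hLδ' : L * δ ≤ L * (Q ^ 88)⁻¹ := by
    rw [← div_eq_mul_inv, le_div_iff₀ (by positivity)]; exact hLδ
  have hLδ1 : L * δ ≤ 1 := by
    refine hLδ'.trans ?_
    rw [← div_eq_mul_inv, div_le_one (by positivity)]
    have : (L : ℝ) ≤ Q := by nlinarith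
    exact this.trans (le_self_pow₀ hQ1 (by norm_num))
  have hdiff : |∑ ω, ∑ l, ((c ω l 0 : ℝ) + c ω l 1 * goldenRatio) * mon ω r *
      goldenMonomial r ^ ((l : ℤ) - L) - ∑ ω, ∑ l, (c ω l 0 + c ω l 1 * goldenRatio) * mon ω r *
      exp (((((l : ℕ) : ℤ) - L : ℤ) : ℝ) * ρ * u r)| ≤
      (Fintype.card Ω * (2 * L + 1 : ℕ)) * (6 * L * (Q ^ 48)⁻¹) := by
    rw [← Finset.sum_sub_distrib]
    simp only [← Finset.sum_sub_distrib, ← mul_sub]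
    refine (Finset.abs_sum_le_sum_abs _ _).trans ?_
    rw [mul_assoc, ← nsmul_eq_mul, ← Finset.card_univ]
    refine Finset.sum_le_card_nsmul _ _ _ fun ω _ => ?_
    refine (Finset.abs_sum_le_sum_abs _ _).trans ?_
    rw [← nsmul_eq_mul]
    conv_rhs => rw [← Fintype.card_fin (2 * L + 1), ← Finset.card_univ]
    refine Finset.sum_le_card_nsmul _ _ _ fun l _ => ?_
    rw [abs_mul, abs_mul]
    have h1 : |(((l : ℕ) : ℤ) - L : ℤ)| ≤ L := by
      rw [abs_le]; constructor <;> have := l.2 <;> omega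
    have h2 : |((((l : ℕ) : ℤ) - L : ℤ) : ℝ) * (ρ * u r)| ≤ 23 / 10 * n := by
      rw [← mul_assoc, abs_mul]
      exact (mul_le_of_le_one_right (abs_nonneg _) (hu r hr)).trans (hs l)
    have h3 := abs_zpow_sub_exp_le (goldenMonomial.pos r) h1 (hlog r hr) h2 hLδ1
    rw [mul_assoc _ ρ]
    calc _ ≤ 3 * Q ^ 24 * Q ^ 12 * (Q ^ 4 * (2 * (L * (Q ^ 88)⁻¹))) := by
          refine mul_le_mul (mul_le_mul (hC ω l) (hmX ω) (abs_nonneg _) (by positivity))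
            (h3.trans ?_) (abs_nonneg _) (by positivity)
          gcongr
      _ = _ := by field_simp; ring
  have hsmall : |∑ ω, ∑ l, ((c ω l 0 : ℝ) + c ω l 1 * goldenRatio) * mon ω r *
      exp (((((l : ℕ) : ℤ) - L : ℤ) : ℝ) * ρ * u r)| ≤
      (J * (80 * R + 40 * n : ℕ)) * (Q ^ 48)⁻¹ +
        6 * (Fintype.card Ω * (2 * L + 1 : ℕ)) * (Q ^ 48)⁻¹ := by
    have h1 := hc (u r) (v r) (hu r hr) (hv r hr)
    simp only [← hmon r hr] at h1
    refine h1.trans ?_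
    push_cast
    rw [hpow, hpow]
    refine add_le_add le_rfl ?_
    have h2 : (23 / 10 * n : ℝ) ^ (40 * n) / (40 * n).factorial ≤ (Q ^ 100)⁻¹ :=
      pow_div_factorial_le_two_pow n
    calc _ ≤ 6 * (Fintype.card Ω : ℝ) * (2 * L + 1) * Q ^ 24 * Q ^ 12 * (Q ^ 100)⁻¹ := by gcongr
      _ = 6 * (Fintype.card Ω * (2 * L + 1)) * (Q ^ 64)⁻¹ := by field_simp
      _ ≤ _ := by gcongr; norm_num
  have htot : |∑ ω, ∑ l, ((c ω l 0 : ℝ) + c ω l 1 * goldenRatio) * mon ω r *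
      goldenMonomial r ^ ((l : ℤ) - L)| ≤ 1 / 10 * (Q ^ 47)⁻¹ := by
    have h1 := abs_sub_abs_le_abs_sub (∑ ω, ∑ l, ((c ω l 0 : ℝ) + c ω l 1 * goldenRatio) *
      mon ω r * goldenMonomial r ^ ((l : ℤ) - L)) (∑ ω, ∑ l, (c ω l 0 + c ω l 1 * goldenRatio) *
      mon ω r * exp (((((l : ℕ) : ℤ) - L : ℤ) : ℝ) * ρ * u r))
    have hJ' : (J : ℝ) ≤ 80 * R := by exact_mod_cast hJR
    have h2 : (J * (80 * R + 40 * n : ℕ) : ℝ) ≤ 9600 * R ^ 3 := by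
      have h5 : ((80 * R + 40 * n : ℕ) : ℝ) ≤ 120 * R ^ 2 := by
        rw [hn]; push_cast; nlinarith
      calc _ ≤ 80 * R * (120 * (R : ℝ) ^ 2) := by gcongr
        _ = _ := by ring
    have h3 : (Fintype.card Ω * (2 * L + 1 : ℕ) : ℝ) * (6 * L) ≤ 115200 * R ^ 4 := by
      calc _ ≤ 19200 * (R : ℝ) ^ 3 * (6 * R) := by gcongr
        _ = _ := by ring
    have h4 : (Fintype.card Ω * (2 * L + 1 : ℕ) : ℝ) * (6 * L) + J * (80 * R + 40 * n : ℕ) +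
        6 * (Fintype.card Ω * (2 * L + 1 : ℕ)) ≤ 1 / 10 * Q := by
      linarith
    calc _ ≤ ((Fintype.card Ω * (2 * L + 1 : ℕ) : ℝ) * (6 * L) + J * (80 * R + 40 * n : ℕ) +
        6 * (Fintype.card Ω * (2 * L + 1 : ℕ))) * (Q ^ 48)⁻¹ := by linarith
      _ ≤ 1 / 10 * Q * (Q ^ 48)⁻¹ := by gcongr
      _ = _ := by field_simp
  have hconv : ∑ ω, ∑ l, ((c ω l 0 : ℝ) + c ω l 1 * goldenRatio) * mon ω r *
      goldenMonomial r ^ ((l : ℤ) - L) = ∑ i : Ω × Fin (2 * L + 1), ((c i.1 i.2 0 : ℝ) +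
        c i.1 i.2 1 * goldenRatio) * mon i.1 r *
        goldenMonomial (((((i.2 : ℕ) : ℤ) - L : ℤ)) • r) := by
    rw [Fintype.sum_prod_type]
    simp only [goldenMonomial.smul_zpow]
  rw [hconv] at htot ⊢
  refine goldenMonomial.sum_eq_zero (N := n) (X := Q ^ 24) (M := Q ^ 12)
    (fun i : Ω × Fin (2 * L + 1) => c i.1 i.2) (fun i => mon i.1 r) _
    (fun i k => hcX' _ _ k) (fun i => hmX _) (fun i k => ?_) ?_
  · rw [Pi.smul_apply, smul_eq_mul, abs_mul, hn]
    push_cast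
    refine mul_le_mul ?_ (hP r hr k) (abs_nonneg _) (Int.natCast_nonneg _)
    rw [abs_le]; constructor <;> have := i.2.2 <;> omega
  · have h1 : (36 : ℝ) ^ n * goldenRatio ^ n ≤ Q ^ 6 := by
      rw [← mul_pow, hQ, ← pow_mul, mul_comm n 6, pow_mul (2 : ℝ)]
      refine pow_le_pow_left₀ (by have := goldenRatio_pos; positivity) ?_ n
      have h5 : Real.sqrt 5 ≤ 9 / 4 := Real.sqrt_le_iff.2 ⟨by norm_num, by norm_num⟩
      rw [goldenRatio]
      linarith
    have h2 : (6 : ℝ) ^ n ≤ Q ^ 3 := by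
      rw [hQ, ← pow_mul, mul_comm n 3, pow_mul (2 : ℝ)]
      exact pow_le_pow_left₀ (by norm_num : (0 : ℝ) ≤ 6) (by norm_num) n
    have h3 : 3 * (Fintype.card Ω * (2 * L + 1 : ℕ) : ℝ) ≤ Q := by nlinarith
    rw [Fintype.card_prod, Fintype.card_fin, Nat.cast_mul]
    calc _ ≤ 1 / 10 * (Q ^ 47)⁻¹ * (Q ^ 3 * ((Fintype.card Ω * (2 * L + 1 : ℕ)) *
          (3 * Q ^ 24 * Q ^ 12 * Q ^ 6))) := by gcongr
      _ = 1 / 10 * (Q ^ 47)⁻¹ * (3 * (Fintype.card Ω * (2 * L + 1 : ℕ) : ℝ)) * Q ^ 45 := by ring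
      _ ≤ 1 / 10 * (Q ^ 47)⁻¹ * Q * Q ^ 45 := by gcongr
      _ = 1 / 10 * (1 / Q) := by field_simp
      _ < 1 := by
        have : 1 / Q ≤ 1 := by rw [div_le_one hQpos]; exact hQ1
        linarith

namespace MvPolynomial

/-- Eliminating the powers `z l ^ i` from relations `∑ l, p l (η + i τ) * z l ^ i * y l = 0`. -/
theorem exists_eliminant {σ F : Type*} [Field F] [Infinite F] {N K : ℕ}
    {p : Fin N → MvPolynomial σ F} (hp : ∃ l, p l ≠ 0) (hK : ∀ l, (p l).totalDegree ≤ K)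
    {z : Fin N → F} (hz : Function.Injective z) (τ : σ → F) :
    ∃ D : MvPolynomial σ F, D ≠ 0 ∧ D.totalDegree ≤ N * K ∧ ∀ (η : σ → F) (y : Fin N → F),
      (∀ l, y l ≠ 0) → (∀ i < N, ∑ l, eval (η + (i : F) • τ) (p l) * z l ^ i * y l = 0) →
      eval η D = 0 := by
  classical
  set S : Finset (Fin N) := Finset.univ.filter fun l => p l ≠ 0 with hS
  have hSne : 0 < S.card := by
    obtain ⟨l, hl⟩ := hp
    exact Finset.card_pos.2 ⟨l, by simp [hS, hl]⟩
  have hSN : S.card ≤ N := by simpa using Finset.card_le_univ S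
  let f : Fin S.card ≃ S := S.equivFin.symm
  have hf : ∀ i, p (f i) ≠ 0 := fun i => (Finset.mem_filter.1 (f i).2).2
  have hsum : ∀ g : Fin N → F, (∀ l, p l = 0 → g l = 0) → ∑ i, g (f i) = ∑ l, g l := by
    intro g hg
    rw [f.sum_comp (fun l => g l), Finset.sum_coe_sort S g]
    refine Finset.sum_subset (Finset.subset_univ _) fun l _ hl => hg l ?_
    by_contra h
    exact hl (by simp [hS, h])
  refine ⟨elimDet (fun i => p (f i)) (fun i => ((i : ℕ) : F) • τ) (fun i => z (f i)),
    elimDet_ne_zero _ _ _ hf (hz.comp (Subtype.val_injective.comp f.injective)), ?_, ?_⟩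
  · refine (totalDegree_elimDet_le _ _ _).trans ((Finset.sum_le_sum fun i _ => hK _).trans ?_)
    simpa using Nat.mul_le_mul_right K hSN
  · intro η y hy h
    refine eval_elimDet_eq_zero _ _ _ (y := fun i => y (f i)) ?_ fun i => ?_
    · intro h0
      exact hy _ (congrFun h0 ⟨0, hSne⟩)
    · rw [hsum fun l => eval (η + ((i : ℕ) : F) • τ) (p l) * z l ^ (i : ℕ) * y l]
      · exact h i (i.2.trans_le hSN)
      · intro l hl
        simp [hl]

/-- The same with polynomials given by their coefficients. -/
theorem exists_eliminant_monomial {σ F Ω : Type*} [Field F] [Infinite F] [Fintype Ω] {N K : ℕ}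
    {c : Ω → Fin N → F} (hc : c ≠ 0) {e : Ω → σ →₀ ℕ} (he : Function.Injective e)
    (hK : ∀ ω, (e ω).degree ≤ K) {z : Fin N → F} (hz : Function.Injective z) (τ : σ → F) :
    ∃ D : MvPolynomial σ F, D ≠ 0 ∧ D.totalDegree ≤ N * K ∧ ∀ (η : σ → F) (y : Fin N → F),
      (∀ l, y l ≠ 0) → (∀ i < N, ∑ ω, ∑ l, c ω l *
        (e ω).prod (fun s k => (η s + i * τ s) ^ k) * (z l ^ i * y l) = 0) →
      eval η D = 0 := by
  classical
  have hcoeff : ∀ ω l, coeff (e ω) (∑ ω', monomial (e ω') (c ω' l)) = c ω l := by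
    intro ω l
    rw [coeff_sum, Finset.sum_eq_single ω]
    · simp
    · intro ω' _ h
      rw [coeff_monomial, if_neg (he.ne h)]
    · simp
  obtain ⟨D, hD, hdeg, h⟩ := exists_eliminant (p := fun l => ∑ ω, monomial (e ω) (c ω l))
    (K := K) (by
      by_contra! h0
      exact hc (_root_.funext fun ω => _root_.funext fun l => by rw [← hcoeff, h0 l]; simp))
    (fun l => totalDegree_finsetSum_le fun ω _ => (totalDegree_monomial_le _ _).trans (hK ω)) hz τ
  refine ⟨D, hD, hdeg, fun η y hy hη => h η y hy fun i hi => ?_⟩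
  rw [← hη i hi, Finset.sum_comm]
  refine Finset.sum_congr rfl fun l _ => ?_
  rw [map_sum, mul_assoc, Finset.sum_mul]
  refine Finset.sum_congr rfl fun ω _ => ?_
  rw [eval_monomial]
  simp

end MvPolynomial

namespace goldenMonomial

open Real

/-- The numbers `φ`, `2` and `3` are multiplicatively independent. -/
theorem eq_one_iff {r : Fin 3 → ℤ} : goldenMonomial r = 1 ↔ r = 0 := by
  refine ⟨fun h => ?_, fun h => by simp [h, goldenMonomial]⟩
  obtain ⟨N, hN⟩ : ∃ N : ℕ, ∀ i, |r i| ≤ N := by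
    refine ⟨∑ i, (r i).natAbs, fun i => ?_⟩
    rw [Int.abs_eq_natAbs]
    exact_mod_cast Finset.single_le_sum (f := fun i => (r i).natAbs) (fun _ _ => Nat.zero_le _)
      (Finset.mem_univ i)
  have h1 : goldenMonomialConj r = 1 := by
    obtain ⟨a, b, hab⟩ := (pair_mem r hN).1
    rw [h, mul_one, Prod.mk.injEq] at hab
    have : ((a - 6 ^ N : ℤ) : ℝ) + b * goldenRatio = 0 := by push_cast; linarith [hab.1]
    obtain ⟨h2, h3⟩ := goldenPairs.int_add_mul_goldenRatio_eq_zero this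
    have h4 : (a : ℝ) = 6 ^ N := by
      have : a = 6 ^ N := by omega
      rw [this]; push_cast; rfl
    have h5 := hab.2
    rw [h3, h4, Int.cast_zero, zero_mul, add_zero] at h5
    exact mul_left_cancel₀ (by positivity : (6 : ℝ) ^ N ≠ 0) (by rw [h5, mul_one])
  have h0 : r 0 = 0 := by
    have h2 : |goldenConj| = goldenRatio⁻¹ := by
      rw [abs_of_neg goldenConj_neg, inv_goldenRatio]
    have h3 : goldenRatio ^ r 0 * (2 ^ r 1 * 3 ^ r 2) =
        (goldenRatio ^ r 0)⁻¹ * (2 ^ r 1 * 3 ^ r 2) := by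
      have h4 := congrArg abs h1
      rw [goldenMonomialConj, abs_one, mul_assoc, abs_mul, abs_zpow, h2, inv_zpow,
        abs_of_pos (by positivity : (0 : ℝ) < 2 ^ r 1 * 3 ^ r 2)] at h4
      rw [h4, ← h, goldenMonomial, mul_assoc]
    have h5 := mul_right_cancel₀ (by positivity : (2 : ℝ) ^ r 1 * 3 ^ r 2 ≠ 0) h3
    rw [← zpow_neg] at h5
    have := zpow_right_injective₀ goldenRatio_pos one_lt_goldenRatio.ne' h5
    omega
  have h2 : (2 : ℚ) ^ r 1 * 3 ^ r 2 = 1 := by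
    rw [goldenMonomial, h0, zpow_zero, one_mul] at h
    have h6 : (((2 : ℚ) ^ r 1 * 3 ^ r 2 : ℚ) : ℝ) = ((1 : ℚ) : ℝ) := by push_cast; exact h
    exact Rat.cast_injective h6
  have : Fact (Nat.Prime 2) := ⟨Nat.prime_two⟩
  have : Fact (Nat.Prime 3) := ⟨Nat.prime_three⟩
  have h3 : ∀ q : ℕ, [Fact q.Prime] →
      r 1 * padicValRat q 2 + r 2 * padicValRat q 3 = 0 := by
    intro q _
    have := congrArg (padicValRat q) h2
    rwa [padicValRat.mul (zpow_ne_zero _ two_ne_zero) (zpow_ne_zero _ three_ne_zero),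
      padicValRat.zpow, padicValRat.zpow, padicValRat.one] at this
  have h4 := h3 2
  have h5 := h3 3
  have e1 : padicValRat 2 2 = 1 := by exact_mod_cast padicValRat.self (p := 2) (by norm_num)
  have e2 : padicValRat 2 3 = 0 := by
    have : padicValRat 2 ((3 : ℕ) : ℚ) = 0 := by
      rw [padicValRat.of_nat, padicValNat.eq_zero_of_not_dvd (by norm_num)]; rfl
    exact_mod_cast this
  have e3 : padicValRat 3 3 = 1 := by exact_mod_cast padicValRat.self (p := 3) (by norm_num)
  have e4 : padicValRat 3 2 = 0 := by
    have : padicValRat 3 ((2 : ℕ) : ℚ) = 0 := by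
      rw [padicValRat.of_nat, padicValNat.eq_zero_of_not_dvd (by norm_num)]; rfl
    exact_mod_cast this
  rw [e1, e2] at h4
  rw [e3, e4] at h5
  funext i
  fin_cases i
  · exact h0
  · simpa using h4
  · simpa using h5

end goldenMonomial

open Real in
/-- If the logarithms of the points are almost proportional to an additive function `Z`, then `Z`
takes few values on them. -/
theorem card_le_of_log_near_line {L R : ℕ} (hL : 100 ≤ L) (hLR : L ≤ R) {δ μ : ℝ} {H : ℕ}
    (hδ : δ * 2 ^ (88 * (L * R)) ≤ 1) (hH : 1 ≤ H) (hHR : H ^ (80 * R) ≤ 2 ^ (12 * (L * R)))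
    {P : Set (Fin 3 → ℤ)} (hP : ∀ r ∈ P, ∀ i, |r i| ≤ R) (Z : (Fin 3 → ℤ) →+ ℤ)
    (hlog : ∀ r ∈ P, |log (goldenMonomial r) - μ * Z r| ≤ δ)
    (hμ : ∀ r ∈ P, |μ * Z r| ≤ 23 / 10 * R) (hZ : ∀ r ∈ P, |Z r| ≤ H)
    {t : Fin 3 → ℤ} (ht : t ≠ 0) {Φ : Finset (Fin 3 → ℤ)} (hinj : Set.InjOn Z Φ)
    (hΦ : ∀ d ∈ Φ, ∀ i < 2 * L + 1, d + i • t ∈ P) : Φ.card ≤ (2 * L + 1) * (80 * R) := by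
  classical
  rcases Φ.eq_empty_or_nonempty with rfl | ⟨d₀, hd₀⟩
  · simp
  have hPne : P.Nonempty := ⟨d₀ + 0 • t, hΦ d₀ hd₀ 0 (by omega)⟩
  have hPfin : P.Finite := by
    refine (Set.finite_Icc (fun _ : Fin 3 => -(R : ℤ)) fun _ => R).subset fun r hr => ?_
    rw [Set.mem_Icc, Pi.le_def, Pi.le_def]
    exact ⟨fun i => (abs_le.1 (hP r hr i)).1, fun i => (abs_le.1 (hP r hr i)).2⟩
  obtain ⟨rm, hrm, hmax⟩ := P.exists_max_image (fun r => |Z r|) hPfin hPne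
  set W : ℝ := |(Z rm : ℝ)| with hW
  have hZW : ∀ r ∈ P, |(Z r : ℝ)| ≤ W := fun r hr => by rw [hW]; exact_mod_cast hmax r hr
  have hWH : W ≤ H := by rw [hW]; exact_mod_cast hZ rm hrm
  have hW0 : 0 ≤ W := abs_nonneg _
  have hZu : ∀ r ∈ P, (Z r : ℝ) = W * (Z r / W) := by
    intro r hr
    rcases hW0.eq_or_lt' with h | h
    · have := hZW r hr
      rw [h, abs_nonpos_iff] at this
      rw [this, h, zero_mul]
    · field_simp
  have hR0 : 0 < 80 * R := by omega
  have : Nonempty (Fin (80 * R)) := ⟨⟨0, hR0⟩⟩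
  obtain ⟨c, hc, hvan⟩ := exists_golden_poly (Ω := Fin (80 * R)) (J := 1) hL hLR
    (by rw [Fintype.card_fin]; omega)
    (by rw [Fintype.card_fin]; exact Nat.le_self_pow (by norm_num) _)
    (by omega) hδ (ρ := μ * W)
    (by rw [abs_mul, hW, abs_abs, ← abs_mul]; exact hμ rm hrm) hP (fun k r => Z r ^ (k : ℕ))
    (fun k _ a => if a = k then W ^ (k : ℕ) else 0) (fun r => Z r / W) (fun _ => 0)
    (fun r hr => by rw [abs_div, abs_of_nonneg hW0]; exact div_le_one_of_le₀ (hZW r hr) hW0)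
    (fun _ _ => by simp)
    (fun r hr k => by
      rw [Finset.sum_range_one, Finset.sum_eq_single (k : ℕ)]
      · rw [if_pos rfl, pow_zero, mul_one, ← mul_pow, ← hZu r hr, Int.cast_pow]
      · intro a _ ha
        simp [ha]
      · intro h
        exact absurd (Finset.mem_range.2 k.2) h)
    (fun k => by
      rw [Finset.sum_range_one, Finset.sum_eq_single (k : ℕ)]
      · rw [if_pos rfl, abs_of_nonneg (by positivity)]
        calc W ^ (k : ℕ) ≤ (H : ℝ) ^ (k : ℕ) := by gcongr
          _ ≤ (H : ℝ) ^ (80 * R) := pow_le_pow_right₀ (by exact_mod_cast hH) k.2.le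
          _ ≤ _ := by exact_mod_cast hHR
      · intro a _ ha
        simp [ha]
      · intro h
        exact absurd (Finset.mem_range.2 k.2) h)
    (fun r hr => by rw [mul_assoc, ← hZu r hr]; exact hlog r hr)
  have hξ : goldenMonomial t ≠ 1 := mt goldenMonomial.eq_one_iff.1 ht
  obtain ⟨D, hD, hdeg, hroot⟩ := MvPolynomial.exists_eliminant_monomial hc
    (e := fun k : Fin (80 * R) => Finsupp.single () (k : ℕ)) (K := 80 * R)
    (fun k k' h => by
      have := DFunLike.congr_fun h ()
      simp only [Finsupp.single_eq_same] at this
      exact Fin.ext this)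
    (fun k => by rw [Finsupp.degree_single]; exact k.2.le)
    (z := fun l => goldenMonomial t ^ ((l : ℤ) - L))
    (fun l l' h => by
      have := zpow_right_injective₀ (goldenMonomial.pos t) hξ h
      exact Fin.ext (by simpa using this))
    (fun _ => (Z t : ℝ))
  have hcard := MvPolynomial.card_le_totalDegree_of_unit hD (Φ.image fun d => (Z d : ℝ)) (by
    intro s hs
    obtain ⟨d, hd, rfl⟩ := Finset.mem_image.1 hs
    refine hroot _ (fun l => goldenMonomial d ^ ((l : ℤ) - L))
      (fun l => (zpow_pos (goldenMonomial.pos d) _).ne') fun i hi => ?_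
    rw [← hvan _ (hΦ d hd i hi)]
    refine Finset.sum_congr rfl fun k _ => Finset.sum_congr rfl fun l _ => ?_
    have h1 : goldenMonomial (d + i • t) ^ ((l : ℤ) - L) =
        (goldenMonomial t ^ ((l : ℤ) - L)) ^ i * goldenMonomial d ^ ((l : ℤ) - L) := by
      rw [goldenMonomial.add, mul_zpow, ← natCast_zsmul, ← goldenMonomial.smul_zpow, mul_comm,
        ← zpow_natCast, ← zpow_mul, ← zpow_mul, mul_comm (i : ℤ)]
    rw [h1, Finsupp.prod_single_index (h := fun _ k => ((Z d : ℝ) + i * Z t) ^ k) (pow_zero _),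
      map_add, map_nsmul]
    rw [nsmul_eq_mul]
    push_cast
    rfl)
  rw [Finset.card_image_of_injOn] at hcard
  · exact hcard.trans hdeg
  · intro a ha b hb h
    exact hinj ha hb (Int.cast_injective (α := ℝ) h)

/-- The expansion of `(p v) ^ k * (q u + s v) ^ j` in powers of `v` and `u`. -/
theorem exists_coeff_pow_mul_add_pow (p q s : ℝ) {k j K : ℕ} (h : k + j < K) :
    ∃ b : ℕ → ℕ → ℝ, (∀ u v : ℝ, (p * v) ^ k * (q * u + s * v) ^ j =
      ∑ i ∈ Finset.range K, ∑ a ∈ Finset.range K, b i a * v ^ i * u ^ a) ∧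
      ∑ i ∈ Finset.range K, ∑ a ∈ Finset.range K, |b i a| ≤ |p| ^ k * (|q| + |s|) ^ j := by
  classical
  set w : ℕ → ℝ := fun a => p ^ k * (q ^ a * s ^ (j - a) * j.choose a) with hw
  have hcol : ∀ g : ℕ → ℕ → ℝ, (∑ i ∈ Finset.range K, ∑ a ∈ Finset.range K,
      if a < j + 1 ∧ i = k + (j - a) then g i a else 0) =
      ∑ a ∈ Finset.range (j + 1), g (k + (j - a)) a := by
    intro g
    rw [Finset.sum_comm, ← Finset.sum_subset (Finset.range_mono (by omega : j + 1 ≤ K))]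
    · refine Finset.sum_congr rfl fun a ha => ?_
      rw [Finset.sum_eq_single (k + (j - a)), if_pos ⟨Finset.mem_range.1 ha, rfl⟩]
      · intro i _ hi
        rw [if_neg fun h => hi h.2]
      · intro h'
        exact absurd (Finset.mem_range.2 (by omega)) h'
    · intro a _ ha
      exact Finset.sum_eq_zero fun i _ => if_neg fun h => ha (Finset.mem_range.2 h.1)
  refine ⟨fun i a => if a < j + 1 ∧ i = k + (j - a) then w a else 0, fun u v => ?_, ?_⟩
  · simp only [ite_mul, zero_mul]
    rw [hcol fun i a => w a * v ^ i * u ^ a, add_pow, Finset.mul_sum]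
    refine Finset.sum_congr rfl fun a _ => ?_
    rw [hw]
    ring
  · simp only [apply_ite abs, abs_zero]
    rw [hcol fun _ a => |w a|, add_pow, Finset.mul_sum]
    refine Finset.sum_le_sum fun a _ => le_of_eq ?_
    rw [hw]
    simp only [abs_mul, abs_pow, Nat.abs_cast]

open Real in
theorem log_three_le : log 3 ≤ 8 / 5 * log 2 := by
  have h : log ((3 : ℝ) ^ 5) ≤ log ((2 : ℝ) ^ 8) := log_le_log (by norm_num) (by norm_num)
  rw [log_pow, log_pow] at h
  push_cast at h
  linarith

open Real in
theorem log_goldenRatio_le : log goldenRatio ≤ 7 / 10 * log 2 := by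
  have h : log (goldenRatio ^ 10) ≤ log ((2 : ℝ) ^ 7) := by
    refine log_le_log (pow_pos goldenRatio_pos _) ?_
    have h5 : Real.sqrt 5 ≤ 2237 / 1000 := Real.sqrt_le_iff.2 ⟨by norm_num, by norm_num⟩
    have h6 : goldenRatio ≤ 1619 / 1000 := by rw [goldenRatio]; linarith
    exact (pow_le_pow_left₀ goldenRatio_pos.le h6 10).trans (by norm_num)
  rw [log_pow, log_pow] at h
  push_cast at h
  linarith

/-- The linear form `n r₁ + m r₀`. -/
def latticeForm (n m : ℕ) (i : Fin 3) : (Fin 3 → ℤ) →+ ℤ where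
  toFun r := n * r i + m * r 0
  map_zero' := by simp
  map_add' r t := by simp only [Pi.add_apply]; ring

theorem latticeForm_apply (n m : ℕ) (i : Fin 3) (r : Fin 3 → ℤ) :
    latticeForm n m i r = n * r i + m * r 0 := rfl

theorem abs_latticeForm_le {n m : ℕ} {R : ℕ} {κ : ℝ} (hm : (m : ℝ) ≤ κ * n) (i : Fin 3)
    {r : Fin 3 → ℤ} (hr : ∀ i, |r i| ≤ R) :
    |((latticeForm n m i r : ℤ) : ℝ)| ≤ (1 + κ) * n * R := by
  have h : ∀ i, |(r i : ℝ)| ≤ R := fun i => by exact_mod_cast hr i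
  rw [latticeForm_apply]
  push_cast
  refine (abs_add_le _ _).trans ?_
  rw [abs_mul, abs_mul, Nat.abs_cast, Nat.abs_cast]
  have h1 : (n : ℝ) * |(r i : ℝ)| ≤ n * R := by gcongr; exact h i
  have h2 : (m : ℝ) * |(r 0 : ℝ)| ≤ κ * n * R :=
    mul_le_mul hm (h 0) (abs_nonneg _) ((Nat.cast_nonneg m).trans hm)
  linarith

open Real in
theorem abs_log_goldenMonomial_le {R : ℕ} {r : Fin 3 → ℤ} (hr : ∀ i, |r i| ≤ R) :
    |log (goldenMonomial r)| ≤ 229 / 100 * R := by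
  have h : ∀ i, |(r i : ℝ)| ≤ R := fun i => by exact_mod_cast hr i
  have h2 := log_two_lt_d9
  have h2' : 0 < log 2 := log_pos (by norm_num)
  have h3' : 0 < log 3 := log_pos (by norm_num)
  have h1' : 0 < log goldenRatio := log_pos one_lt_goldenRatio
  rw [goldenMonomial.log_eq]
  refine (abs_add_three _ _ _).trans ?_
  rw [abs_mul, abs_mul, abs_mul, abs_of_pos h1', abs_of_pos h2', abs_of_pos h3']
  calc _ ≤ R * (7 / 10 * log 2) + R * log 2 + R * (8 / 5 * log 2) :=
        add_le_add_three (mul_le_mul (h 0) log_goldenRatio_le h1'.le (by positivity))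
          (mul_le_mul (h 1) le_rfl h2'.le (by positivity))
          (mul_le_mul (h 2) log_three_le h3'.le (by positivity))
    _ = 33 / 10 * log 2 * R := by ring
    _ ≤ _ := by gcongr; linarith

open Real in
theorem abs_log_goldenMonomial_sub_le {n x y R : ℕ} (hn : 0 < n) (hRn : R ≤ n) {r : Fin 3 → ℤ}
    (hr : ∀ i, |r i| ≤ R) :
    |log (goldenMonomial r) -
      (latticeForm n x 1 r * log 2 + latticeForm n y 2 r * log 3) / n| ≤
      |n * log goldenRatio - x * log 2 - y * log 3| := by
  have hn' : (0 : ℝ) < n := by exact_mod_cast hn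
  have h : log (goldenMonomial r) -
      (latticeForm n x 1 r * log 2 + latticeForm n y 2 r * log 3) / n =
      r 0 / n * (n * log goldenRatio - x * log 2 - y * log 3) := by
    rw [goldenMonomial.log_eq, latticeForm_apply, latticeForm_apply]
    push_cast
    field_simp
    ring
  rw [h, abs_mul]
  refine mul_le_of_le_one_left (abs_nonneg _) ?_
  rw [abs_div, Nat.abs_cast, div_le_one hn']
  have : |r 0| ≤ (n : ℤ) := (hr 0).trans (by exact_mod_cast hRn)
  exact_mod_cast this

open Real in
theorem goldenMonomial.eq_zero_of_abs_log_le {L R : ℕ} (hL : 100 ≤ L) (hR : 0 < R)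
    {r : Fin 3 → ℤ} (hr : ∀ i, |r i| ≤ R) {δ : ℝ} (hδ : δ * 2 ^ (88 * (L * R)) ≤ 1)
    (h : |log (goldenMonomial r)| ≤ δ) : r = 0 := by
  have hδ0 : 0 ≤ δ := (abs_nonneg _).trans h
  have h0 : δ * 2 ^ (20 * R) ≤ 1 := by
    refine le_trans (mul_le_mul_of_nonneg_left (pow_le_pow_right₀ (by norm_num) ?_) hδ0) hδ
    nlinarith
  have hδ1 : δ ≤ 1 := by
    refine le_trans ?_ h0
    exact le_mul_of_one_le_right hδ0 (one_le_pow₀ (by norm_num))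
  have h1 : |goldenMonomial r - 1| ≤ 2 * δ := by
    have := abs_exp_sub_one_le (h.trans hδ1)
    rw [exp_log (goldenMonomial.pos r)] at this
    linarith
  have h2 : ∑ i : Fin 2, (((![![1, 0], ![-1, 0]] : Fin 2 → Fin 2 → ℤ) i 0 : ℝ) +
      (![![1, 0], ![-1, 0]] : Fin 2 → Fin 2 → ℤ) i 1 * goldenRatio) * ((1 : ℤ) : ℝ) *
      goldenMonomial ((![r, 0] : Fin 2 → Fin 3 → ℤ) i) = goldenMonomial r - 1 := by
    have h3 : goldenMonomial 0 = 1 := goldenMonomial.eq_one_iff.2 rfl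
    simp [Fin.sum_univ_two, h3, sub_eq_add_neg]
  have h3 := goldenMonomial.sum_eq_zero (![![1, 0], ![-1, 0]] : Fin 2 → Fin 2 → ℤ) (fun _ => 1)
    (![r, 0] : Fin 2 → Fin 3 → ℤ) (N := R) (X := 1) (M := 1)
    (fun i k => by fin_cases i <;> fin_cases k <;> simp) (fun i => by simp)
    (fun i k => by
      fin_cases i
      · exact hr k
      · simp)
    (by
      rw [h2]
      have h36 : goldenRatio ^ R ≤ 2 ^ R :=
        pow_le_pow_left₀ goldenRatio_pos.le goldenRatio_lt_two.le R
      have hg := goldenRatio_pos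
      have h12 : (2 : ℝ) ^ 1 ≤ 2 ^ R := pow_le_pow_right₀ (by norm_num) hR
      have h512 : ((6 * 36 * 2) ^ R : ℝ) ≤ (2 ^ 9) ^ R :=
        pow_le_pow_left₀ (by norm_num) (by norm_num) R
      rw [Fintype.card_fin]
      calc _ ≤ 2 * δ * (6 ^ R * ((2 : ℕ) * (3 * 1 * 1 * (36 ^ R * 2 ^ R)))) := by gcongr
        _ = 12 * δ * (6 * 36 * 2) ^ R := by push_cast; rw [mul_pow, mul_pow]; ring
        _ ≤ 12 * δ * (2 ^ 9) ^ R := by gcongr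
        _ ≤ 1 / 2 * (δ * ((2 ^ R) ^ 5 * (2 ^ 9) ^ R)) := by
          have h32 : (32 : ℝ) ≤ (2 ^ R) ^ 5 := by
            calc (32 : ℝ) = 2 ^ 5 := by norm_num
              _ ≤ _ := by gcongr; linarith
          have h9 : 0 ≤ δ * (2 ^ 9) ^ R := by positivity
          generalize ((2 : ℝ) ^ 9) ^ R = w at h9 ⊢
          have := mul_le_mul_of_nonneg_right h32 h9
          linarith
        _ ≤ 1 / 2 * (δ * 2 ^ (20 * R)) := by
          gcongr 1 / 2 * (δ * ?_)
          rw [← pow_mul, ← pow_mul, ← pow_add]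
          exact pow_le_pow_right₀ (by norm_num) (by omega)
        _ < 1 := by linarith)
  rw [h2, sub_eq_zero] at h3
  exact goldenMonomial.eq_one_iff.1 h3

open Real in
/-- The auxiliary polynomial: if `n log φ - x log 2 - y log 3` is very small, a nonzero polynomial
of small degree vanishes at all the points `(n r₁ + x r₀, n r₂ + y r₀)` with `r` well inside a
box. -/
theorem exists_eliminant_latticeForm {n x y L R : ℕ} (hL : 100 ≤ L) (hLR : L ≤ R)
    (hn : 0 < n) (hRn : R ≤ n) (hx : (x : ℝ) ≤ 7 / 10 * n) (hy : (y : ℝ) ≤ 44 / 100 * n)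
    (hH : (4 * n * R) ^ (80 * R) ≤ 2 ^ (12 * (L * R)))
    (hδ : |n * log goldenRatio - x * log 2 - y * log 3| * 2 ^ (88 * (L * R)) ≤ 1) :
    ∃ D : MvPolynomial (Fin 2) ℝ, D ≠ 0 ∧ D.totalDegree ≤ (2 * L + 1) * (80 * R) ∧
      ∀ r : Fin 3 → ℤ, (∀ i < 2 * L + 1, ∀ j, |(r + i • Pi.single 0 1 : Fin 3 → ℤ) j| ≤ (R : ℤ)) →
        MvPolynomial.eval ![(latticeForm n x 1 r : ℝ), (latticeForm n y 2 r : ℝ)] D = 0 := by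
  classical
  set δ := |n * log goldenRatio - x * log 2 - y * log 3| with hδdef
  set K := 80 * R with hK
  set P : Set (Fin 3 → ℤ) := {r | ∀ i, |r i| ≤ R} with hP
  set Z₁ := latticeForm n x 1 with hZ₁
  set Z₂ := latticeForm n y 2 with hZ₂
  have hn' : (0 : ℝ) < n := by exact_mod_cast hn
  have hR0 : 0 < R := by omega
  have hR' : (100 : ℝ) ≤ R := by exact_mod_cast hL.trans hLR
  have hl2 := log_two_lt_d9
  have hl2' : 0 < log 2 := log_pos (by norm_num)
  have hl3 : 1 ≤ log 3 := by
    rw [le_log_iff_exp_le (by norm_num)]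
    linarith [exp_one_lt_d9]
  have hδ0 : 0 ≤ δ := abs_nonneg _
  have hδ1 : δ ≤ 1 := le_trans (le_mul_of_one_le_right hδ0 (one_le_pow₀ (by norm_num))) hδ
  have hZ₁le : ∀ r ∈ P, |(Z₁ r : ℝ)| ≤ 17 / 10 * n * R := fun r hr =>
    (abs_latticeForm_le hx 1 hr).trans_eq (by ring)
  have hZ₂le : ∀ r ∈ P, |(Z₂ r : ℝ)| ≤ 144 / 100 * n * R := fun r hr =>
    (abs_latticeForm_le hy 2 hr).trans_eq (by ring)
  have hlog : ∀ r ∈ P, |log (goldenMonomial r) - (Z₁ r * log 2 + Z₂ r * log 3) / n| ≤ δ :=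
    fun r hr => abs_log_goldenMonomial_sub_le hn hRn hr
  have hu : ∀ r ∈ P, |(Z₁ r * log 2 + Z₂ r * log 3) / n| ≤ 23 / 10 * R := by
    intro r hr
    have h1 := abs_log_goldenMonomial_le hr
    have h2 := hlog r hr
    rw [abs_sub_comm] at h2
    have := abs_sub_abs_le_abs_sub ((Z₁ r * log 2 + Z₂ r * log 3) / n) (log (goldenMonomial r))
    linarith
  let Ω := Σ i : Fin K, Fin ((i : ℕ) + 1)
  have hK0 : 0 < K := by omega
  have : Nonempty Ω := ⟨⟨⟨0, hK0⟩, 0⟩⟩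
  have hcard : Fintype.card Ω * 2 = K * (K + 1) := by
    rw [Fintype.card_sigma]
    simp only [Fintype.card_fin]
    rw [Fin.sum_univ_eq_sum_range (fun i => i + 1) K]
    generalize K = m
    induction m with
    | zero => simp
    | succ m ih => rw [Finset.sum_range_succ, add_mul, ih]; ring
  have hkj : ∀ ω : Ω, ((ω.1 : ℕ) - ω.2) + (ω.2 : ℕ) = ω.1 := fun ω => by
    have := ω.2.2; omega
  set ρ : ℝ := 23 / 10 * R with hρ
  have hρ0 : 0 < ρ := by positivity
  choose b hb hbsum using fun ω : Ω => exists_coeff_pow_mul_add_pow (17 / 10 * n * R : ℝ)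
    (n * ρ / log 3) (-(17 / 10 * n * R * log 2 / log 3))
    (k := (ω.1 : ℕ) - ω.2) (j := ω.2) (K := K) ((hkj ω).trans_lt ω.1.2)
  obtain ⟨c, hc, hvan⟩ := exists_golden_poly (Ω := Ω) (J := K) hL hLR
    (by rw [← hK]; nlinarith) (by rw [← hK]; nlinarith) le_rfl hδ (ρ := ρ)
    (by rw [abs_of_pos hρ0]) (P := P) (fun r hr => hr)
    (fun ω r => Z₁ r ^ ((ω.1 : ℕ) - ω.2) * Z₂ r ^ (ω.2 : ℕ)) b
    (fun r => (Z₁ r * log 2 + Z₂ r * log 3) / n / ρ) (fun r => Z₁ r / (17 / 10 * n * R))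
    (fun r hr => by
      rw [abs_div, abs_of_pos hρ0]
      exact div_le_one_of_le₀ (hu r hr) hρ0.le)
    (fun r hr => by
      have h0 : (0 : ℝ) < 17 / 10 * n * R := by positivity
      rw [abs_div, abs_of_pos h0]
      exact div_le_one_of_le₀ (hZ₁le r hr) h0.le)
    (fun r hr ω => by
      rw [← hK, ← hb]
      push_cast
      congr 2
      · field_simp
      · field_simp
        ring)
    (fun ω => by
      refine (hbsum ω).trans ?_
      have h4 : (1 : ℝ) ≤ 4 * n * R := by
        have : (1 : ℝ) ≤ n := by exact_mod_cast hn
        nlinarith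
      have h1 : |(17 / 10 * n * R : ℝ)| ≤ 4 * n * R := by
        rw [abs_of_pos (by positivity)]
        gcongr
        norm_num
      have h2 : |n * ρ / log 3| + |-(17 / 10 * n * R * log 2 / log 3)| ≤ 4 * n * R := by
        rw [abs_neg, abs_of_pos (by positivity), abs_of_pos (by positivity), ← add_div,
          div_le_iff₀ (by positivity), hρ]
        calc n * (23 / 10 * R) + 17 / 10 * n * R * log 2
            = n * R * (23 / 10 + 17 / 10 * log 2) := by ring
          _ ≤ n * R * (4 * log 3) := by gcongr; linarith
          _ = _ := by ring
      calc _ ≤ (4 * n * R : ℝ) ^ ((ω.1 : ℕ) - ω.2) * (4 * n * R) ^ (ω.2 : ℕ) := by gcongr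
        _ = (4 * n * R : ℝ) ^ (ω.1 : ℕ) := by rw [← pow_add, hkj]
        _ ≤ (4 * n * R : ℝ) ^ (80 * R) := pow_le_pow_right₀ h4 ω.1.2.le
        _ ≤ _ := by exact_mod_cast hH)
    (fun r hr => by
      rw [mul_div_cancel₀ _ hρ0.ne']
      exact hlog r hr)
  obtain ⟨D, hD, hdeg, hroot⟩ := MvPolynomial.exists_eliminant_monomial hc
    (e := fun ω : Ω => Finsupp.single (0 : Fin 2) ((ω.1 : ℕ) - ω.2) +
      Finsupp.single (1 : Fin 2) (ω.2 : ℕ)) (K := K)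
    (fun ω ω' h => by
      have h1 : (ω.1 : ℕ) - ω.2 = ω'.1 - ω'.2 := by simpa using DFunLike.congr_fun h 0
      have h2 : (ω.2 : ℕ) = ω'.2 := by simpa using DFunLike.congr_fun h 1
      have h3 := hkj ω
      have h4 := hkj ω'
      obtain ⟨i, j⟩ := ω
      obtain ⟨i', j'⟩ := ω'
      simp only at h1 h2 h3 h4
      obtain rfl : i = i' := Fin.ext (by omega)
      rw [Fin.ext h2])
    (fun ω => by
      rw [map_add, Finsupp.degree_single, Finsupp.degree_single, hkj]
      exact ω.1.2.le)
    (z := fun l => goldenRatio ^ ((l : ℤ) - L))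
    (fun l l' h => by
      have := zpow_right_injective₀ goldenRatio_pos one_lt_goldenRatio.ne' h
      exact Fin.ext (by simpa using this))
    ![(x : ℝ), (y : ℝ)]
  refine ⟨D, hD, hdeg, fun r hr => hroot _ (fun l => goldenMonomial r ^ ((l : ℤ) - L))
    (fun l => (zpow_pos (goldenMonomial.pos r) _).ne') fun i hi => ?_⟩
  rw [← hvan _ (hr i hi)]
  refine Finset.sum_congr rfl fun ω _ => Finset.sum_congr rfl fun l _ => ?_
  have h0 : goldenMonomial (Pi.single 0 1) = goldenRatio := by simp [goldenMonomial]
  have h1 : goldenMonomial (r + i • Pi.single 0 1) ^ ((l : ℤ) - L) =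
      (goldenRatio ^ ((l : ℤ) - L)) ^ i * goldenMonomial r ^ ((l : ℤ) - L) := by
    rw [goldenMonomial.add, mul_zpow, ← natCast_zsmul, ← goldenMonomial.smul_zpow, mul_comm,
      ← zpow_natCast, ← zpow_mul, ← zpow_mul, mul_comm (i : ℤ), h0]
  have h2 : ((Z₁ (r + i • Pi.single 0 1) : ℤ) : ℝ) = Z₁ r + i * x := by
    rw [map_add, map_nsmul, hZ₁, latticeForm_apply n x 1 (Pi.single 0 1)]
    simp
  have h3 : ((Z₂ (r + i • Pi.single 0 1) : ℤ) : ℝ) = Z₂ r + i * y := by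
    rw [map_add, map_nsmul, hZ₂, latticeForm_apply n y 2 (Pi.single 0 1)]
    simp
  rw [h1, Int.cast_mul, Int.cast_pow, Int.cast_pow, h2, h3, Finsupp.prod_fintype _ _ (by simp),
    Fin.prod_univ_two]
  simp

open Real in
/-- The main lower bound for `|n log φ - x log 2 - y log 3|`, with free parameters. -/
theorem one_lt_abs_linear_form_mul {n x y L R p s : ℕ} (hL : 100 ≤ L) (hLR : L ≤ R)
    (hn : 0 < n) (hRn : R ≤ n) (hx : (x : ℝ) ≤ 7 / 10 * n) (hy : (y : ℝ) ≤ 44 / 100 * n)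
    (hH : (4 * n * R) ^ (80 * R) ≤ 2 ^ (12 * (L * R)))
    (hp : ((2 * L + 1) * (80 * R)) ^ 2 < p ^ 3) (hs : (2 * L + 1) * (80 * R) < s ^ 3)
    (hpR : p + (2 * L + 1) * s ≤ R) (hs1 : 1 ≤ s) (hsp : s ≤ p) :
    1 < |n * log goldenRatio - x * log 2 - y * log 3| * 2 ^ (88 * (L * R)) := by
  classical
  by_contra! hδ
  set δ := |n * log goldenRatio - x * log 2 - y * log 3| with hδdef
  set K := 80 * R with hK
  set M := (2 * L + 1) * K with hM
  set P : Set (Fin 3 → ℤ) := {r | ∀ i, |r i| ≤ R} with hP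
  set Z₁ := latticeForm n x 1 with hZ₁
  set Z₂ := latticeForm n y 2 with hZ₂
  have hn' : (0 : ℝ) < n := by exact_mod_cast hn
  have hR0 : 0 < R := by omega
  have hR' : (100 : ℝ) ≤ R := by exact_mod_cast hL.trans hLR
  have hl2 := log_two_lt_d9
  have hl2' : 0 < log 2 := log_pos (by norm_num)
  have hl3 : 1 ≤ log 3 := by
    rw [le_log_iff_exp_le (by norm_num)]
    linarith [exp_one_lt_d9]
  have hδ0 : 0 ≤ δ := abs_nonneg _
  have hδ1 : δ ≤ 1 := le_trans (le_mul_of_one_le_right hδ0 (one_le_pow₀ (by norm_num))) hδ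
  have hZ₁le : ∀ r ∈ P, |(Z₁ r : ℝ)| ≤ 17 / 10 * n * R := fun r hr =>
    (abs_latticeForm_le hx 1 hr).trans_eq (by ring)
  have hZ₂le : ∀ r ∈ P, |(Z₂ r : ℝ)| ≤ 144 / 100 * n * R := fun r hr =>
    (abs_latticeForm_le hy 2 hr).trans_eq (by ring)
  have hlog : ∀ r ∈ P, |log (goldenMonomial r) - (Z₁ r * log 2 + Z₂ r * log 3) / n| ≤ δ :=
    fun r hr => abs_log_goldenMonomial_sub_le hn hRn hr
  have hu : ∀ r ∈ P, |(Z₁ r * log 2 + Z₂ r * log 3) / n| ≤ 23 / 10 * R := by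
    intro r hr
    have h1 := abs_log_goldenMonomial_le hr
    have h2 := hlog r hr
    rw [abs_sub_comm] at h2
    have := abs_sub_abs_le_abs_sub ((Z₁ r * log 2 + Z₂ r * log 3) / n) (log (goldenMonomial r))
    linarith
  have hker : ∀ r ∈ P, Z₁ r = 0 → Z₂ r = 0 → r = 0 := by
    intro r hr h1 h2
    refine goldenMonomial.eq_zero_of_abs_log_le hL hR0 hr hδ ?_
    simpa [h1, h2] using hlog r hr
  obtain ⟨D, hD, hdeg, hroot⟩ := exists_eliminant_latticeForm hL hLR hn hRn hx hy hH hδ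
  have hbox : ∀ {r : Fin 3 → ℤ} {a b : ℤ}, (∀ i, a ≤ r i ∧ r i < b) → -R ≤ a → b ≤ R + 1 →
      r ∈ P := fun hr ha hb i => abs_le.2 ⟨by linarith [(hr i).1], by linarith [(hr i).2]⟩
  let box : ℕ → Finset (Fin 3 → ℤ) := fun q => Fintype.piFinset fun _ => Finset.Ico 0 (q : ℤ)
  have hboxmem : ∀ {q : ℕ} {r : Fin 3 → ℤ}, r ∈ box q ↔ ∀ i, 0 ≤ r i ∧ r i < q := by
    intro q r
    simp [box]
  have hboxcard : ∀ q, (box q).card = q ^ 3 := fun q => by simp [box]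
  have hs0 : (p : ℤ) ≤ R := by
    have : p ≤ R := by nlinarith
    exact_mod_cast this
  have hsN : (p : ℤ) + (2 * L + 1) * s ≤ R := by exact_mod_cast hpR
  have hinj : ∀ r ∈ box p, ∀ t ∈ box p, Z₁ r = Z₁ t → Z₂ r = Z₂ t → r = t := by
    intro r hr t ht h1 h2
    rw [hboxmem] at hr ht
    refine sub_eq_zero.1 (hker _ (hbox (a := -p + 1) (b := p) (fun i => ?_) (by omega) (by omega))
      (by rw [map_sub, h1, sub_self]) (by rw [map_sub, h2, sub_self]))
    have := hr i
    have := ht i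
    rw [Pi.sub_apply]
    omega
  let η : (Fin 3 → ℤ) → Fin 2 → ℝ := fun r => ![(Z₁ r : ℝ), (Z₂ r : ℝ)]
  have hη : ∀ {r t}, η r = η t → Z₁ r = Z₁ t ∧ Z₂ r = Z₂ t := fun {r t} h =>
    ⟨Int.cast_injective (α := ℝ) (congrFun h 0), Int.cast_injective (α := ℝ) (congrFun h 1)⟩
  have hηadd : ∀ r t, η (r + t) = η r + η t := fun r t => by
    ext i
    fin_cases i <;> simp [η]
  let τ : Fin 3 → ℤ := fun _ => p
  obtain ⟨a, b, hab, hΓ⟩ := MvPolynomial.exists_linear_card_le_of_eval_add_eq_zero hD hdeg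
    ((box p).image fun r => η (r - τ)) ((box p).image η)
    (Finset.mem_image.2 ⟨0, hboxmem.2 fun i => ⟨le_rfl, by
      show (0 : ℤ) < p
      exact_mod_cast hs1.trans hsp⟩, by ext i; fin_cases i <;> simp [η]⟩)
    (by
      rw [Finset.card_image_of_injOn, hboxcard]
      · exact hp
      · intro r hr t ht h
        obtain ⟨h1, h2⟩ := hη h
        rw [map_sub, map_sub, sub_left_inj] at h1 h2
        exact hinj r hr t ht h1 h2)
    (by
      intro v hv w hw
      obtain ⟨r, hr, rfl⟩ := Finset.mem_image.1 hv
      obtain ⟨t, ht, rfl⟩ := Finset.mem_image.1 hw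
      rw [hboxmem] at hr ht
      rw [← hηadd]
      refine hroot _ fun i hi => hbox (a := -R) (b := R + 1) (fun k => ?_) le_rfl le_rfl
      have h1 := hr k
      have h2 := ht k
      have h3 : (i : ℤ) ≤ (2 * L + 1) * s := by
        have : i ≤ (2 * L + 1) * s := by nlinarith
        exact_mod_cast this
      have h4 : 0 ≤ (i • Pi.single (M := fun _ : Fin 3 => ℤ) 0 1 : Fin 3 → ℤ) k ∧
          (i • Pi.single (M := fun _ : Fin 3 => ℤ) 0 1 : Fin 3 → ℤ) k ≤ i := by
        rw [Pi.smul_apply]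
        by_cases hk : k = 0
        · subst hk; simp
        · simp [Pi.single_eq_of_ne hk]
      rw [Pi.add_apply, Pi.add_apply, Pi.sub_apply]
      simp only [τ]
      omega)
  let f : (Fin 3 → ℤ) → ℝ := fun r => a * Z₁ r + b * Z₂ r
  have hfsub : ∀ r t, f (r - t) = f r - f t := fun r t => by simp [f]; ring
  have hfadd : ∀ r t, f (r + t) = f r + f t := fun r t => by simp [f]; ring
  have hfsmul : ∀ (i : ℕ) t, f (i • t) = i * f t := fun i t => by
    have h (Z : (Fin 3 → ℤ) →+ ℤ) : (Z (i • t) : ℝ) = i * Z t := by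
      rw [map_nsmul, nsmul_eq_mul, Int.cast_mul, Int.cast_natCast]
    simp only [f, h]
    ring
  have hfcard : ((box p).image f).card ≤ M := by
    rw [Finset.image_image] at hΓ
    exact hΓ
  have hboxsp : box s ⊆ box p := fun r hr => by
    rw [hboxmem] at hr ⊢
    exact fun i => ⟨(hr i).1, (hr i).2.trans_le (by exact_mod_cast hsp)⟩
  obtain ⟨v, -, hv⟩ := Finset.exists_lt_card_fiber_of_mul_lt_card_of_maps_to
    (s := box p) (t := (box p).image f) (f := f) (n := M)
    (fun r hr => Finset.mem_image_of_mem _ hr) (by rw [hboxcard]; nlinarith)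
  obtain ⟨t₁, ht₁, t₂, ht₂, htne, hteq⟩ := Finset.exists_ne_map_eq_of_card_lt_of_maps_to
    (s := box s) (t := (box p).image f) (f := f) (by rw [hboxcard]; omega)
    (fun r hr => Finset.mem_image_of_mem _ (hboxsp hr))
  obtain ⟨r₀, hr₀⟩ := Finset.card_pos.1 ((Nat.zero_le _).trans_lt hv)
  rw [Finset.mem_filter] at hr₀
  set Φ₀ := (box p).filter fun r => f r = v with hΦ₀
  -- the degenerate case
  have hline : ∀ (Z : (Fin 3 → ℤ) →+ ℤ) (μ : ℝ),
      (∀ r ∈ P, f r = 0 → (Z₁ r * log 2 + Z₂ r * log 3) / n = μ * Z r) →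
      (∀ r ∈ P, |(Z r : ℝ)| ≤ 17 / 10 * n * R) →
      (∀ r, f r = 0 → Z r = 0 → Z₁ r = 0 ∧ Z₂ r = 0) → False := by
    intro Z μ h1 h2 h3
    have := card_le_of_log_near_line (P := {r | r ∈ P ∧ f r = 0}) hL hLR hδ (μ := μ)
      (H := 4 * n * R) (Nat.mul_pos (by omega) hR0) hH (fun r hr => hr.1) Z
      (fun r hr => by rw [← h1 r hr.1 hr.2]; exact hlog r hr.1)
      (fun r hr => by rw [← h1 r hr.1 hr.2]; exact hu r hr.1)
      (fun r hr => by
        have h4 : |(Z r : ℝ)| ≤ 4 * n * R := (h2 r hr.1).trans (by gcongr; norm_num)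
        exact_mod_cast h4) (t := t₁ - t₂) (sub_ne_zero.2 htne)
      (Φ := Φ₀.image fun r => r - r₀)
      (by
        intro d hd d' hd' h
        obtain ⟨r, hr, rfl⟩ := Finset.mem_image.1 hd
        obtain ⟨t, ht, rfl⟩ := Finset.mem_image.1 hd'
        rw [hΦ₀, Finset.mem_filter] at hr ht
        rw [map_sub, map_sub, sub_left_inj] at h
        obtain ⟨h5, h6⟩ := h3 (r - t) (by rw [hfsub, hr.2, ht.2, sub_self])
          (by rw [map_sub, h, sub_self])
        rw [map_sub, sub_eq_zero] at h5 h6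
        rw [hinj r hr.1 t ht.1 h5 h6])
      (by
        intro d hd i hi
        obtain ⟨r, hr, rfl⟩ := Finset.mem_image.1 hd
        rw [hΦ₀, Finset.mem_filter] at hr
        refine ⟨hbox (a := -R) (b := R + 1) (fun k => ?_) le_rfl le_rfl, ?_⟩
        · have h5 := hboxmem.1 hr.1 k
          have h6 := hboxmem.1 hr₀.1 k
          have h7 := hboxmem.1 ht₁ k
          have h8 := hboxmem.1 ht₂ k
          have h9 : |(i • (t₁ - t₂)) k| ≤ (2 * L + 1) * s := by
            rw [Pi.smul_apply, nsmul_eq_mul, abs_mul, Nat.abs_cast, Pi.sub_apply]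
            refine mul_le_mul (by exact_mod_cast hi.le) ?_ (abs_nonneg _) (by positivity)
            rw [abs_le]
            constructor <;> linarith
          rw [abs_le] at h9
          rw [Pi.add_apply, Pi.sub_apply]
          constructor <;> linarith
        · rw [hfadd, hfsmul, hfsub, hfsub, hr.2, hr₀.2, hteq]
          ring)
    rw [Finset.card_image_of_injective _ (sub_left_injective)] at this
    exact absurd hv (not_lt.2 this)
  by_cases hb0 : b = 0
  · have ha0 : a ≠ 0 := by simpa [hb0] using hab
    have h1 : ∀ r, f r = 0 → Z₁ r = 0 := by
      intro r hr
      have : a * Z₁ r = 0 := by simpa [f, hb0] using hr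
      exact_mod_cast (mul_eq_zero.1 this).resolve_left ha0
    refine hline Z₂ (log 3 / n) (fun r _ hr => ?_) (fun r hr => (hZ₂le r hr).trans ?_)
      fun r hr h => ⟨h1 r hr, h⟩
    · rw [h1 r hr]
      push_cast
      ring
    · have : (0 : ℝ) ≤ n * R := by positivity
      linarith
  · refine hline Z₁ ((log 2 - a / b * log 3) / n) (fun r _ hr => ?_) hZ₁le fun r hr h => ⟨h, ?_⟩
    · have : (Z₂ r : ℝ) = -(a / b) * Z₁ r := by
        field_simp
        linarith [show a * Z₁ r + b * Z₂ r = 0 from hr]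
      rw [this]
      ring
    · have : b * (Z₂ r : ℝ) = 0 := by simpa [f, h] using hr
      exact_mod_cast (mul_eq_zero.1 this).resolve_left hb0

set_option exponentiation.threshold 1000 in
theorem pow_twenty_le_two_pow {B : ℕ} (hB : 112 ≤ B) : (9600000 * B ^ 2) ^ 20 ≤ 2 ^ (7 * B) := by
  induction B, hB using Nat.le_induction with
  | base => norm_num
  | succ B hB ih =>
    have h : (112 * (B + 1)) ^ 40 ≤ (113 * B) ^ 40 := by gcongr 1; omega
    rw [mul_pow, mul_pow _ B, mul_comm (113 ^ 40)] at h
    have h2 : (113 : ℕ) ^ 40 ≤ 2 ^ 7 * 112 ^ 40 := by norm_num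
    have h3 : 112 ^ 40 * (B + 1) ^ 40 ≤ 112 ^ 40 * (2 ^ 7 * B ^ 40) := by
      calc _ ≤ B ^ 40 * 113 ^ 40 := h
        _ ≤ B ^ 40 * (2 ^ 7 * 112 ^ 40) := by gcongr
        _ = _ := by ring
    have h4 := Nat.le_of_mul_le_mul_left h3 (by positivity)
    calc (9600000 * (B + 1) ^ 2) ^ 20 = 9600000 ^ 20 * (B + 1) ^ 40 := by
          rw [mul_pow, ← pow_mul]
      _ ≤ 9600000 ^ 20 * (2 ^ 7 * B ^ 40) := by gcongr
      _ = 2 ^ 7 * (9600000 * B ^ 2) ^ 20 := by rw [mul_pow _ _ 20, ← pow_mul]; ring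
      _ ≤ 2 ^ 7 * 2 ^ (7 * B) := by gcongr
      _ = _ := by rw [← pow_add]; congr 1; ring

theorem mul_sq_le_two_pow {B : ℕ} (hB : 112 ≤ B) : 2400000 * B ^ 2 ≤ 2 ^ (B - 1) := by
  have h : (2400000 * B ^ 2) ^ 20 ≤ (2 ^ (B - 1)) ^ 20 := by
    calc (2400000 * B ^ 2) ^ 20 ≤ (9600000 * B ^ 2) ^ 20 := by gcongr; norm_num
      _ ≤ 2 ^ (7 * B) := pow_twenty_le_two_pow hB
      _ ≤ _ := by rw [← pow_mul]; exact Nat.pow_le_pow_right (by norm_num) (by omega)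
  exact (Nat.pow_le_pow_iff_left (by norm_num)).1 h

open Real in
/-- An explicit lower bound for a linear form in `log φ`, `log 2` and `log 3`. -/
theorem one_lt_abs_linear_form_mul_two_pow {n x y B : ℕ} (hB : 112 ≤ B) (hn : 2 ^ (B - 1) ≤ n)
    (hnB : n < 2 ^ B) (hx : (x : ℝ) ≤ 7 / 10 * n) (hy : (y : ℝ) ≤ 44 / 100 * n) :
    1 < |n * log goldenRatio - x * log 2 - y * log 3| * 2 ^ (1900800000 * B ^ 3) := by
  have h2 : B ≤ B ^ 2 := Nat.le_self_pow (by norm_num) B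
  have hR := mul_sq_le_two_pow hB
  have h := one_lt_abs_linear_form_mul (n := n) (x := x) (y := y) (L := 9 * B)
    (R := 2400000 * B ^ 2) (p := 2300000 * B ^ 2) (s := 1600 * B) (by omega) (by omega)
    (lt_of_lt_of_le (by positivity) hn) (hR.trans hn) hx hy ?_ ?_ ?_ ?_ (by omega) (by omega)
  · convert h using 3
    ring
  · calc (4 * n * (2400000 * B ^ 2)) ^ (80 * (2400000 * B ^ 2))
        = (n ^ 20 * (9600000 * B ^ 2) ^ 20) ^ (4 * (2400000 * B ^ 2)) := by
          rw [← mul_pow, ← pow_mul]; congr 1 <;> ring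
      _ ≤ ((2 ^ B) ^ 20 * 2 ^ (7 * B)) ^ (4 * (2400000 * B ^ 2)) := by
          exact Nat.pow_le_pow_left (Nat.mul_le_mul (Nat.pow_le_pow_left hnB.le 20)
            (pow_twenty_le_two_pow hB)) _
      _ = _ := by
          rw [← pow_mul, ← pow_add, ← pow_mul]; congr 1; ring
  · have h1 : (2 * (9 * B) + 1) * 112 ≤ 2017 * B := by omega
    have h3 : ((2 * (9 * B) + 1) * (80 * (2400000 * B ^ 2))) * 112 ≤
        2017 * 192000000 * B ^ 3 := by
      calc _ = ((2 * (9 * B) + 1) * 112) * (192000000 * B ^ 2) := by ring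
        _ ≤ (2017 * B) * (192000000 * B ^ 2) := by gcongr
        _ = _ := by ring
    have h4 := Nat.pow_le_pow_left h3 2
    have h5 : 0 < B ^ 6 := by positivity
    have h6 : (2017 * 192000000 * B ^ 3) ^ 2 < (2300000 * B ^ 2) ^ 3 * 112 ^ 2 := by
      ring_nf
      omega
    rw [mul_pow] at h4
    exact lt_of_mul_lt_mul_right (h4.trans_lt h6) (Nat.zero_le _)
  · have h3 : 112 * B ^ 2 ≤ B ^ 3 := by rw [pow_succ' B 2]; gcongr
    ring_nf
    omega
  · ring_nf
    omega

/-- Pigeonhole principle for linear congruences. -/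
theorem exists_int_vector_dvd {ι κ : Type*} [Fintype ι] [Fintype κ] (g : κ → ι → ℤ) (M : κ → ℕ)
    (hM : ∀ k, 0 < M k) {X : ℕ} (hX : ∏ k, M k < (X + 1) ^ Fintype.card ι) :
    ∃ c : ι → ℤ, c ≠ 0 ∧ (∀ i, |c i| ≤ X) ∧ ∀ k, (M k : ℤ) ∣ ∑ i, g k i * c i := by
  classical
  have (k : κ) : NeZero (M k) := ⟨(hM k).ne'⟩
  obtain ⟨a, b, hab, h⟩ := Fintype.exists_ne_map_eq_of_card_lt
    (fun (a : ι → Fin (X + 1)) (k : κ) => ((∑ i, g k i * ((a i : ℕ) : ℤ) : ℤ) : ZMod (M k)))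
    (by simpa [ZMod.card] using hX)
  refine ⟨fun i => (a i : ℕ) - (b i : ℕ), fun h0 => hab ?_, fun i => ?_, fun k => ?_⟩
  · ext i
    have := congrFun h0 i
    simp only [Pi.zero_apply] at this
    omega
  · have h1 := (a i).2
    have h2 := (b i).2
    simp only [abs_le]
    omega
  · rw [← ZMod.intCast_zmod_eq_zero_iff_dvd, ← sub_eq_zero.2 (congrFun h k)]
    push_cast
    simp only [mul_sub, Finset.sum_sub_distrib]

theorem choose_mul_pow_eq_sum {O : Type*} [CommRing O] (Y : O) (t k : ℕ) :
    (t.choose k : O) * Y ^ t =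
      ∑ d ∈ Finset.range (t + 1), t.choose d * (d.choose k * Y ^ k * (Y - 1) ^ (d - k)) := by
  rcases lt_or_ge t k with h | h
  · rw [Nat.choose_eq_zero_of_lt h, Nat.cast_zero, zero_mul]
    refine (Finset.sum_eq_zero fun d hd => ?_).symm
    rw [Nat.choose_eq_zero_of_lt (n := d) (by rw [Finset.mem_range] at hd; omega)]
    simp
  · obtain ⟨m, rfl⟩ := Nat.exists_eq_add_of_le h
    rw [show k + m + 1 = k + (m + 1) by ring, Finset.sum_range_add, Finset.sum_eq_zero, zero_add]
    · have h1 : Y ^ (k + m) = ∑ j ∈ Finset.range (m + 1), Y ^ k * ((Y - 1) ^ j * m.choose j) := by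
        rw [pow_add, ← Finset.mul_sum]
        congr 1
        conv_lhs => rw [← sub_add_cancel Y 1, add_pow]
        simp
      rw [h1, Finset.mul_sum]
      refine Finset.sum_congr rfl fun j hj => ?_
      have h2 := Nat.choose_mul (n := k + m) (k := k + j) (s := k) (by omega)
      rw [Nat.add_sub_cancel_left, Nat.add_sub_cancel_left] at h2
      have h3 : ((k + m).choose (k + j) : O) * (k + j).choose k =
          (k + m).choose k * m.choose j := by
        rw [← Nat.cast_mul, h2, Nat.cast_mul]
      rw [Nat.add_sub_cancel_left]
      linear_combination -(Y ^ k * (Y - 1) ^ j) * h3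
    · intro d hd
      rw [Nat.choose_eq_zero_of_lt (n := d) (Finset.mem_range.1 hd)]
      simp

theorem exists_eq_add_mul_of_mem_adjoin {O : Type*} [CommRing O] {α : O} (hα : α ^ 2 = α + 1)
    {x : O} (hx : x ∈ Algebra.adjoin ℤ {α}) : ∃ a b : ℤ, x = a + b * α := by
  induction hx using Algebra.adjoin_induction with
  | mem x hx => exact ⟨0, 1, by simp [Set.mem_singleton_iff.1 hx]⟩
  | algebraMap r => exact ⟨r, 0, by simp⟩
  | add x y _ _ hx hy =>
    obtain ⟨a, b, rfl⟩ := hx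
    obtain ⟨c, d, rfl⟩ := hy
    exact ⟨a + c, b + d, by push_cast; ring⟩
  | mul x y _ _ hx hy =>
    obtain ⟨a, b, rfl⟩ := hx
    obtain ⟨c, d, rfl⟩ := hy
    exact ⟨a * c + b * d, a * d + b * c + b * d, by
      push_cast
      linear_combination (b * d : O) * hα⟩

theorem two_mul_sum_range_sub (J w : ℕ) :
    2 * ∑ d ∈ Finset.range (J + w), (w - (d - J)) = 2 * J * w + w ^ 2 + w := by
  have h (w : ℕ) : 2 * ∑ i ∈ Finset.range w, (w - i) = w ^ 2 + w := by
    induction w with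
    | zero => simp
    | succ w ih =>
      rw [Finset.sum_range_succ', mul_add]
      simp only [Nat.add_sub_add_right]
      rw [ih]
      simp
      ring
  rw [Finset.sum_range_add, mul_add]
  simp only [Nat.add_sub_cancel_left]
  rw [h, Finset.sum_congr rfl (g := fun _ => w) fun d hd => by
    rw [Finset.mem_range] at hd; omega]
  simp
  ring

/-- Existence of an exponential polynomial, with small coefficients in `ℤ[α]`, all of whose values
at natural numbers are divisible by `p ^ w`. -/
theorem exists_exp_poly_dvd {O : Type*} [CommRing O] {α : O} (hα : α ^ 2 = α + 1)
    {p w J L X : ℕ} (hp : 0 < p) (hJ : 0 < J) {E e : O} (hE : E ∈ Algebra.adjoin ℤ {α})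
    (he : e ∈ Algebra.adjoin ℤ {α}) (hEe : E = 1 + p * e)
    (hX : p ^ (2 * J * w + w ^ 2) < (X + 1) ^ (2 * (J * L))) :
    ∃ c : Fin J × Fin L × Fin 2 → ℤ, c ≠ 0 ∧ (∀ i, |c i| ≤ X) ∧
      ∀ t : ℕ, (p : O) ^ w ∣
        ∑ i, c i * α ^ (i.2.2 : ℕ) * (t.choose i.1 * (E ^ (i.2.1 : ℕ)) ^ t) := by
  have hα' : α ∈ Algebra.adjoin ℤ {α} := Algebra.subset_adjoin rfl
  have hEl (l : ℕ) : ∃ f ∈ Algebra.adjoin ℤ {α}, E ^ l - 1 = p * f := by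
    refine ⟨e * ∑ i ∈ Finset.range l, E ^ i, mul_mem he (sum_mem fun i _ => pow_mem hE _), ?_⟩
    rw [← mul_geom_sum, hEe]
    ring
  choose f hf hEf using hEl
  have hz (d : ℕ) (i : Fin J × Fin L × Fin 2) : ∃ a b : ℤ,
      α ^ (i.2.2 : ℕ) * (d.choose i.1 * (E ^ (i.2.1 : ℕ)) ^ (i.1 : ℕ) *
        (E ^ (i.2.1 : ℕ) - 1) ^ (d - i.1)) = p ^ (d - (J - 1)) * (a + b * α) := by
    obtain ⟨a, b, hab⟩ := exists_eq_add_mul_of_mem_adjoin hα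
      (x := α ^ (i.2.2 : ℕ) * (d.choose i.1 * (E ^ (i.2.1 : ℕ)) ^ (i.1 : ℕ) *
        (p ^ ((d - i.1) - (d - (J - 1))) * f i.2.1 ^ (d - i.1))))
      (mul_mem (pow_mem hα' _) (mul_mem (mul_mem (natCast_mem _ _) (pow_mem (pow_mem hE _) _))
        (mul_mem (pow_mem (natCast_mem _ _) _) (pow_mem (hf _) _))))
    refine ⟨a, b, ?_⟩
    have h : d - (i.1 : ℕ) = (d - (J - 1)) + ((d - i.1) - (d - (J - 1))) := by
      have := i.1.2
      omega
    rw [← hab, hEf, mul_pow]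
    conv_lhs => rw [h, pow_add (p : O), ← h]
    ring
  choose a b hab using hz
  obtain ⟨c, hc0, hcX, hc⟩ := exists_int_vector_dvd
    (κ := Fin (J - 1 + w) × Fin 2) (fun k i => if k.2 = 0 then a k.1 i else b k.1 i)
    (fun k => p ^ (w - ((k.1 : ℕ) - (J - 1)))) (fun k => by positivity) (X := X) (by
      rw [Finset.prod_pow_eq_pow_sum, Fintype.sum_prod_type]
      simp only [Finset.sum_const, Finset.card_univ, Fintype.card_fin, smul_eq_mul,
        Fintype.card_prod]
      rw [← Finset.mul_sum, Fin.sum_univ_eq_sum_range (fun d => w - (d - (J - 1))),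
        two_mul_sum_range_sub, show J * (L * 2) = 2 * (J * L) by ring]
      refine lt_of_le_of_lt (Nat.pow_le_pow_right hp ?_) hX
      obtain ⟨J, rfl⟩ := Nat.exists_eq_add_of_le' hJ
      simp only [Nat.add_sub_cancel]
      nlinarith)
  refine ⟨c, hc0, hcX, fun t => ?_⟩
  have h1 : ∑ i, c i * α ^ (i.2.2 : ℕ) * (t.choose i.1 * (E ^ (i.2.1 : ℕ)) ^ t) =
      ∑ d ∈ Finset.range (t + 1), t.choose d * (p ^ (d - (J - 1)) *
        ((∑ i, a d i * c i : ℤ) + (∑ i, b d i * c i : ℤ) * α)) := by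
    simp only [choose_mul_pow_eq_sum, Finset.mul_sum]
    rw [Finset.sum_comm]
    refine Finset.sum_congr rfl fun d _ => ?_
    push_cast
    rw [Finset.sum_mul, ← Finset.sum_add_distrib, Finset.mul_sum, Finset.mul_sum]
    refine Finset.sum_congr rfl fun i _ => ?_
    linear_combination (c i * t.choose d : O) * hab d i
  rw [h1]
  refine Finset.dvd_sum fun d _ => dvd_mul_of_dvd_right ?_ _
  rcases lt_or_ge d (J - 1 + w) with hd | hd
  · have h2 := fun x => (Int.cast_dvd_cast (α := O) _ _ (hc (⟨d, hd⟩, x)))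
    have h3 := h2 0
    have h4 := h2 1
    simp only [if_true, one_ne_zero, if_false, Nat.cast_pow, Int.cast_pow,
      Int.cast_natCast] at h3 h4
    have h5 : (p : O) ^ w ∣ p ^ (d - (J - 1)) * p ^ (w - (d - (J - 1))) := by
      rw [← pow_add]
      exact pow_dvd_pow _ (by omega)
    exact h5.trans (mul_dvd_mul_left _ (dvd_add h3 (h4.mul_right _)))
  · exact dvd_mul_of_dvd_left (pow_dvd_pow _ (by omega)) _

theorem eq_zero_of_sum_mul_choose_eq_zero {F : Type*} [Field F] {J : ℕ} {c : Fin J → F}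
    (h : ∀ t : ℕ, ∑ k, c k * t.choose k = 0) : c = 0 := by
  have (t : ℕ) : ∀ ht : t < J, c ⟨t, ht⟩ = 0 := by
    induction t using Nat.strong_induction_on with
    | _ t ih =>
      intro ht
      have h1 := h t
      rw [Finset.sum_eq_single ⟨t, ht⟩] at h1
      · simpa using h1
      · intro k _ hk
        rcases lt_or_ge (k : ℕ) t with hkt | hkt
        · rw [show c k = 0 from ih k hkt k.2, zero_mul]
        · rw [Nat.choose_eq_zero_of_lt, Nat.cast_zero, mul_zero]
          exact lt_of_le_of_ne hkt fun h => hk (Fin.ext h.symm)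
      · simp
  ext k
  exact this k k.2

open Polynomial in
/-- Zero estimate for exponential polynomials written in the binomial basis. -/
theorem exists_sum_choose_mul_pow_ne_zero {F : Type*} [Field F] [CharZero F] {J L R S m : ℕ}
    {c : Fin J → Fin L → F} (hc : c ≠ 0) {z : Fin L → F} (hz : Function.Injective z)
    (hz0 : ∀ l, z l ≠ 0) (hJ : 0 < J) (hL : 0 < L) (hRS : L * J ≤ R * S) (hRm : R ≤ m)
    {y : ℕ → Fin L → F} (hy : ∀ s l, y s l ≠ 0) :
    ∃ r < R + L, ∃ s < S, ∑ l, (∑ k, c k l * (r + s * m).choose k) * z l ^ r * y s l ≠ 0 := by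
  classical
  by_contra! h
  let P (l : Fin L) : F[X] := ∑ k : Fin J, C (c k l / (k : ℕ).factorial) * descPochhammer F k
  have hPeval (l : Fin L) (t : ℕ) : (P l).eval (t : F) = ∑ k, c k l * t.choose k := by
    simp only [P, eval_finsetSum, eval_mul, eval_C, descPochhammer_eval_eq_descFactorial]
    refine Finset.sum_congr rfl fun k _ => ?_
    rw [Nat.descFactorial_eq_factorial_mul_choose, Nat.cast_mul]
    have : ((k : ℕ).factorial : F) ≠ 0 := by exact_mod_cast Nat.factorial_ne_zero _
    field_simp
  have hPdeg (l : Fin L) : (P l).natDegree ≤ J - 1 := by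
    refine natDegree_sum_le_of_forall_le _ _ fun k _ => (natDegree_C_mul_le _ _).trans ?_
    rw [descPochhammer_natDegree]
    have := k.2
    omega
  let p (l : Fin L) : MvPolynomial Unit F := aeval (MvPolynomial.X ()) (P l)
  have hpeval (l : Fin L) (η : Unit → F) : MvPolynomial.eval η (p l) = (P l).eval (η ()) := by
    simp only [p]
    rw [aeval_def, hom_eval₂, MvPolynomial.eval_X, MvPolynomial.algebraMap_eq,
      show (MvPolynomial.eval η).comp MvPolynomial.C = RingHom.id F by ext; simp, eval₂_id]
  have hp : ∃ l, p l ≠ 0 := by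
    by_contra! hp
    refine hc ?_
    ext k l
    have := eq_zero_of_sum_mul_choose_eq_zero (c := fun k => c k l) fun t => by
      rw [← hPeval, ← hpeval l fun _ => (t : F), hp, map_zero]
    exact congrFun this k
  have hpdeg (l : Fin L) : (p l).totalDegree ≤ J - 1 := by
    simp only [p]
    rw [aeval_eq_sum_range]
    refine MvPolynomial.totalDegree_finsetSum_le fun i hi => ?_
    refine (MvPolynomial.totalDegree_smul_le _ _).trans ?_
    rw [MvPolynomial.totalDegree_X_pow]
    have := hPdeg l
    rw [Finset.mem_range] at hi
    omega
  obtain ⟨D, hD, hDdeg, hroot⟩ := MvPolynomial.exists_eliminant hp hpdeg hz (fun _ => (1 : F))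
  have hcard := MvPolynomial.card_le_totalDegree_of_unit hD
    ((Finset.range R ×ˢ Finset.range S).image fun x => ((x.1 + x.2 * m : ℕ) : F)) (by
      intro t ht
      obtain ⟨⟨r, s⟩, hrs, rfl⟩ := Finset.mem_image.1 ht
      rw [Finset.mem_product, Finset.mem_range, Finset.mem_range] at hrs
      refine hroot _ (fun l => z l ^ r * y s l) (fun l => mul_ne_zero (pow_ne_zero _ (hz0 l))
        (hy s l)) fun i hi => ?_
      rw [← h (r + i) (by omega) s hrs.2]
      refine Finset.sum_congr rfl fun l _ => ?_
      rw [hpeval, ← hPeval, pow_add]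
      simp only [Pi.add_apply, Pi.smul_apply, smul_eq_mul, mul_one]
      rw [show ((r + s * m : ℕ) : F) + i = ((r + i + s * m : ℕ) : F) by push_cast; ring]
      ring)
  rw [Finset.card_image_of_injOn, Finset.card_product, Finset.card_range,
    Finset.card_range] at hcard
  · have : L * (J - 1) < L * J := by gcongr; omega
    omega
  · rintro ⟨r, s⟩ hrs ⟨r', s'⟩ hrs' heq
    simp only [Finset.coe_product, Finset.coe_range, Set.mem_prod, Set.mem_Iio] at hrs hrs'
    have heq : r + s * m = r' + s' * m := Nat.cast_injective (R := F) heq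
    have h1 : r = r' := by
      have := congrArg (· % m) heq
      simpa [Nat.mod_eq_of_lt (hrs.1.trans_le hRm),
        Nat.mod_eq_of_lt (hrs'.1.trans_le hRm)] using this
    subst h1
    have : s = s' := by
      rcases Nat.eq_of_mul_eq_mul_right (by omega : 0 < m) (by omega : s * m = s' * m) with rfl
      rfl
    rw [this]

open NumberField in
/-- Liouville's inequality for algebraic integers of degree at most four. -/
theorem NumberField.eq_zero_of_mem_pow_of_norm_le {K : Type*} [Field K] [NumberField K]
    (hdeg : Module.finrank ℚ K ≤ 4) {p w : ℕ} {I : Ideal (𝓞 K)} (hN : p ^ 2 ≤ Ideal.absNorm I)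
    {x : 𝓞 K} (hx : x ∈ I ^ w) {B : ℝ} (hB1 : 1 ≤ B) (hB : ∀ σ : K →+* ℂ, ‖σ x‖ ≤ B)
    (hBp : B ^ 2 < p ^ w) : x = 0 := by
  by_contra hx0
  have h1 : Ideal.absNorm I ^ w ∣ Ideal.absNorm (Ideal.span {x}) := by
    rw [← map_pow]
    exact Ideal.absNorm_dvd_absNorm_of_le ((Ideal.span_singleton_le_iff_mem _).2 hx)
  have h2 : Ideal.absNorm (Ideal.span {x}) ≠ 0 := by
    rwa [Ne, Ideal.absNorm_eq_zero_iff, Ideal.span_singleton_eq_bot]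
  have h3 : (p ^ 2) ^ w ≤ Ideal.absNorm (Ideal.span {x}) :=
    (Nat.pow_le_pow_left hN w).trans (Nat.le_of_dvd (Nat.pos_of_ne_zero h2) h1)
  have h4 : (Ideal.absNorm (Ideal.span {x}) : ℝ) = ‖∏ σ : K →ₐ[ℚ] ℂ, σ (x : K)‖ := by
    rw [← Algebra.norm_eq_prod_embeddings ℚ ℂ (x : K), ← Algebra.coe_norm_int,
      Ideal.absNorm_span_singleton]
    simp [Nat.cast_natAbs]
  have h5 : ‖∏ σ : K →ₐ[ℚ] ℂ, σ (x : K)‖ ≤ B ^ 4 := by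
    rw [norm_prod]
    calc _ ≤ ∏ σ : K →ₐ[ℚ] ℂ, B :=
          Finset.prod_le_prod (fun _ _ => norm_nonneg _) fun σ _ => hB σ.toRingHom
      _ = B ^ Module.finrank ℚ K := by
          rw [Finset.prod_const, Finset.card_univ, AlgHom.card]
      _ ≤ B ^ 4 := pow_le_pow_right₀ hB1 hdeg
  have h6 : ((p : ℝ) ^ 2) ^ w ≤ B ^ 4 := by
    rw [← h4] at h5
    exact le_trans (by exact_mod_cast h3) h5
  have h7 : (B ^ 2) ^ 2 < ((p : ℝ) ^ w) ^ 2 := by gcongr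
  rw [← pow_mul, mul_comm 2 w, pow_mul] at h6
  linarith [show (B ^ 2) ^ 2 = B ^ 4 by ring]

open Real in
theorem eq_goldenRatio_or_goldenConj {x : ℂ} (h : x ^ 2 = x + 1) :
    x = (goldenRatio : ℝ) ∨ x = (goldenConj : ℝ) := by
  have h1 : (goldenRatio : ℂ) + goldenConj = 1 := by exact_mod_cast goldenRatio_add_goldenConj
  have h2 : (goldenRatio : ℂ) * goldenConj = -1 := by exact_mod_cast goldenRatio_mul_goldenConj
  have h3 : (x - (goldenRatio : ℝ)) * (x - (goldenConj : ℝ)) = 0 := by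
    linear_combination h - x * h1 + h2
  rcases mul_eq_zero.1 h3 with h | h
  · exact Or.inl (sub_eq_zero.1 h)
  · exact Or.inr (sub_eq_zero.1 h)

open Real in
theorem abs_goldenConj : |goldenConj| = goldenRatio⁻¹ := by
  rw [abs_of_neg goldenConj_neg, inv_goldenRatio]

open Real in
theorem norm_eq_goldenRatio_or_inv {x : ℂ} (h : x ^ 2 = x + 1) :
    ‖x‖ = goldenRatio ∨ ‖x‖ = goldenRatio⁻¹ := by
  rcases eq_goldenRatio_or_goldenConj h with rfl | rfl
  · exact Or.inl (by rw [Complex.norm_real, norm_eq_abs, abs_of_pos goldenRatio_pos])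
  · exact Or.inr (by rw [Complex.norm_real, norm_eq_abs, abs_goldenConj])

open Real in
/-- If `x` is a root of `x ^ 2 = x + 1`, then `x ^ a (x - 1) ^ b` has absolute value
`φ ^ (±(a - b))`. -/
theorem norm_pow_mul_sub_one_pow_le {x : ℂ} (h : x ^ 2 = x + 1) {a b N : ℕ} (ha : a ≤ b + N)
    (hb : b ≤ a + N) : ‖x ^ a * (x - 1) ^ b‖ ≤ goldenRatio ^ N := by
  have h1 : ‖x‖ * ‖x - 1‖ = 1 := by
    rw [← norm_mul, show x * (x - 1) = 1 by linear_combination h, norm_one]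
  have h2 : (1 : ℝ) ≤ goldenRatio := one_lt_goldenRatio.le
  have h3 : ‖x‖ ≤ goldenRatio ∧ ‖x - 1‖ ≤ goldenRatio := by
    have h4 := inv_le_one_of_one_le₀ h2
    rcases norm_eq_goldenRatio_or_inv h with h0 | h0 <;> rw [h0] at h1 ⊢
    · rw [eq_inv_of_mul_eq_one_right h1]
      exact ⟨le_rfl, h4.trans h2⟩
    · rw [eq_inv_of_mul_eq_one_right h1, inv_inv]
      exact ⟨h4.trans h2, le_rfl⟩
  rw [norm_mul, norm_pow, norm_pow]
  rcases le_total a b with hab | hab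
  · obtain ⟨d, rfl⟩ := Nat.exists_eq_add_of_le hab
    rw [pow_add, ← mul_assoc, ← mul_pow, h1, one_pow, one_mul]
    exact (pow_le_pow_left₀ (norm_nonneg _) h3.2 _).trans (pow_le_pow_right₀ h2 (by omega))
  · obtain ⟨d, rfl⟩ := Nat.exists_eq_add_of_le hab
    rw [pow_add, mul_right_comm, ← mul_pow, h1, one_pow, one_mul]
    exact (pow_le_pow_left₀ (norm_nonneg _) h3.1 _).trans (pow_le_pow_right₀ h2 (by omega))

open Real in
theorem int_eq_zero_of_add_mul_eq_zero {O : Type*} [CommRing O] [CharZero O] {α : O}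
    (hα : α ^ 2 = α + 1) {a b : ℤ} (h : (a : O) + b * α = 0) : a = 0 ∧ b = 0 := by
  have h1 : ((a ^ 2 + a * b - b ^ 2 : ℤ) : O) = 0 := by
    push_cast
    linear_combination (a + b - b * α : O) * h + (b ^ 2 : O) * hα
  have h2 : (a : ℝ) ^ 2 + a * b - b ^ 2 = 0 := by exact_mod_cast Int.cast_eq_zero.1 h1
  have h3 : ((a : ℝ) + b * goldenRatio) * (a + b * goldenConj) = 0 := by
    linear_combination h2 + (a * b : ℝ) * goldenRatio_add_goldenConj +
      (b ^ 2 : ℝ) * goldenRatio_mul_goldenConj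
  have h4 : ∀ x : ℝ, Irrational x → (a : ℝ) + b * x = 0 → a = 0 ∧ b = 0 := by
    intro x hx h
    by_cases hb : b = 0
    · subst hb
      exact ⟨by simpa using h, rfl⟩
    · have := (hx.intCast_mul hb).intCast_add a
      rw [h] at this
      exact absurd this (by simp)
  rcases mul_eq_zero.1 h3 with h | h
  · exact h4 _ goldenRatio_irrational h
  · exact h4 _ goldenConj_irrational h

set_option maxHeartbeats 1000000 in
open NumberField Real in
/-- The `p`-adic core: in a number field of degree at most four, `A (α ^ q) ^ m` and `η` cannot be
too close `𝔓`-adically when `α ^ q ≡ 1` modulo `p`, where `α ^ 2 = α + 1`. -/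
theorem NumberField.not_mem_pow {K : Type*} [Field K] [NumberField K]
    (hdeg : Module.finrank ℚ K ≤ 4) {p : ℕ} (hp : 0 < p) {I : Ideal (𝓞 K)} (hpI : (p : 𝓞 K) ∈ I)
    (hN : p ^ 2 ≤ Ideal.absNorm I) {α e A η : 𝓞 K} (hα : α ^ 2 = α + 1) {q : ℕ} (hq : 0 < q)
    (he : e ∈ Algebra.adjoin ℤ {α}) (hαe : α ^ q = 1 + p * e) (hA : A ≠ 0) (hη : η ≠ 0)
    {H : ℝ} (hH : 1 ≤ H) (hAH : ∀ σ : 𝓞 K →+* ℂ, ‖σ A‖ ≤ H) (hηH : ∀ σ : 𝓞 K →+* ℂ, ‖σ η‖ ≤ H)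
    {m w J L M R S X C : ℕ} (hJ : 0 < J) (hM : 0 < M) (hL : L = 2 * M) (hX0 : 0 < X) (hC0 : 0 < C)
    (hX : p ^ (2 * J * w + w ^ 2) < (X + 1) ^ (2 * (J * L)))
    (hRS : L * J ≤ R * S) (hRm : R ≤ m)
    (hC : ∀ r < R + L, ∀ s < S, ∀ k < J, (r + s * m).choose k ≤ C)
    (hsmall : (8 * J * M * X * C * goldenRatio ^ (q * M * (R + L)) * H ^ (S * L)) ^ 2 <
      p ^ w) :
    A * (α ^ q) ^ m - η ∉ I ^ w := by
  intro hmem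
  have hE : α ^ q ∈ Algebra.adjoin ℤ {α} := pow_mem (Algebra.self_mem_adjoin_singleton ℤ α) _
  obtain ⟨c, hc0, hcX, hc⟩ := exists_exp_poly_dvd hα hp hJ hE he hαe hX
  obtain ⟨B, hB⟩ : ∃ B, B = 8 * J * M * X * C * goldenRatio ^ (q * M * (R + L)) * H ^ (S * L) :=
    ⟨_, rfl⟩
  rw [← hB] at hsmall
  have hφ1 : (1 : ℝ) ≤ goldenRatio := one_lt_goldenRatio.le
  have hB1 : 1 ≤ B := by
    rw [hB]
    have h1 : 1 ≤ 8 * J * M * X * C := Nat.one_le_iff_ne_zero.2 (by positivity)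
    have h2 : (1 : ℝ) ≤ 8 * J * M * X * C := by exact_mod_cast h1
    exact one_le_mul_of_one_le_of_one_le (one_le_mul_of_one_le_of_one_le h2 (one_le_pow₀ hφ1))
      (one_le_pow₀ hH)
  let y (s : ℕ) (l : Fin L) : 𝓞 K := η ^ (s * l) * A ^ (S * L - s * l)
  have hsl {s : ℕ} (hs : s < S) (l : Fin L) : s * l + (S * L - s * l) = S * L :=
    Nat.add_sub_cancel' (Nat.mul_le_mul hs.le l.2.le)
  let Q (r s : ℕ) : 𝓞 K := ∑ i : Fin J × Fin L × Fin 2, c i * α ^ (i.2.2 : ℕ) *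
    (r + s * m).choose i.1 * ((α ^ q) ^ (i.2.1 : ℕ)) ^ r * y s i.2.1
  have hQmem (r : ℕ) {s : ℕ} (hs : s < S) : Q r s ∈ I ^ w := by
    have h1 : Q r s = A ^ (S * L) * (∑ i, c i * α ^ (i.2.2 : ℕ) * ((r + s * m).choose i.1 *
        ((α ^ q) ^ (i.2.1 : ℕ)) ^ (r + s * m))) - ∑ i : Fin J × Fin L × Fin 2,
          c i * α ^ (i.2.2 : ℕ) * (r + s * m).choose i.1 * ((α ^ q) ^ (i.2.1 : ℕ)) ^ r *
            A ^ (S * L - s * i.2.1) *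
              ((A * (α ^ q) ^ m) ^ (s * (i.2.1 : ℕ)) - η ^ (s * (i.2.1 : ℕ))) := by
      rw [Finset.mul_sum, ← Finset.sum_sub_distrib]
      refine Finset.sum_congr rfl fun i _ => ?_
      have h2 : A ^ (S * L) = A ^ (s * (i.2.1 : ℕ)) * A ^ (S * L - s * i.2.1) := by
        rw [← pow_add, hsl hs]
      have h3 : ((α ^ q) ^ (i.2.1 : ℕ)) ^ (r + s * m) =
          ((α ^ q) ^ (i.2.1 : ℕ)) ^ r * ((α ^ q) ^ m) ^ (s * (i.2.1 : ℕ)) := by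
        rw [pow_add, ← pow_mul, ← pow_mul, ← pow_mul, ← pow_mul, ← pow_mul, ← pow_mul]
        congr 2
        ring
      rw [h2, h3, mul_pow A]
      simp only [y]
      ring
    rw [h1]
    refine sub_mem (Ideal.mul_mem_left _ _ ?_) (sum_mem fun i _ => Ideal.mul_mem_left _ _ ?_)
    · exact Ideal.mem_of_dvd _ (hc _) (Ideal.pow_mem_pow hpI w)
    · exact Ideal.mem_of_dvd _ (sub_dvd_pow_sub_pow _ _ _) hmem
  have hσα (σ : 𝓞 K →+* ℂ) : σ α ^ 2 = σ α + 1 := by rw [← map_pow, hα, map_add, map_one]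
  have hbound (σ : 𝓞 K →+* ℂ) {r s : ℕ} (hr : r < R + L) (hs : s < S) :
      ‖σ ((α - 1) ^ (q * M * r) * Q r s)‖ ≤ B := by
    rw [map_mul, map_sum, Finset.mul_sum]
    refine (norm_sum_le_of_le _ (f := _) (n := fun _ => X * 2 * C *
      goldenRatio ^ (q * M * (R + L)) * H ^ (S * L)) fun i _ => ?_).trans_eq ?_
    · have h1 : ‖(c i : ℂ)‖ ≤ X := by
        rw [Complex.norm_intCast]
        exact_mod_cast hcX i
      have h2 : ‖σ α ^ (i.2.2 : ℕ)‖ ≤ 2 := by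
        have := norm_pow_mul_sub_one_pow_le (hσα σ) (a := i.2.2) (b := 0) (N := 1)
          (by have := i.2.2.2; omega) (by omega)
        rw [pow_zero, mul_one, pow_one] at this
        linarith [goldenRatio_lt_two]
      have h3 : ‖(((r + s * m).choose i.1 : ℕ) : ℂ)‖ ≤ C := by
        rw [Complex.norm_natCast]
        exact_mod_cast hC r hr s hs _ i.1.2
      have h4 : ‖σ α ^ (q * i.2.1 * r) * (σ α - 1) ^ (q * M * r)‖ ≤
          goldenRatio ^ (q * M * (R + L)) := by
        have hlM : (i.2.1 : ℕ) ≤ 2 * M := i.2.1.2.le.trans_eq hL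
        refine (norm_pow_mul_sub_one_pow_le (hσα σ) (N := q * M * r) ?_ (by omega)).trans
          (pow_le_pow_right₀ hφ1 (by gcongr))
        calc q * i.2.1 * r ≤ q * (2 * M) * r := by gcongr
          _ = _ := by ring
      have h5 : ‖σ (y s i.2.1)‖ ≤ H ^ (S * L) := by
        simp only [y, map_mul, map_pow, norm_mul, norm_pow]
        calc _ ≤ H ^ (s * (i.2.1 : ℕ)) * H ^ (S * L - s * i.2.1) := by
              gcongr
              · exact hηH σ
              · exact hAH σ
          _ = _ := by rw [← pow_add, hsl hs]
      have h6 : σ ((α - 1) ^ (q * M * r)) * σ (c i * α ^ (i.2.2 : ℕ) *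
          (r + s * m).choose i.1 * ((α ^ q) ^ (i.2.1 : ℕ)) ^ r * y s i.2.1) =
          c i * σ α ^ (i.2.2 : ℕ) * (((r + s * m).choose i.1 : ℕ) : ℂ) *
            (σ α ^ (q * i.2.1 * r) * (σ α - 1) ^ (q * M * r)) * σ (y s i.2.1) := by
        simp only [map_mul, map_pow, map_sub, map_one, map_intCast, map_natCast]
        rw [← pow_mul, ← pow_mul]
        ring
      rw [h6, norm_mul, norm_mul, norm_mul, norm_mul]
      gcongr
    · simp only [Finset.sum_const, Finset.card_univ, Fintype.card_prod, Fintype.card_fin,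
        nsmul_eq_mul, hB, hL]
      push_cast
      ring
  have hQ {r s : ℕ} (hr : r < R + L) (hs : s < S) : Q r s = 0 := by
    have h1 := NumberField.eq_zero_of_mem_pow_of_norm_le hdeg hN
      (Ideal.mul_mem_left _ ((α - 1) ^ (q * M * r)) (hQmem r hs)) hB1
      (fun σ => hbound (σ.comp (algebraMap (𝓞 K) K)) hr hs) hsmall
    refine (mul_eq_zero.1 h1).resolve_left (pow_ne_zero _ fun h2 => ?_)
    have h3 : α * (α - 1) = 1 := by linear_combination hα
    rw [h2, mul_zero] at h3
    exact zero_ne_one h3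
  have hα0 : α ≠ 0 := by
    rintro rfl
    simp at hα
  obtain ⟨σ⟩ : Nonempty (K →+* ℂ) := inferInstance
  let d (k : Fin J) (l : Fin L) : K := algebraMap (𝓞 K) K (c (k, l, 0) + c (k, l, 1) * α)
  obtain ⟨r, hr, s, hs, h⟩ := exists_sum_choose_mul_pow_ne_zero (c := d)
    (z := fun l => algebraMap (𝓞 K) K ((α ^ q) ^ (l : ℕ))) (R := R) (S := S) (m := m)
    (y := fun s l => algebraMap (𝓞 K) K (y s l)) (by
      intro hd
      refine hc0 ?_
      ext ⟨k, l, b⟩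
      have h1 : algebraMap (𝓞 K) K (c (k, l, 0) + c (k, l, 1) * α) = 0 :=
        congrFun (congrFun hd k) l
      obtain ⟨h2, h3⟩ := int_eq_zero_of_add_mul_eq_zero hα
        ((FaithfulSMul.algebraMap_eq_zero_iff _ _).1 h1)
      fin_cases b
      · exact h2
      · exact h3) (by
      intro l l' hll
      have h1 := FaithfulSMul.algebraMap_injective (𝓞 K) K hll
      have h2 := congrArg (fun x => ‖σ.comp (algebraMap (𝓞 K) K) x‖) h1
      simp only [map_pow, norm_pow] at h2
      have h3 := one_lt_goldenRatio
      have h4 : 0 < ‖σ.comp (algebraMap (𝓞 K) K) α‖ ∧ ‖σ.comp (algebraMap (𝓞 K) K) α‖ ≠ 1 := by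
        rcases norm_eq_goldenRatio_or_inv (hσα (σ.comp (algebraMap (𝓞 K) K))) with h | h <;> rw [h]
        · exact ⟨goldenRatio_pos, h3.ne'⟩
        · exact ⟨inv_pos.2 goldenRatio_pos, (inv_lt_one_of_one_lt₀ h3).ne⟩
      refine Fin.ext (pow_right_injective₀ (pow_pos h4.1 q) ?_ h2)
      rw [Ne, pow_eq_one_iff_of_nonneg h4.1.le hq.ne']
      exact h4.2)
    (fun l => by simpa using fun h : α = 0 => absurd h hα0) hJ (by omega) hRS hRm
    (fun s l => (FaithfulSMul.algebraMap_eq_zero_iff _ _).not.2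
      (mul_ne_zero (pow_ne_zero _ hη) (pow_ne_zero _ hA)))
  refine h ?_
  rw [← map_zero (algebraMap (𝓞 K) K), ← hQ hr hs]
  simp only [Q, d, Fintype.sum_prod_type, Fin.sum_univ_two, map_sum]
  rw [Finset.sum_comm]
  refine Finset.sum_congr rfl fun l _ => ?_
  rw [Finset.sum_mul, Finset.sum_mul]
  refine Finset.sum_congr rfl fun k _ => ?_
  simp only [map_add, map_mul, map_pow, map_intCast, map_natCast]
  simp
  ring

open Polynomial in
theorem isIntegral_of_sq_add_mul_add_eq_zero {O : Type*} [CommRing O] {z : O} {a b : ℤ}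
    (hz : z ^ 2 + a * z + b = 0) : IsIntegral ℤ z := by
  refine ⟨X ^ 2 + C a * X + C b, by monicity!, ?_⟩
  rw [← aeval_def]
  simpa using hz

open Polynomial IntermediateField in
theorem finiteDimensional_adjoin_and_finrank_le_two {z : ℂ} {a b : ℤ}
    (hz : z ^ 2 + a * z + b = 0) :
    FiniteDimensional ℚ ℚ⟮z⟯ ∧ Module.finrank ℚ ℚ⟮z⟯ ≤ 2 := by
  have hm : (X ^ 2 + C (a : ℚ) * X + C (b : ℚ) : ℚ[X]).Monic := by monicity!
  have h0 : aeval z (X ^ 2 + C (a : ℚ) * X + C (b : ℚ) : ℚ[X]) = 0 := by simpa using hz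
  have hi : IsIntegral ℚ z := ⟨_, hm, h0⟩
  refine ⟨adjoin.finiteDimensional hi, ?_⟩
  rw [adjoin.finrank hi]
  refine (natDegree_le_of_dvd (minpoly.dvd ℚ z h0) hm.ne_zero).trans ?_
  compute_degree

open IntermediateField NumberField in
theorem exists_numberField_of_quadratics (u v : ℤ) :
    ∃ (K : Type) (_ : Field K) (_ : NumberField K), Module.finrank ℚ K ≤ 4 ∧
      ∃ α η₁ η₂ : 𝓞 K, α ^ 2 = α + 1 ∧ η₁ + η₂ = -u ∧ η₁ * η₂ = v := by
  obtain ⟨z, hz⟩ : ∃ z : ℂ, z ^ 2 + (u : ℤ) * z + (v : ℤ) = 0 := by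
    obtain ⟨d, hd⟩ := IsAlgClosed.exists_pow_nat_eq ((u : ℂ) ^ 2 - 4 * v) (zero_lt_two)
    exact ⟨(d - u) / 2, by linear_combination hd / 4⟩
  obtain ⟨g, hg⟩ : ∃ g : ℂ, g ^ 2 + ((-1 : ℤ) : ℂ) * g + ((-1 : ℤ) : ℂ) = 0 := by
    obtain ⟨d, hd⟩ := IsAlgClosed.exists_pow_nat_eq (5 : ℂ) (zero_lt_two)
    exact ⟨(d + 1) / 2, by push_cast; linear_combination hd / 4⟩
  obtain ⟨h1, h2⟩ := finiteDimensional_adjoin_and_finrank_le_two hz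
  obtain ⟨h3, h4⟩ := finiteDimensional_adjoin_and_finrank_le_two hg
  have hzK : z ∈ ℚ⟮z⟯ ⊔ ℚ⟮g⟯ := le_sup_left (a := ℚ⟮z⟯) (mem_adjoin_simple_self ℚ z)
  have hgK : g ∈ ℚ⟮z⟯ ⊔ ℚ⟮g⟯ := le_sup_right (a := ℚ⟮z⟯) (mem_adjoin_simple_self ℚ g)
  refine ⟨↥(ℚ⟮z⟯ ⊔ ℚ⟮g⟯), inferInstance, ⟨⟩, ?_, ?_⟩
  · exact (IntermediateField.finrank_sup_le _ _).trans (Nat.mul_le_mul h2 h4)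
  · let z' : ↥(ℚ⟮z⟯ ⊔ ℚ⟮g⟯) := ⟨z, hzK⟩
    let g' : ↥(ℚ⟮z⟯ ⊔ ℚ⟮g⟯) := ⟨g, hgK⟩
    have hz' : z' ^ 2 + (u : ℤ) * z' + (v : ℤ) = 0 := Subtype.ext (by simpa using hz)
    have hg' : g' ^ 2 + ((-1 : ℤ) : ↥(ℚ⟮z⟯ ⊔ ℚ⟮g⟯)) * g' + ((-1 : ℤ) : ↥(ℚ⟮z⟯ ⊔ ℚ⟮g⟯)) = 0 :=
      Subtype.ext (by simpa using hg)
    obtain ⟨Z, hZ⟩ : ∃ Z : 𝓞 ↥(ℚ⟮z⟯ ⊔ ℚ⟮g⟯), (Z : ↥(ℚ⟮z⟯ ⊔ ℚ⟮g⟯)) = z' :=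
      ⟨⟨z', isIntegral_of_sq_add_mul_add_eq_zero hz'⟩, rfl⟩
    obtain ⟨G, hG⟩ : ∃ G : 𝓞 ↥(ℚ⟮z⟯ ⊔ ℚ⟮g⟯), (G : ↥(ℚ⟮z⟯ ⊔ ℚ⟮g⟯)) = g' :=
      ⟨⟨g', isIntegral_of_sq_add_mul_add_eq_zero hg'⟩, rfl⟩
    rw [← hZ] at hz'
    rw [← hG] at hg'
    have hz2 : Z ^ 2 + (u : ℤ) * Z + (v : ℤ) = 0 := RingOfIntegers.ext (by simpa using hz')
    have hg2 : G ^ 2 + ((-1 : ℤ) : 𝓞 ↥(ℚ⟮z⟯ ⊔ ℚ⟮g⟯)) * G + ((-1 : ℤ) : 𝓞 ↥(ℚ⟮z⟯ ⊔ ℚ⟮g⟯)) = 0 :=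
      RingOfIntegers.ext (by simpa using hg')
    push_cast at hg2
    exact ⟨G, Z, -u - Z, by linear_combination hg2, by ring, by linear_combination -hz2⟩

theorem dvd_of_dvd_sq_add_mul_sub_sq {p : ℕ} (hp : p = 2 ∨ p = 3) {a b : ℤ}
    (h : (p : ℤ) ∣ a ^ 2 + a * b - b ^ 2) : (p : ℤ) ∣ a ∧ (p : ℤ) ∣ b := by
  rw [← ZMod.intCast_zmod_eq_zero_iff_dvd] at h
  simp_rw [← ZMod.intCast_zmod_eq_zero_iff_dvd]
  push_cast at h
  generalize (a : ZMod p) = x at *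
  generalize (b : ZMod p) = y at *
  rcases hp with rfl | rfl <;> revert x y <;> decide

open NumberField in
theorem NumberField.exists_isPrime_mem_sq_le_absNorm {K : Type*} [Field K] [NumberField K]
    {p : ℕ} (hp : p = 2 ∨ p = 3) {α : 𝓞 K} (hα : α ^ 2 = α + 1) :
    ∃ I : Ideal (𝓞 K), I.IsPrime ∧ I ≠ ⊥ ∧ (p : 𝓞 K) ∈ I ∧ p ^ 2 ≤ Ideal.absNorm I := by
  have hp' : p.Prime := by rcases hp with rfl | rfl <;> norm_num
  have htop : Ideal.span {(p : 𝓞 K)} ≠ ⊤ := by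
    intro h
    have h1 := congrArg Ideal.absNorm h
    rw [Ideal.absNorm_span_natCast, Ideal.absNorm_top] at h1
    exact hp'.ne_one ((Nat.pow_eq_one.1 h1).resolve_right Module.finrank_pos.ne')
  obtain ⟨I, hI, hpI⟩ := Ideal.exists_le_maximal _ htop
  have hpI : (p : 𝓞 K) ∈ I := hpI (Ideal.mem_span_singleton_self _)
  have hbot : I ≠ ⊥ := by
    rintro rfl
    exact hp'.ne_zero (by simpa using hpI)
  have hdvd (a : ℤ) (ha : (a : 𝓞 K) ∈ I) : (p : ℤ) ∣ a := by
    by_contra hna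
    obtain ⟨x, y, hxy⟩ := (((Nat.prime_iff_prime_int.1 hp').coprime_iff_not_dvd).2 hna)
    refine hI.ne_top ((Ideal.eq_top_iff_one I).2 ?_)
    have h2 : (1 : 𝓞 K) = x * p + y * a := by exact_mod_cast congrArg (Int.cast : ℤ → 𝓞 K) hxy.symm
    rw [h2]
    exact I.add_mem (I.mul_mem_left _ hpI) (I.mul_mem_left _ ha)
  refine ⟨I, hI.isPrime, hbot, hpI, ?_⟩
  have hfin : Finite (𝓞 K ⧸ I) := I.finiteQuotientOfFreeOfNeBot hbot
  let f : Fin p × Fin p → 𝓞 K ⧸ I := fun ab =>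
    Ideal.Quotient.mk I (((ab.1 : ℕ) : ℤ) + ((ab.2 : ℕ) : ℤ) * α)
  have hf : Function.Injective f := by
    rintro ⟨a, b⟩ ⟨a', b'⟩ h
    have h1 := Ideal.Quotient.eq.1 h
    obtain ⟨x, hx⟩ : ∃ x : ℤ, x = ((a : ℕ) : ℤ) - ((a' : ℕ) : ℤ) := ⟨_, rfl⟩
    obtain ⟨y, hy⟩ : ∃ y : ℤ, y = ((b : ℕ) : ℤ) - ((b' : ℕ) : ℤ) := ⟨_, rfl⟩
    have h2 : ((x ^ 2 + x * y - y ^ 2 : ℤ) : 𝓞 K) ∈ I := by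
      convert I.mul_mem_left ((x : 𝓞 K) + y - y * α) h1 using 1
      rw [hx, hy]
      push_cast
      linear_combination (((b : ℕ) : 𝓞 K) - ((b' : ℕ) : 𝓞 K)) ^ 2 * hα
    obtain ⟨⟨c, hc⟩, ⟨d, hd⟩⟩ := dvd_of_dvd_sq_add_mul_sub_sq hp (hdvd _ h2)
    have key (a a' : Fin p) (c : ℤ) (h : ((a : ℕ) : ℤ) - ((a' : ℕ) : ℤ) = p * c) : a = a' := by
      have h1 := a.2
      have h2 := a'.2
      have : c < 1 := by nlinarith
      have : -1 < c := by nlinarith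
      obtain rfl : c = 0 := by omega
      exact Fin.ext (by omega)
    exact Prod.ext (key _ _ _ (hx ▸ hc)) (key _ _ _ (hy ▸ hd))
  have h3 := Nat.card_le_card_of_injective f hf
  rw [Nat.card_prod, Nat.card_fin, ← sq] at h3
  rwa [Ideal.absNorm_apply, Submodule.cardQuot_apply]

theorem lucas_cast_eq {O : Type*} [CommRing O] {α : O} (hα : α ^ 2 = α + 1) :
    ∀ n : ℕ, (lucas n : O) = α ^ n + (1 - α) ^ n
  | 0 => by rw [lucas, pow_zero, pow_zero]; norm_num
  | 1 => by rw [lucas]; simp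
  | n + 2 => by
    rw [lucas, Int.cast_add, lucas_cast_eq hα (n + 1), lucas_cast_eq hα n]
    linear_combination (-α ^ n - (1 - α) ^ n) * hα

theorem lucas_norm_cast_eq {O : Type*} [CommRing O] {α : O} (hα : α ^ 2 = α + 1) (m k : ℕ) :
    (((-1) ^ m * ((-1) ^ k + 1 - lucas k) : ℤ) : O) =
      (α ^ k - 1) * ((1 - α) ^ k - 1) * (α * (1 - α)) ^ m := by
  have h1 : α * (1 - α) = -1 := by linear_combination -hα
  push_cast
  rw [lucas_cast_eq hα, h1, ← h1, mul_pow, mul_pow]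
  ring

theorem Ideal.mem_pow_or_mem_pow_of_mul_mem {O : Type*} [CommRing O] [IsDedekindDomain O]
    {I : Ideal O} (hI : I.IsPrime) (hI0 : I ≠ ⊥) {x y : O} {w : ℕ} (h : x * y ∈ I ^ (2 * w)) :
    x ∈ I ^ w ∨ y ∈ I ^ w := by
  by_contra! hc
  have hP := Ideal.prime_of_isPrime hI0 hI
  simp_rw [← Ideal.span_singleton_le_iff_mem, ← Ideal.dvd_iff_le] at h hc
  rw [← Ideal.span_singleton_mul_span_singleton, pow_dvd_iff_le_emultiplicity,
    emultiplicity_mul hP] at h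
  simp_rw [pow_dvd_iff_le_emultiplicity, not_le] at hc
  obtain ⟨a, ha⟩ := ENat.ne_top_iff_exists.1 hc.1.ne_top
  obtain ⟨b, hb⟩ := ENat.ne_top_iff_exists.1 hc.2.ne_top
  rw [← ha, ← hb] at hc h
  norm_cast at hc h
  omega

theorem norm_le_one_add_of_sq_add_mul_add_eq_zero {z u v : ℂ} (h : z ^ 2 + u * z + v = 0) :
    ‖z‖ ≤ 1 + (‖u‖ + ‖v‖) := by
  by_contra! hlt
  have h1 : ‖z‖ ^ 2 ≤ ‖u‖ * ‖z‖ + ‖v‖ := by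
    rw [← norm_pow, show z ^ 2 = -(u * z + v) by linear_combination h, norm_neg, ← norm_mul]
    exact norm_add_le _ _
  nlinarith [norm_nonneg u, norm_nonneg v, norm_nonneg z]

open Real in
theorem abs_lucas_norm_le {k : ℕ} (m : ℕ) :
    |(((-1) ^ m * ((-1) ^ k + 1 - lucas k) : ℤ) : ℝ)| ≤ 2 * goldenRatio ^ k := by
  rw [lucas_norm_cast_eq goldenRatio_sq, ← eq_sub_of_add_eq' goldenRatio_add_goldenConj,
    goldenRatio_mul_goldenConj, abs_mul, abs_mul, abs_pow, abs_neg, abs_one, one_pow, mul_one,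
    mul_comm]
  have h1 := one_le_pow₀ one_lt_goldenRatio.le (n := k)
  have h2 : |goldenConj ^ k| ≤ 1 := by
    rw [abs_pow, abs_goldenConj]
    exact pow_le_one₀ (by positivity) (inv_le_one_of_one_le₀ one_lt_goldenRatio.le)
  refine mul_le_mul ?_ ?_ (abs_nonneg _) zero_le_two
  · exact (abs_sub _ _).trans (by rw [abs_one]; linarith)
  · rw [abs_of_nonneg (by linarith)]
    linarith

open Real in
theorem lucas_norm_ne_zero {k : ℕ} (hk : 0 < k) (m : ℕ) :
    (-1) ^ m * ((-1) ^ k + 1 - lucas k) ≠ 0 := by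
  rw [← Int.cast_ne_zero (α := ℝ), lucas_norm_cast_eq goldenRatio_sq,
    ← eq_sub_of_add_eq' goldenRatio_add_goldenConj, goldenRatio_mul_goldenConj]
  refine mul_ne_zero (mul_ne_zero ?_ ?_) (pow_ne_zero _ (by norm_num))
  · exact sub_ne_zero.2 (one_lt_pow₀ one_lt_goldenRatio hk.ne').ne'
  · refine sub_ne_zero.2 fun h => ?_
    have h1 : |goldenConj ^ k| < 1 := by
      rw [abs_pow, abs_goldenConj]
      exact pow_lt_one₀ (by positivity) (inv_lt_one_of_one_lt₀ one_lt_goldenRatio) hk.ne'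
    rw [h, abs_one] at h1
    exact h1.false

open NumberField Real in
theorem not_pow_dvd_lucas_of_small {p q : ℕ} (hpq : p = 2 ∧ q = 3 ∨ p = 3 ∧ q = 8) {m k u : ℕ}
    (hk : 0 < k) {w J L M R S X C : ℕ} (hJ : 0 < J) (hM : 0 < M) (hL : L = 2 * M) (hX0 : 0 < X)
    (hC0 : 0 < C) (hX : p ^ (2 * J * w + w ^ 2) < (X + 1) ^ (2 * (J * L))) (hRS : L * J ≤ R * S)
    (hRm : R ≤ m / q) (hC : ∀ r < R + L, ∀ s < S, ∀ k < J, (r + s * (m / q)).choose k ≤ C)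
    (hsmall : (8 * J * M * X * C * goldenRatio ^ (q * M * (R + L)) *
      (goldenRatio ^ (k + 9) * (u + 1)) ^ (S * L)) ^ 2 < p ^ w) :
    ¬ (p : ℤ) ^ (2 * w) ∣ lucas (m + k) - lucas m + u := by
  intro hdvd
  have hp : p = 2 ∨ p = 3 := hpq.imp And.left And.left
  have hφ := one_lt_goldenRatio
  set v : ℤ := (-1) ^ m * ((-1) ^ k + 1 - lucas k) with hv
  obtain ⟨K, _, _, hdeg, α, η₁, η₂, hα, hs, hm⟩ := exists_numberField_of_quadratics u v
  obtain ⟨I, hI, hI0, hpI, hN⟩ := NumberField.exists_isPrime_mem_sq_le_absNorm hp hα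
  have hv0 : ((v : ℤ) : 𝓞 K) ≠ 0 := Int.cast_ne_zero.2 (lucas_norm_ne_zero hk m)
  have hvα : (v : 𝓞 K) = _ := lucas_norm_cast_eq hα m k
  have hA : α ^ k - 1 ≠ 0 := fun h => hv0 (by rw [hvα, h]; ring)
  have hα0 : α ≠ 0 := fun h => by simp [h] at hα
  obtain ⟨e, he, hαe⟩ : ∃ e ∈ Algebra.adjoin ℤ {α}, α ^ q = 1 + p * e := by
    have h1 := Algebra.self_mem_adjoin_singleton ℤ α
    rcases hpq with ⟨rfl, rfl⟩ | ⟨rfl, rfl⟩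
    · exact ⟨α, h1, by push_cast; linear_combination (α + 1) * hα⟩
    · refine ⟨((4 : ℕ) : 𝓞 K) + ((7 : ℕ) : 𝓞 K) * α,
        add_mem (natCast_mem _ _) (mul_mem (natCast_mem _ _) h1), ?_⟩
      push_cast
      linear_combination (α ^ 6 + α ^ 5 + 2 * α ^ 4 + 3 * α ^ 3 + 5 * α ^ 2 + 8 * α + 13) * hα
  have hq : 0 < q ∧ q ≤ 8 := by rcases hpq with ⟨-, rfl⟩ | ⟨-, rfl⟩ <;> norm_num
  have hp0 : 0 < p := by rcases hp with rfl | rfl <;> norm_num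
  have hφk : (1 : ℝ) ≤ goldenRatio ^ k := one_le_pow₀ hφ.le
  have hφ9 : (8 : ℝ) ≤ goldenRatio ^ 9 := by
    have h1 : goldenRatio ^ 9 = 34 * goldenRatio + 21 := by
      linear_combination (goldenRatio ^ 7 + goldenRatio ^ 6 + 2 * goldenRatio ^ 5 +
        3 * goldenRatio ^ 4 + 5 * goldenRatio ^ 3 + 8 * goldenRatio ^ 2 + 13 * goldenRatio + 21) *
          goldenRatio_sq
    linarith
  have hH : 1 ≤ goldenRatio ^ (k + 9) * ((u : ℝ) + 1) :=
    one_le_mul_of_one_le_of_one_le (one_le_pow₀ hφ.le) (by simp)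
  have hη {η : 𝓞 K} (h0 : η ^ 2 + u * η + v = 0) (σ : 𝓞 K →+* ℂ) :
      ‖σ η‖ ≤ goldenRatio ^ (k + 9) * ((u : ℝ) + 1) := by
    have h1 : (σ η) ^ 2 + (u : ℂ) * σ η + (v : ℂ) = 0 := by simpa using congrArg σ h0
    refine (norm_le_one_add_of_sq_add_mul_add_eq_zero h1).trans ?_
    have h2 := abs_lucas_norm_le (k := k) m
    rw [← hv] at h2
    rw [Complex.norm_natCast, Complex.norm_intCast, pow_add]
    have h3 : (0 : ℝ) ≤ u := Nat.cast_nonneg u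
    nlinarith [mul_nonneg h3 (sub_nonneg.2 hφk), mul_nonneg h3 (sub_nonneg.2 hφ9),
      mul_le_mul hφk hφ9 (by norm_num) (by positivity),
      mul_nonneg (sub_nonneg.2 hφk) (sub_nonneg.2 hφ9)]
  have hAH (σ : 𝓞 K →+* ℂ) : ‖σ ((α ^ k - 1) * α ^ (m % q))‖ ≤
      goldenRatio ^ (k + 9) * ((u : ℝ) + 1) := by
    have h1 : (σ α) ^ 2 = σ α + 1 := by simpa using congrArg σ hα
    have h2 : ‖σ α‖ ≤ goldenRatio := by
      rcases norm_eq_goldenRatio_or_inv h1 with h | h <;> rw [h]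
      exact (inv_le_one_of_one_le₀ hφ.le).trans hφ.le
    have h3 : m % q ≤ 7 := by
      have := Nat.mod_lt m hq.1
      omega
    rw [map_mul, map_sub, map_pow, map_pow, map_one, norm_mul, norm_pow]
    calc ‖(σ α) ^ k - 1‖ * ‖σ α‖ ^ (m % q) ≤ (goldenRatio ^ k * goldenRatio ^ 2) *
          goldenRatio ^ 7 := by
          refine mul_le_mul ?_ ((pow_le_pow_left₀ (norm_nonneg _) h2 _).trans
            (pow_le_pow_right₀ hφ.le h3)) (by positivity) (by positivity)
          refine (norm_sub_le _ _).trans ?_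
          rw [norm_pow, norm_one, goldenRatio_sq]
          have := pow_le_pow_left₀ (norm_nonneg _) h2 k
          nlinarith
      _ = goldenRatio ^ (k + 9) * 1 := by ring
      _ ≤ _ := by gcongr; simp
  have hdvd' : ((α ^ k - 1) * α ^ m - η₁) * ((α ^ k - 1) * α ^ m - η₂) ∈ I ^ (2 * w) := by
    obtain ⟨d, hd⟩ := hdvd
    have h1 : ((lucas (m + k) - lucas m + u : ℤ) : 𝓞 K) = ((p : ℤ) ^ (2 * w) * d : ℤ) := by rw [hd]
    push_cast at h1
    rw [lucas_cast_eq hα, lucas_cast_eq hα] at h1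
    rw [← hm] at hvα
    have h2 : ((α ^ k - 1) * α ^ m - η₁) * ((α ^ k - 1) * α ^ m - η₂) =
        (α ^ k - 1) * α ^ m * d * p ^ (2 * w) := by
      rw [mul_pow] at hvα
      rw [pow_add, pow_add] at h1
      push_cast at hs
      linear_combination hvα + (-(α ^ k - 1) * α ^ m) * hs + (α ^ k - 1) * α ^ m * h1
    rw [h2]
    exact Ideal.mul_mem_left _ _ (Ideal.pow_mem_pow hpI _)
  have hη0 : η₁ ≠ 0 ∧ η₂ ≠ 0 := by
    rw [← hm] at hv0
    exact ⟨left_ne_zero_of_mul hv0, right_ne_zero_of_mul hv0⟩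
  have hsplit : (α ^ k - 1) * α ^ m = (α ^ k - 1) * α ^ (m % q) * (α ^ q) ^ (m / q) := by
    rw [mul_assoc, ← pow_mul, ← pow_add, Nat.mod_add_div]
  have hA' : (α ^ k - 1) * α ^ (m % q) ≠ 0 := mul_ne_zero hA (pow_ne_zero _ hα0)
  push_cast at hs
  rw [hsplit] at hdvd'
  rcases Ideal.mem_pow_or_mem_pow_of_mul_mem hI hI0 hdvd' with h | h
  · exact NumberField.not_mem_pow hdeg hp0 hpI hN hα hq.1 he hαe hA' hη0.1 hH hAH
      (hη (by linear_combination η₁ * hs - hm)) hJ hM hL hX0 hC0 hX hRS hRm hC hsmall h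
  · exact NumberField.not_mem_pow hdeg hp0 hpI hN hα hq.1 he hαe hA' hη0.2 hH hAH
      (hη (by linear_combination η₂ * hs - hm)) hJ hM hL hX0 hC0 hX hRS hRm hC hsmall h

theorem Nat.choose_le_two_pow_mul {t k J b : ℕ} (hb : 2 ≤ b) (hk : k ≤ J) (ht : 3 * t ≤ 2 ^ b * J) :
    t.choose k ≤ 2 ^ (b * J) := by
  have h1 : (t : ℝ) ≤ 2 ^ b / 3 * J := by
    have : (3 : ℝ) * t ≤ 2 ^ b * J := by exact_mod_cast ht
    linarith
  have h2 : (1 : ℝ) ≤ 2 ^ b / 3 := by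
    have : (2 : ℝ) ^ 2 ≤ 2 ^ b := pow_le_pow_right₀ one_le_two hb
    linarith
  have h3 : (J : ℝ) ^ k / k.factorial ≤ 3 ^ J := by
    refine (Real.pow_div_factorial_le_exp _ (Nat.cast_nonneg J) k).trans ?_
    rw [← Real.exp_one_pow]
    exact pow_le_pow_left₀ (Real.exp_pos 1).le (Real.exp_one_lt_d9.le.trans (by norm_num)) J
  have h4 : (t.choose k : ℝ) ≤ 2 ^ (b * J) :=
    calc (t.choose k : ℝ) ≤ t ^ k / k.factorial := Nat.choose_le_pow_div k t
      _ ≤ (2 ^ b / 3 * J) ^ k / k.factorial := by gcongr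
      _ = (2 ^ b / 3) ^ k * (J ^ k / k.factorial) := by rw [mul_pow, mul_div_assoc]
      _ ≤ (2 ^ b / 3) ^ J * 3 ^ J :=
        mul_le_mul (pow_le_pow_right₀ h2 hk) h3 (by positivity) (by positivity)
      _ = 2 ^ (b * J) := by rw [← mul_pow, div_mul_cancel₀ _ (by norm_num), pow_mul]
  exact_mod_cast h4

/-- Comparison of powers of different bases through a single comparison `x ^ a ≤ y ^ b`. -/
theorem pow_le_pow_of_pow_le_pow {x y : ℝ} (hx : 1 ≤ x) (hy : 1 ≤ y) {a b s t : ℕ} (hb : b ≠ 0)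
    (h : x ^ a ≤ y ^ b) (hst : b * s ≤ a * t) : x ^ s ≤ y ^ t := by
  refine le_of_pow_le_pow_left₀ hb (by positivity) ?_
  calc (x ^ s) ^ b ≤ x ^ (a * t) := by
        rw [← pow_mul, mul_comm]
        exact pow_le_pow_right₀ hx hst
    _ ≤ (y ^ b) ^ t := by
        rw [pow_mul]
        exact pow_le_pow_left₀ (by positivity) h t
    _ = (y ^ t) ^ b := pow_right_comm y b t

open Real in
theorem goldenRatio_lt : goldenRatio < 1.6181 := by
  rw [goldenRatio]
  have : √5 < 2.2362 := by
    rw [Real.sqrt_lt' (by norm_num)]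
    norm_num
  linarith

open Real in
theorem goldenRatio_pow_ten_le : goldenRatio ^ 10 ≤ (2 : ℝ) ^ 7 :=
  (pow_le_pow_left₀ goldenRatio_pos.le goldenRatio_lt.le 10).trans (by norm_num)

open Real in
theorem goldenRatio_pow_twentyFour_le : goldenRatio ^ 24 ≤ (3 : ℝ) ^ 11 :=
  (pow_le_pow_left₀ goldenRatio_pos.le goldenRatio_lt.le 24).trans (by norm_num)

open Real in
theorem not_pow_dvd_lucas {p : ℕ} (hp : p = 2 ∨ p = 3) {m k u j l b h : ℕ} (hk : 0 < k)
    (hl : 14 ≤ l) (hj : 38 * l ≤ j) (hb : 2 ≤ b)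
    (hh : goldenRatio ^ (k + 9) * ((u : ℝ) + 1) ≤ 2 ^ h)
    (hcond : 1200 * (l * l * h) + 100 * (j * b) + 20 * (j * l) + 60 * j ≤ 75 * (j * l))
    (hm : 24 * j ≤ m) (ht : 3 * (9 * j + 200 * l * (m / 3)) ≤ 2 ^ b * (100 * j)) :
    ¬ (p : ℤ) ^ (600 * (j * l)) ∣ lucas (m + k) - lucas m + u := by
  have hp1 : 1 < p := by rcases hp with rfl | rfl <;> norm_num
  obtain ⟨q, hpq⟩ : ∃ q, p = 2 ∧ q = 3 ∨ p = 3 ∧ q = 8 := by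
    rcases hp with rfl | rfl <;> simp
  have hq : 3 ≤ q ∧ q ≤ 8 := by rcases hpq with ⟨-, rfl⟩ | ⟨-, rfl⟩ <;> norm_num
  rw [show 600 * (j * l) = 2 * (300 * (j * l)) by ring]
  have hjj : 38 * (l * l) ≤ j * l := by nlinarith
  have hjl : 14 * j ≤ j * l := by nlinarith
  refine not_pow_dvd_lucas_of_small hpq hk (J := 100 * j) (M := 3 * l) (L := 6 * l) (R := 3 * j)
    (S := 200 * l) (X := p ^ (50 * j + 75 * (j * l))) (C := 2 ^ (b * (100 * j))) (by omega)
    (by omega) (by omega) (by positivity) (by positivity) ?_ (by nlinarith) ?_ ?_ ?_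
  · calc p ^ (2 * (100 * j) * (300 * (j * l)) + (300 * (j * l)) ^ 2) =
        (p ^ (50 * j + 75 * (j * l))) ^ (2 * (100 * j * (6 * l))) := by
          rw [← pow_mul]
          congr 1
          ring
      _ < _ := Nat.pow_lt_pow_left (Nat.lt_succ_self _) (by
          have : 0 < j * l := by nlinarith
          nlinarith)
  · rw [Nat.le_div_iff_mul_le (by omega)]
    nlinarith
  · intro r hr s hs k hk
    refine Nat.choose_le_two_pow_mul hb hk.le (le_trans ?_ ht)
    have h1 : m / q ≤ m / 3 := Nat.div_le_div_left hq.1 (by norm_num)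
    have h2 := Nat.mul_le_mul hs.le h1
    omega
  · obtain ⟨E, hE⟩ : ∃ E, E = 1200 * (l * l * h) + 100 * (j * b) := ⟨_, rfl⟩
    have hE' : E + 60 * j ≤ 55 * (j * l) := by omega
    have h1 : (8 * (100 * j : ℕ) * (3 * l : ℕ) : ℝ) ≤ 2 ^ (6 + 2 * j) := by
      have h2 : 8 * (100 * j) * (3 * l) ≤ 2 ^ (6 + 2 * j) := by
        have h3 : j ≤ 2 ^ j := Nat.lt_two_pow_self.le
        calc 8 * (100 * j) * (3 * l) ≤ 64 * (j * j) := by nlinarith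
          _ ≤ 64 * (2 ^ j * 2 ^ j) := by gcongr
          _ = 2 ^ (6 + 2 * j) := by ring
      exact_mod_cast h2
    have h2 : (goldenRatio ^ (k + 9) * ((u : ℝ) + 1)) ^ (200 * l * (6 * l)) ≤
        2 ^ (1200 * (l * l * h)) := by
      refine (pow_le_pow_left₀ (by positivity) hh _).trans_eq ?_
      rw [← pow_mul]
      congr 1
      ring
    have h3 : (8 * (100 * j : ℕ) * (3 * l : ℕ) * (p ^ (50 * j + 75 * (j * l)) : ℕ) *
        (2 ^ (b * (100 * j)) : ℕ) * goldenRatio ^ (q * (3 * l) * (3 * j + 6 * l)) *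
          (goldenRatio ^ (k + 9) * ((u : ℝ) + 1)) ^ (200 * l * (6 * l)) : ℝ) ≤
        2 ^ (6 + 2 * j + E) * p ^ (50 * j + 75 * (j * l)) *
          goldenRatio ^ (q * (3 * l) * (3 * j + 6 * l)) := by
      calc _ ≤ 2 ^ (6 + 2 * j) * (p ^ (50 * j + 75 * (j * l)) : ℕ) *
          (2 ^ (b * (100 * j)) : ℕ) * goldenRatio ^ (q * (3 * l) * (3 * j + 6 * l)) *
            2 ^ (1200 * (l * l * h)) := by gcongr
        _ = _ := by
          rw [hE, show b * (100 * j) = 100 * (j * b) by ring]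
          push_cast
          rw [pow_add 2 (6 + 2 * j), pow_add 2 (1200 * _)]
          ring
    obtain ⟨F, hF, hF2⟩ : ∃ F, 2 * F < 300 * (j * l) ∧ (2 : ℝ) ^ (6 + 2 * j + E) *
        p ^ (50 * j + 75 * (j * l)) * goldenRatio ^ (q * (3 * l) * (3 * j + 6 * l)) ≤ p ^ F := by
      rcases hpq with ⟨rfl, rfl⟩ | ⟨rfl, rfl⟩
      · refine ⟨6 + 2 * j + E + (50 * j + 75 * (j * l)) + 20 * (j * l), by omega, ?_⟩
        push_cast
        rw [pow_add _ (6 + 2 * j + E + _), pow_add _ (6 + 2 * j + E)]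
        gcongr
        refine pow_le_pow_of_pow_le_pow one_lt_goldenRatio.le one_le_two (by norm_num)
          goldenRatio_pow_ten_le ?_
        nlinarith
      · refine ⟨36 * (j * l) + (50 * j + 75 * (j * l)) + 35 * (j * l), by omega, ?_⟩
        push_cast
        rw [pow_add _ (36 * (j * l) + _), pow_add _ (36 * (j * l))]
        gcongr ?_ * _ * ?_
        · exact pow_le_pow_of_pow_le_pow (a := 25) (b := 16) one_le_two (by norm_num)
            (by norm_num) (by norm_num) (by omega)
        · refine pow_le_pow_of_pow_le_pow one_lt_goldenRatio.le (by norm_num) (by norm_num)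
            goldenRatio_pow_twentyFour_le ?_
          nlinarith
    calc _ ≤ ((p : ℝ) ^ F) ^ 2 := pow_le_pow_left₀ (by positivity) (h3.trans hF2) 2
      _ < _ := by
        rw [← pow_mul]
        exact pow_lt_pow_right₀ (by exact_mod_cast hp1) (by omega)

open Real in
theorem lucas_cast_real (n : ℕ) : (lucas n : ℝ) = goldenRatio ^ n + goldenConj ^ n := by
  rw [lucas_cast_eq goldenRatio_sq, ← eq_sub_of_add_eq' goldenRatio_add_goldenConj]

open Real in
theorem abs_goldenConj_pow_le_one (n : ℕ) : |goldenConj ^ n| ≤ 1 := by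
  rw [abs_pow, abs_goldenConj]
  exact pow_le_one₀ (by positivity) (inv_le_one_of_one_le₀ one_lt_goldenRatio.le)

open Real in
theorem two_pow_seventeen_le : (2 : ℝ) ^ 17 ≤ goldenRatio ^ 25 := by
  have h : (1.618 : ℝ) ≤ goldenRatio := by
    rw [goldenRatio]
    have : (2.236 : ℝ) ≤ √5 := Real.le_sqrt_of_sq_le (by norm_num)
    linarith
  exact le_trans (by norm_num) (pow_le_pow_left₀ (by norm_num) h 25)

open Real in
theorem goldenRatio_pow_twentyFive_le : goldenRatio ^ 25 ≤ (3 : ℝ) ^ 11 :=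
  (pow_le_pow_left₀ goldenRatio_pos.le goldenRatio_lt.le 25).trans (by norm_num)

theorem le_of_pow_le_pow_of_pow_le_pow {x y : ℝ} (hx : 1 < x) (hy : 1 ≤ y) {a b s t : ℕ}
    (h : y ^ b ≤ x ^ a) (hst : x ^ s ≤ y ^ t) : b * s ≤ a * t := by
  rw [← pow_le_pow_iff_right₀ hx]
  calc x ^ (b * s) = (x ^ s) ^ b := by rw [← pow_mul, mul_comm]
    _ ≤ (y ^ t) ^ b := pow_le_pow_left₀ (by positivity) hst b
    _ = (y ^ b) ^ t := pow_right_comm y t b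
    _ ≤ x ^ (a * t) := by
      rw [pow_mul]
      exact pow_le_pow_left₀ (by positivity) h t

section

variable {c : ℤ} {n x y : ℕ}

open Real

theorem two_pow_mul_three_pow_eq (h : c = lucas n - 2 ^ x * 3 ^ y) :
    (2 ^ x * 3 ^ y : ℝ) = goldenRatio ^ n + goldenConj ^ n - c := by
  have h1 : (c : ℝ) = lucas n - 2 ^ x * 3 ^ y := by exact_mod_cast congrArg (Int.cast : ℤ → ℝ) h
  rw [lucas_cast_real] at h1
  linarith

theorem two_pow_mul_three_pow_le (hc : 0 < c) (h : c = lucas n - 2 ^ x * 3 ^ y) :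
    (2 ^ x * 3 ^ y : ℝ) ≤ goldenRatio ^ n := by
  have h1 := (abs_le.1 (abs_goldenConj_pow_le_one n)).2
  have h2 : (1 : ℝ) ≤ c := by exact_mod_cast hc
  rw [two_pow_mul_three_pow_eq h]
  linarith

theorem cast_le_goldenRatio_pow (h : c = lucas n - 2 ^ x * 3 ^ y) :
    (c : ℝ) ≤ goldenRatio ^ n := by
  have h1 := (abs_le.1 (abs_goldenConj_pow_le_one n)).2
  have h2 : (1 : ℝ) ≤ 2 ^ x * 3 ^ y :=
    one_le_mul_of_one_le_of_one_le (one_le_pow₀ one_le_two) (one_le_pow₀ (by norm_num))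
  have h3 := two_pow_mul_three_pow_eq h
  linarith

theorem exponents_le (hc : 0 < c) (h : c = lucas n - 2 ^ x * 3 ^ y) :
    10 * x ≤ 7 * n ∧ 25 * y ≤ 11 * n := by
  have h1 := two_pow_mul_three_pow_le hc h
  have h2 : (1 : ℝ) ≤ 2 ^ x := one_le_pow₀ one_le_two
  have h3 : (1 : ℝ) ≤ 3 ^ y := one_le_pow₀ (by norm_num)
  exact ⟨le_of_pow_le_pow_of_pow_le_pow one_lt_two one_lt_goldenRatio.le goldenRatio_pow_ten_le
      ((le_mul_of_one_le_right (by positivity) h3).trans h1),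
    le_of_pow_le_pow_of_pow_le_pow (by norm_num) one_lt_goldenRatio.le
      goldenRatio_pow_twentyFive_le ((le_mul_of_one_le_left (by positivity) h2).trans h1)⟩

variable {m x' y' : ℕ}

theorem goldenRatio_pow_sub_le (h : c = lucas n - 2 ^ x * 3 ^ y)
    (h' : c = lucas m - 2 ^ x' * 3 ^ y') :
    goldenRatio ^ n - goldenRatio ^ m - 1 ≤ 2 ^ x * 3 ^ y := by
  have h1 := (abs_le.1 (abs_goldenConj_pow_le_one n)).1
  have h2 := cast_le_goldenRatio_pow h'
  rw [two_pow_mul_three_pow_eq h]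
  linarith

theorem sub_eq_of_eq_lucas_sub (h : c = lucas n - 2 ^ x * 3 ^ y)
    (h' : c = lucas m - 2 ^ x' * 3 ^ y') : lucas n - lucas m + 2 ^ x' * 3 ^ y' = 2 ^ x * 3 ^ y := by
  linarith

/-- The linear form in logarithms attached to two representations of `c` is exponentially small. -/
theorem abs_linear_form_le (hc : 0 < c) (h : c = lucas n - 2 ^ x * 3 ^ y)
    (h' : c = lucas m - 2 ^ x' * 3 ^ y') (hmn : m + 5 ≤ n) :
    |n * log goldenRatio - x * log 2 - y * log 3| ≤ 4 / goldenRatio ^ (n - m) := by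
  obtain ⟨d, rfl⟩ := Nat.exists_eq_add_of_le (show m ≤ n by omega)
  have hφ := one_lt_goldenRatio
  have h1 := two_pow_mul_three_pow_le hc h
  have h2 := goldenRatio_pow_sub_le h h'
  have hm : 1 ≤ goldenRatio ^ m := one_le_pow₀ hφ.le
  have hd : 4 ≤ goldenRatio ^ d := by
    have h3 : goldenRatio ^ 5 ≤ goldenRatio ^ d := pow_le_pow_right₀ hφ.le (by omega)
    have h4 : goldenRatio ^ 5 = 5 * goldenRatio + 3 := by
      linear_combination (goldenRatio ^ 3 + goldenRatio ^ 2 + 2 * goldenRatio + 3) * goldenRatio_sq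
    linarith
  set U : ℝ := 2 ^ x * 3 ^ y with hU
  have hU0 : 0 < U := by positivity
  have h3 : ((m + d : ℕ) : ℝ) * log goldenRatio - x * log 2 - y * log 3 =
      log (goldenRatio ^ (m + d) / U) := by
    rw [log_div (by positivity) hU0.ne', hU, log_mul (by positivity) (by positivity), log_pow,
      log_pow, log_pow]
    ring
  rw [h3, abs_of_nonneg (log_nonneg ((one_le_div hU0).2 h1)), Nat.add_sub_cancel_left]
  refine (log_le_sub_one_of_pos (by positivity)).trans ?_
  rw [div_sub_one hU0.ne', div_le_div_iff₀ hU0 (by positivity)]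
  rw [pow_add] at *
  have h5 : goldenRatio ^ m * goldenRatio ^ d - U ≤ 2 * goldenRatio ^ m := by linarith
  have h6 : goldenRatio ^ m * goldenRatio ^ d ≤ 2 * U := by nlinarith
  nlinarith

end

theorem mul_cube_le_two_pow {B : ℕ} (hB : 113 ≤ B) :
    8 * 10 ^ 17 * (25 * (1900800000 * B ^ 3 + 2)) ≤ 17 * 2 ^ (B - 1) := by
  induction B, hB using Nat.le_induction with
  | base => norm_num
  | succ B hB ih =>
    have h1 : 2 ^ (B + 1 - 1) = 2 * 2 ^ (B - 1) := by
      rw [← pow_succ']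
      congr 1
      omega
    have h2 : (B + 1) ^ 3 ≤ 2 * B ^ 3 := by nlinarith [Nat.mul_le_mul hB hB]
    rw [h1]
    omega

open Real in
theorem sub_mul_le_of_eq_lucas_sub {c : ℤ} {n m x y x' y' : ℕ} (hc : 0 < c)
    (h : c = lucas n - 2 ^ x * 3 ^ y) (h' : c = lucas m - 2 ^ x' * 3 ^ y')
    (hn : 32 * 10 ^ 32 ≤ n) : 8 * 10 ^ 17 * (n - m) ≤ n := by
  rcases lt_or_ge n (m + 5) with hmn | hmn
  · omega
  obtain ⟨B, hB⟩ : ∃ B, B = Nat.log 2 n + 1 := ⟨_, rfl⟩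
  have hn0 : n ≠ 0 := by omega
  have h1 : 2 ^ (B - 1) ≤ n := by
    rw [hB, Nat.add_sub_cancel]
    exact Nat.pow_log_le_self 2 hn0
  have h2 : n < 2 ^ B := hB ▸ Nat.lt_pow_succ_log_self one_lt_two n
  have hB' : 112 ≤ B := by
    have := Nat.le_log_of_pow_le one_lt_two (show 2 ^ 111 ≤ n from le_trans (by norm_num) hn)
    omega
  obtain ⟨hx, hy⟩ := exponents_le hc h
  have hx' : (10 * x : ℝ) ≤ 7 * n := by exact_mod_cast hx
  have hy' : (25 * y : ℝ) ≤ 11 * n := by exact_mod_cast hy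
  have h3 := one_lt_abs_linear_form_mul_two_pow hB' h1 h2 (x := x) (y := y) (by linarith)
    (by linarith)
  have h4 := abs_linear_form_le hc h h' hmn
  obtain ⟨N, hN⟩ : ∃ N, N = 1900800000 * B ^ 3 := ⟨_, rfl⟩
  rw [← hN] at h3
  have h5 : goldenRatio ^ (n - m) ≤ 2 ^ (N + 2) := by
    have h6 := h3.trans_le (mul_le_mul_of_nonneg_right h4 (by positivity))
    rw [div_mul_eq_mul_div, one_lt_div (by positivity)] at h6
    rw [pow_add]
    linarith
  have h6 := le_of_pow_le_pow_of_pow_le_pow one_lt_goldenRatio one_le_two two_pow_seventeen_le h5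
  rcases hB'.eq_or_lt with rfl | hB'
  · norm_num at hN
    omega
  · have h7 := mul_cube_le_two_pow hB'
    rw [← hN] at h7
    omega

open Real in
theorem goldenRatio_pow_le_two_pow (k : ℕ) : goldenRatio ^ k ≤ 2 ^ (7 * k / 10 + 1) :=
  pow_le_pow_of_pow_le_pow one_lt_goldenRatio.le one_le_two (by norm_num)
    goldenRatio_pow_ten_le (by omega)

/-- Two Lucas numbers with large close indices have no large common power of `2` or `3` in their
difference. -/
theorem not_pow_dvd_lucas_sub {p : ℕ} (hp : p = 2 ∨ p = 3) {N n m : ℕ} (hmn : m < n) (hn : n ≤ N)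
    (hd : 8 * 10 ^ 17 * (n - m) ≤ N) (hm : N ≤ 2 * m) (hN : 32 * 10 ^ 32 ≤ N) :
    ¬ (p : ℤ) ^ (90000 * (N / 10 ^ 14 + 1)) ∣ lucas n - lucas m := by
  obtain ⟨k, rfl⟩ := Nat.exists_eq_add_of_lt hmn
  obtain ⟨j, hj⟩ : ∃ j, j = N / 10 ^ 14 + 1 := ⟨_, rfl⟩
  have h := not_pow_dvd_lucas hp (m := m) (k := k + 1) (u := 0) (j := j) (l := 150) (b := 55)
    (h := 7 * (k + 1 + 9) / 10 + 1) (by omega) (by norm_num) (by omega) (by norm_num)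
    (by simpa using goldenRatio_pow_le_two_pow (k + 1 + 9)) (by omega) (by omega) (by omega)
  rw [← hj]
  rwa [Nat.cast_zero, add_zero, ← add_assoc, show 600 * (j * 150) = 90000 * j by ring] at h

theorem exponents_lt_or_lt {c : ℤ} {N n m x y x' y' : ℕ} (h : c = lucas n - 2 ^ x * 3 ^ y)
    (h' : c = lucas m - 2 ^ x' * 3 ^ y') (hmn : m < n) (hn : n ≤ N)
    (hd : 8 * 10 ^ 17 * (n - m) ≤ N) (hm : N ≤ 2 * m) (hN : 32 * 10 ^ 32 ≤ N) :
    (x < 90000 * (N / 10 ^ 14 + 1) ∨ x' < 90000 * (N / 10 ^ 14 + 1)) ∧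
      (y < 90000 * (N / 10 ^ 14 + 1) ∨ y' < 90000 * (N / 10 ^ 14 + 1)) := by
  have h1 : lucas n - lucas m = 2 ^ x * 3 ^ y - 2 ^ x' * 3 ^ y' := by linarith
  constructor <;> by_contra! hc
  · refine not_pow_dvd_lucas_sub (Or.inl rfl) hmn hn hd hm hN ?_
    rw [h1]
    exact dvd_sub ((pow_dvd_pow 2 hc.1).mul_right _) ((pow_dvd_pow 2 hc.2).mul_right _)
  · refine not_pow_dvd_lucas_sub (Or.inr rfl) hmn hn hd hm hN ?_
    rw [h1]
    exact dvd_sub ((pow_dvd_pow 3 hc.1).mul_left _) ((pow_dvd_pow 3 hc.2).mul_left _)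

open Real in
/-- A number `2 ^ x' * 3 ^ y'` with small exponents and a highly `2`-divisible `2 ^ x * 3 ^ y`
cannot both represent `c`. -/
theorem exponent_two_lt {c : ℤ} {N n m x y x' y' : ℕ} (h : c = lucas n - 2 ^ x * 3 ^ y)
    (h' : c = lucas m - 2 ^ x' * 3 ^ y') (hmn : m < n) (hn : n ≤ N)
    (hd : 8 * 10 ^ 17 * (n - m) ≤ N) (hm : N ≤ 2 * m) (hN : 32 * 10 ^ 32 ≤ N)
    (hx' : x' < 90000 * (N / 10 ^ 14 + 1)) (hy' : y' < 90000 * (N / 10 ^ 14 + 1)) :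
    x < 39600 * (N / 58300) := by
  obtain ⟨k, rfl⟩ := Nat.exists_eq_add_of_lt hmn
  obtain ⟨G, hG⟩ : ∃ G, G = 90000 * (N / 10 ^ 14 + 1) := ⟨_, rfl⟩
  obtain ⟨j, hj⟩ : ∃ j, j = N / 58300 := ⟨_, rfl⟩
  rw [← hG] at hx' hy'
  rw [← hj]
  by_contra! hx
  have hu : ((2 ^ x' * 3 ^ y' : ℕ) : ℝ) + 1 ≤ 2 ^ (3 * G) := by
    have h1 : 2 ^ x' * 3 ^ y' + 1 ≤ 2 ^ (3 * G) := by
      obtain ⟨g, rfl⟩ : ∃ g, G = g + 1 := ⟨G - 1, by omega⟩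
      calc 2 ^ x' * 3 ^ y' + 1 ≤ 2 ^ g * 4 ^ g + 1 := by
            have h2 : 2 ^ x' ≤ 2 ^ g := Nat.pow_le_pow_right two_pos (by omega)
            have h3 : 3 ^ y' ≤ 4 ^ g := (Nat.pow_le_pow_right three_pos (by omega)).trans
              (Nat.pow_le_pow_left (by norm_num) g)
            gcongr
        _ = 8 ^ g + 1 := by rw [← mul_pow]; norm_num
        _ ≤ 8 ^ g * 8 := by have := Nat.one_le_pow g 8 (by norm_num); omega
        _ = 2 ^ (3 * (g + 1)) := by rw [pow_mul, pow_succ]; norm_num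
    exact_mod_cast h1
  refine not_pow_dvd_lucas (Or.inl rfl) (m := m) (k := k + 1) (u := 2 ^ x' * 3 ^ y') (j := j)
    (l := 66) (b := 23) (h := 7 * (k + 1 + 9) / 10 + 1 + 3 * G) (by omega) (by norm_num) (by omega)
    (by norm_num) ?_ (by omega) (by omega) (by omega) ?_
  · rw [pow_add _ (7 * (k + 1 + 9) / 10 + 1)]
    exact mul_le_mul (goldenRatio_pow_le_two_pow _) hu (by positivity) (by positivity)
  · have h1 := sub_eq_of_eq_lucas_sub h h'
    push_cast
    rw [add_assoc] at h1
    rw [h1, show 600 * (j * 66) = 39600 * j by ring]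
    exact (pow_dvd_pow 2 hx).mul_right _

open Real in
theorem seventeen_mul_sub_le {c : ℤ} {n m x y x' y' : ℕ} (h : c = lucas n - 2 ^ x * 3 ^ y)
    (h' : c = lucas m - 2 ^ x' * 3 ^ y') (hmn : m < n) : 17 * (n - 5) ≤ 25 * (x + 2 * y) := by
  rcases lt_or_ge n 5 with hn | hn
  · omega
  obtain ⟨a, rfl⟩ := Nat.exists_eq_add_of_le' hn
  have hφ := one_lt_goldenRatio
  refine le_of_pow_le_pow_of_pow_le_pow hφ one_le_two two_pow_seventeen_le ?_
  have h1 := goldenRatio_pow_sub_le h h'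
  have h2 : goldenRatio ^ m ≤ goldenRatio ^ (a + 4) := pow_le_pow_right₀ hφ.le (by omega)
  have h3 : (1 : ℝ) ≤ goldenRatio ^ a := one_le_pow₀ hφ.le
  have h4 : (2 : ℝ) ^ x * 3 ^ y ≤ 2 ^ (x + 2 * y) := by
    rw [pow_add, pow_mul]
    gcongr
    norm_num
  have h5 : goldenRatio ^ (a + 5) - goldenRatio ^ (a + 4) =
      goldenRatio ^ a * (2 * goldenRatio + 1) := by
    linear_combination goldenRatio ^ a * (goldenRatio ^ 3 + goldenRatio + 1) * goldenRatio_sq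
  rw [Nat.add_sub_cancel]
  nlinarith

theorem pos_c_absolute_bound (c : ℤ) (hc : 0 < c)
    (n n₁ n₂ x x₁ x₂ y y₁ y₂ : ℕ)
    (h1 : c = lucas n - 2 ^ x * 3 ^ y) (h2 : c = lucas n₁ - 2 ^ x₁ * 3 ^ y₁)
    (h3 : c = lucas n₂ - 2 ^ x₂ * 3 ^ y₂)
    (hnn : n₁ < n) (hnn' : n₂ < n₁) (hn : 60000 < n) :
    (n : ℝ) < 3.2 * 10 ^ 33 ∧ (x : ℝ) < 2.4 * 10 ^ 33 ∧
      (y : ℝ) < 1.5 * 10 ^ 33 := by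
  have hlt : n < 32 * 10 ^ 32 := by
    by_contra! hN
    have hd := sub_mul_le_of_eq_lucas_sub hc h1 h3 hN
    have h01 := exponents_lt_or_lt h1 h2 hnn le_rfl (by omega) (by omega) hN
    have h02 := exponents_lt_or_lt h1 h3 (hnn'.trans hnn) le_rfl hd (by omega) hN
    have h12 := exponents_lt_or_lt h2 h3 hnn' hnn.le (by omega) (by omega) hN
    have h0 := exponent_two_lt h1 h3 (hnn'.trans hnn) le_rfl hd (by omega) hN
    have h1' := exponent_two_lt h2 h3 hnn' hnn.le (by omega) (by omega) hN
    have hs0 := seventeen_mul_sub_le h1 h2 hnn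
    have hs1 := seventeen_mul_sub_le h2 h3 hnn'
    rcases le_or_gt (90000 * (n / 10 ^ 14 + 1)) x with hx | hx
    · have := h0 (by omega) (by omega)
      omega
    · have := h1' (by omega) (by omega)
      omega
  obtain ⟨hx, hy⟩ := exponents_le hc h1
  have hlt' : (n : ℝ) < 32 * 10 ^ 32 := by exact_mod_cast hlt
  have hx' : (10 * x : ℝ) ≤ 7 * n := by exact_mod_cast hx
  have hy' : (25 * y : ℝ) ≤ 11 * n := by exact_mod_cast hy
  refine ⟨?_, ?_, ?_⟩ <;> linarith
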